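/- Let N ≥ 1 and p > 1, and set β = 1/(p−1) and q* = N(p−1)/2. Let φ ∈ C²(ℝ^N) be a nontrivial bounded classical solution of the profile equation Δφ − (y/2)·∇φ + |φ|^{p−1}φ − βφ = 0 on ℝ^N. Then φ does not belong to L^{q*}(ℝ^N), i.e. ∫_{ℝ^N} |φ(y)|^{q*} dy = ∞. -/

import Mathlib

open MeasureTheory Filter Set Metric
open scoped ENNReal Topology

noncomputable section

/-- The Laplacian of `f : ℝ^N → ℝ`, as the sum of second partial derivatives. -/
def lap {N : ℕ} (f : EuclideanSpace ℝ (Fin N) → ℝ) (x : EuclideanSpace ℝ (Fin N)) : ℝ :=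
  ∑ i, fderiv ℝ (fun y => fderiv ℝ f y (EuclideanSpace.single i 1)) x (EuclideanSpace.single i 1)

abbrev EN (N : ℕ) := EuclideanSpace ℝ (Fin N)

/-- divergence of a vector field -/
def dv {N : ℕ} (F : EN N → EN N) (x : EN N) : ℝ :=
  ∑ i, (fderiv ℝ F x (EuclideanSpace.single i 1)) i

lemma gradient_apply_coord {N : ℕ} (f : EN N → ℝ) (x : EN N) (i : Fin N) :
    (gradient f x) i = fderiv ℝ f x (EuclideanSpace.single i 1) := by
  rw [← inner_gradient_left, EuclideanSpace.inner_single_right]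
  simp

lemma contDiff_gradient {N : ℕ} {f : EN N → ℝ} (hf : ContDiff ℝ 2 f) :
    ContDiff ℝ 1 (gradient f) := by
  have : ContDiff ℝ 1 (fderiv ℝ f) := hf.fderiv_right (by norm_num)
  exact (InnerProductSpace.toDual ℝ (EN N)).symm.toContinuousLinearEquiv.contDiff.comp this

lemma continuous_gradient {N : ℕ} {f : EN N → ℝ} (hf : ContDiff ℝ 1 f) :
    Continuous (gradient f) := by
  have : Continuous (fderiv ℝ f) := hf.continuous_fderiv (by norm_num)
  exact (InnerProductSpace.toDual ℝ (EN N)).symm.continuous.comp this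

lemma fderiv_coord {N : ℕ} {F : EN N → EN N} {x : EN N} (hF : DifferentiableAt ℝ F x)
    (i : Fin N) (v : EN N) : fderiv ℝ (fun y => F y i) x v = (fderiv ℝ F x v) i := by
  have h := (EuclideanSpace.proj i : EN N →L[ℝ] ℝ).hasFDerivAt.comp x hF.hasFDerivAt
  have h2 : (fun y => F y i) = (EuclideanSpace.proj i : EN N →L[ℝ] ℝ) ∘ F := rfl
  rw [h2, h.fderiv]
  rfl

lemma lap_eq_dv {N : ℕ} {f : EN N → ℝ} (hf : ContDiff ℝ 2 f) (x : EN N) :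
    lap f x = dv (gradient f) x := by
  unfold lap dv
  refine Finset.sum_congr rfl fun i _ => ?_
  rw [← fderiv_coord ((contDiff_gradient hf).differentiable (by norm_num) x)]
  simp_rw [gradient_apply_coord]

lemma dv_add {N : ℕ} {F G : EN N → EN N} {x : EN N} (hF : DifferentiableAt ℝ F x)
    (hG : DifferentiableAt ℝ G x) : dv (fun y => F y + G y) x = dv F x + dv G x := by
  unfold dv
  rw [← Finset.sum_add_distrib]
  refine Finset.sum_congr rfl fun i _ => ?_
  rw [fderiv_fun_add hF hG]; simp

lemma dv_sub {N : ℕ} {F G : EN N → EN N} {x : EN N} (hF : DifferentiableAt ℝ F x)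
    (hG : DifferentiableAt ℝ G x) : dv (fun y => F y - G y) x = dv F x - dv G x := by
  unfold dv
  rw [← Finset.sum_sub_distrib]
  refine Finset.sum_congr rfl fun i _ => ?_
  rw [fderiv_fun_sub hF hG]; simp

lemma sum_single_eq {N : ℕ} (v : EN N) :
    ∑ i, v i • (EuclideanSpace.single i (1:ℝ) : EN N) = v := by
  have := (EuclideanSpace.basisFun (Fin N) ℝ).sum_repr v
  simpa using this

lemma dv_smul {N : ℕ} {g : EN N → ℝ} {F : EN N → EN N} {x : EN N} (hg : DifferentiableAt ℝ g x)
    (hF : DifferentiableAt ℝ F x) :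
    dv (fun y => g y • F y) x = g x * dv F x + fderiv ℝ g x (F x) := by
  unfold dv
  have h1 : fderiv ℝ g x (F x) = ∑ i, (F x) i * fderiv ℝ g x (EuclideanSpace.single i 1) := by
    conv_lhs => rw [← sum_single_eq (F x)]
    rw [map_sum]
    simp
  rw [h1, Finset.mul_sum, ← Finset.sum_add_distrib]
  refine Finset.sum_congr rfl fun i _ => ?_
  rw [fderiv_fun_smul hg hF]
  simp [mul_comm]

lemma dv_affine {N : ℕ} (b : EN N) (c : ℝ) (x : EN N) :
    dv (fun y => b + c • y) x = c * N := by
  unfold dv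
  have : fderiv ℝ (fun y : EN N => b + c • y) x = c • ContinuousLinearMap.id ℝ (EN N) := by
    rw [fderiv_const_add, fderiv_fun_const_smul differentiableAt_fun_id]
    simp
  rw [this]
  simp [mul_comm]

lemma grad_symm {N : ℕ} {f : EN N → ℝ} (hf : ContDiff ℝ 2 f) (x u v : EN N) :
    inner ℝ (fderiv ℝ (gradient f) x u) v = inner ℝ (fderiv ℝ (gradient f) x v) u := by
  have key : ∀ a b : EN N, inner ℝ (fderiv ℝ (gradient f) x a) b = fderiv ℝ (fderiv ℝ f) x a b := by
    intro a b
    have hd : DifferentiableAt ℝ (fderiv ℝ f) x :=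
      (hf.fderiv_right (m := 1) (by norm_num)).differentiable (by norm_num) x
    have h := (InnerProductSpace.toDual ℝ (EN N)).symm.toContinuousLinearEquiv.hasFDerivAt.comp x hd.hasFDerivAt
    have h2 : gradient f = (InnerProductSpace.toDual ℝ (EN N)).symm.toContinuousLinearEquiv ∘ fderiv ℝ f := rfl
    rw [h2, h.fderiv]
    simp
  rw [key, key]
  exact (hf.contDiffAt.isSymmSndFDerivAt (by simp)) u v

/-- Rellich field -/
def rel {N : ℕ} (f : EN N → ℝ) (b : EN N) (c : ℝ) (y : EN N) : EN N :=
  (inner ℝ (gradient f y) (b + c • y)) • gradient f y - ((1/2) * ‖gradient f y‖^2) • (b + c • y)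

lemma contDiff_rel {N : ℕ} {f : EN N → ℝ} (hf : ContDiff ℝ 2 f) (b : EN N) (c : ℝ) :
    ContDiff ℝ 1 (rel f b c) := by
  have h := contDiff_gradient hf
  unfold rel
  have h2 : ContDiff ℝ 1 (fun y : EN N => b + c • y) := by fun_prop
  exact ((h.inner ℝ h2).smul h).sub ((contDiff_const.mul (h.norm_sq ℝ)).smul h2)

lemma dv_rel {N : ℕ} {f : EN N → ℝ} (hf : ContDiff ℝ 2 f) (b : EN N) (c : ℝ) (x : EN N) :
    dv (rel f b c) x = fderiv ℝ f x (b + c • x) * lap f x + c * ‖gradient f x‖^2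
      - (1/2) * ‖gradient f x‖^2 * (c * N) := by
  have hg : DifferentiableAt ℝ (gradient f) x := (contDiff_gradient hf).differentiable (by norm_num) x
  have hX : HasFDerivAt (fun y : EN N => b + c • y) (c • ContinuousLinearMap.id ℝ (EN N)) x := by
    exact ((hasFDerivAt_id x).const_smul c).const_add b
  have h1 := hg.hasFDerivAt.inner ℝ hX
  have h2 := (hg.hasFDerivAt.norm_sq).const_mul (1/2)
  unfold rel
  rw [dv_sub (h1.differentiableAt.fun_smul hg) (h2.differentiableAt.fun_smul hX.differentiableAt),
    dv_smul h1.differentiableAt hg, dv_smul h2.differentiableAt hX.differentiableAt, dv_affine,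
    ← lap_eq_dv hf, h1.fderiv, h2.fderiv, inner_gradient_left]
  simp only [ContinuousLinearMap.comp_apply, ContinuousLinearMap.prod_apply,
    fderivInnerCLM_apply, ContinuousLinearMap.smul_apply, ContinuousLinearMap.id_apply,
    innerSL_apply_apply, smul_eq_mul]
  rw [inner_smul_right, real_inner_self_eq_norm_sq, grad_symm hf x (gradient f x) (b + c • x),
    real_inner_comm (gradient f x) ((fderiv ℝ (gradient f) x) (b + c • x))]
  simp only [nsmul_eq_mul, Nat.cast_ofNat]
  ring

lemma integral_dv_compact {N : ℕ} {F : EN N → EN N} (hF : ContDiff ℝ 1 F)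
    (hc : HasCompactSupport F) : ∫ x, dv F x = 0 := by
  have hi : ∀ i : Fin N, Integrable (fun x => (fderiv ℝ F x (EuclideanSpace.single i 1)) i) := by
    intro i
    apply Continuous.integrable_of_hasCompactSupport
    · have := hF.continuous_fderiv (by norm_num)
      fun_prop
    · have := hc.fderiv (𝕜 := ℝ)
      exact this.comp_left (g := fun L : EN N →L[ℝ] EN N => (L (EuclideanSpace.single i 1)) i) (by simp)
  unfold dv
  rw [integral_finsetSum _ (fun i _ => hi i)]
  refine Finset.sum_eq_zero fun i _ => ?_
  have hd : Differentiable ℝ F := hF.differentiable (by norm_num)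
  have h := integral_mul_fderiv_eq_neg_fderiv_mul_of_integrable (μ := (volume : Measure (EN N)))
    (f := fun _ => (1:ℝ)) (g := fun x => F x i) (v := EuclideanSpace.single i 1)
    (by simp) (by simpa [fderiv_coord (hd _)] using hi i)
    (by
      simp only [one_mul]
      apply Continuous.integrable_of_hasCompactSupport
      · have := hF.continuous
        fun_prop
      · exact hc.comp_left (g := fun v : EN N => v i) (by simp))
    (fun x _ => by fun_prop) (fun x _ => by
      have := hd x
      fun_prop)
  simpa [fderiv_coord (hd _)] using h

def bmp (N : ℕ) : ContDiffBump (0 : EN N) := ⟨1, 2, one_pos, one_lt_two⟩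

/-- smooth cutoff: one on the ball of radius `R`, zero outside the ball of radius `2 * R` -/
def cut {N : ℕ} (R : ℝ) (y : EN N) : ℝ := (bmp N) (R⁻¹ • y)

lemma cut_contDiff {N : ℕ} (R : ℝ) {n : ℕ} : ContDiff ℝ n (cut R : EN N → ℝ) := by
  unfold cut
  exact (bmp N).contDiff.comp (by fun_prop)

lemma cut_nonneg {N : ℕ} (R : ℝ) (y : EN N) : 0 ≤ cut R y := (bmp N).nonneg
lemma cut_le_one {N : ℕ} (R : ℝ) (y : EN N) : cut R y ≤ 1 := (bmp N).le_one

lemma cut_eq_one {N : ℕ} {R : ℝ} (hR : 0 < R) {y : EN N} (hy : ‖y‖ ≤ R) : cut R y = 1 := by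
  apply (bmp N).one_of_mem_closedBall
  simp only [mem_closedBall, dist_zero_right, norm_smul, norm_inv, Real.norm_eq_abs, abs_of_pos hR]
  show R⁻¹ * ‖y‖ ≤ 1
  rw [inv_mul_le_iff₀ hR]; linarith

lemma cut_eq_zero {N : ℕ} {R : ℝ} (hR : 0 < R) {y : EN N} (hy : 2 * R ≤ ‖y‖) : cut R y = 0 := by
  apply (bmp N).zero_of_le_dist
  simp only [dist_zero_right, norm_smul, norm_inv, Real.norm_eq_abs, abs_of_pos hR]
  show 2 ≤ R⁻¹ * ‖y‖
  rw [le_inv_mul_iff₀ hR]; linarith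

lemma cut_hasCompactSupport {N : ℕ} {R : ℝ} (hR : 0 < R) : HasCompactSupport (cut R : EN N → ℝ) := by
  apply HasCompactSupport.intro (isCompact_closedBall (0 : EN N) (2 * R))
  intro x hx
  apply cut_eq_zero hR
  simp at hx
  exact hx.le

lemma lap_congr {N : ℕ} {f g : EN N → ℝ} {x : EN N} (h : f =ᶠ[𝓝 x] g) : lap f x = lap g x := by
  unfold lap
  refine Finset.sum_congr rfl fun i _ => ?_
  have : (fun y => fderiv ℝ f y (EuclideanSpace.single i 1)) =ᶠ[𝓝 x]
      (fun y => fderiv ℝ g y (EuclideanSpace.single i 1)) := by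
    filter_upwards [h.fderiv (𝕜 := ℝ)] with y hy
    rw [hy]
  rw [this.fderiv_eq]

lemma lap_const {N : ℕ} (c : ℝ) (x : EN N) : lap (fun _ : EN N => c) x = 0 := by
  simp [lap]

lemma cut_locconst {N : ℕ} {R : ℝ} (hR : 0 < R) {y : EN N} (hy : ‖y‖ < R ∨ 2 * R < ‖y‖) :
    ∃ c : ℝ, (cut R : EN N → ℝ) =ᶠ[𝓝 y] fun _ => c := by
  rcases hy with hy | hy
  · refine ⟨1, ?_⟩
    have : ∀ᶠ z in 𝓝 y, ‖z‖ < R := continuous_norm.continuousAt.eventually_lt_const hy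
    filter_upwards [this] with z hz using cut_eq_one hR hz.le
  · refine ⟨0, ?_⟩
    have : ∀ᶠ z in 𝓝 y, 2 * R < ‖z‖ := continuous_norm.continuousAt.eventually_const_lt hy
    filter_upwards [this] with z hz using cut_eq_zero hR hz.le

lemma cut_fderiv_zero {N : ℕ} {R : ℝ} (hR : 0 < R) {y : EN N} (hy : ‖y‖ < R ∨ 2 * R < ‖y‖) :
    fderiv ℝ (cut R : EN N → ℝ) y = 0 := by
  obtain ⟨c, hc⟩ := cut_locconst hR hy
  rw [hc.fderiv_eq]; simp

lemma cut_lap_zero {N : ℕ} {R : ℝ} (hR : 0 < R) {y : EN N} (hy : ‖y‖ < R ∨ 2 * R < ‖y‖) :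
    lap (cut R : EN N → ℝ) y = 0 := by
  obtain ⟨c, hc⟩ := cut_locconst hR hy
  rw [lap_congr hc, lap_const]

lemma continuous_lap {N : ℕ} {f : EN N → ℝ} (hf : ContDiff ℝ 2 f) : Continuous (lap f) := by
  unfold lap
  refine continuous_finset_sum _ fun i _ => ?_
  have h1 : ContDiff ℝ 1 (fun y => fderiv ℝ f y (EuclideanSpace.single i 1)) :=
    (hf.fderiv_right (m := 1) (by norm_num)).clm_apply contDiff_const
  exact (h1.continuous_fderiv (by norm_num)).clm_apply continuous_const

lemma cut_fderiv {N : ℕ} (R : ℝ) (y : EN N) :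
    fderiv ℝ (cut R : EN N → ℝ) y = R⁻¹ • fderiv ℝ (bmp N : EN N → ℝ) (R⁻¹ • y) := by
  unfold cut
  exact fderiv_comp_smul (f := (bmp N : EN N → ℝ)) R⁻¹

lemma cut_lap {N : ℕ} (R : ℝ) (y : EN N) :
    lap (cut R : EN N → ℝ) y = (R⁻¹)^2 * lap (bmp N : EN N → ℝ) (R⁻¹ • y) := by
  unfold lap
  rw [Finset.mul_sum]
  refine Finset.sum_congr rfl fun i _ => ?_
  simp_rw [cut_fderiv]
  set h := fun z => fderiv ℝ (bmp N : EN N → ℝ) z (EuclideanSpace.single i 1) with hh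
  have hd : Differentiable ℝ h := by
    have : ContDiff ℝ 1 h := by
      have h2 : ContDiff ℝ 2 (bmp N : EN N → ℝ) := (bmp N).contDiff
      exact (h2.fderiv_right (m := 1) (by norm_num)).clm_apply contDiff_const
    exact this.differentiable (by norm_num)
  have : (fun y => (R⁻¹ • fderiv ℝ (bmp N : EN N → ℝ) (R⁻¹ • y)) (EuclideanSpace.single i 1))
      = fun y => R⁻¹ * h (R⁻¹ • y) := by
    ext y; simp [hh]
  rw [this, fderiv_const_mul]
  · rw [fderiv_comp_smul (f := h) R⁻¹]
    simp
    ring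
  · exact (hd _).comp _ (by fun_prop)

lemma cut_bounds (N : ℕ) : ∃ C : ℝ, 0 < C ∧ ∀ R : ℝ, 0 < R → ∀ y : EN N,
    ‖fderiv ℝ (cut R : EN N → ℝ) y‖ ≤ C / R ∧ |lap (cut R : EN N → ℝ) y| ≤ C / R^2 := by
  have h2 : ContDiff ℝ 2 (bmp N : EN N → ℝ) := (bmp N).contDiff
  have hc : HasCompactSupport (bmp N : EN N → ℝ) := (bmp N).hasCompactSupport
  obtain ⟨C1, hC1⟩ := (hc.fderiv (𝕜 := ℝ)).exists_bound_of_continuous (h2.continuous_fderiv (by norm_num))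
  have hc2 : HasCompactSupport (lap (bmp N : EN N → ℝ)) := by
    apply HasCompactSupport.intro (isCompact_closedBall (0 : EN N) 2)
    intro x hx
    have h := cut_lap_zero (N := N) (R := 1) one_pos (y := x) (by
      right; simpa using hx)
    rw [cut_lap] at h
    simpa using h
  obtain ⟨C2, hC2⟩ := hc2.exists_bound_of_continuous (continuous_lap h2)
  have h1 : 0 ≤ C1 := (norm_nonneg _).trans (hC1 0)
  have h3 : 0 ≤ C2 := (norm_nonneg _).trans (hC2 0)
  refine ⟨C1 + C2 + 1, by positivity, fun R hR y => ⟨?_, ?_⟩⟩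
  · rw [cut_fderiv, norm_smul, norm_inv, Real.norm_eq_abs, abs_of_pos hR, div_eq_inv_mul]
    gcongr
    linarith [hC1 (R⁻¹ • y)]
  · rw [cut_lap, abs_mul, abs_of_nonneg (by positivity), div_eq_inv_mul, inv_pow]
    gcongr
    have := hC2 (R⁻¹ • y)
    rw [Real.norm_eq_abs] at this
    linarith

lemma continuous_dv {N : ℕ} {F : EN N → EN N} (hF : ContDiff ℝ 1 F) : Continuous (dv F) := by
  have := hF.continuous_fderiv (by norm_num)
  unfold dv
  fun_prop

/-- divergence theorem on the whole space -/
lemma integral_dv {N : ℕ} {F : EN N → EN N} (hF : ContDiff ℝ 1 F)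
    (hi : Integrable F) (hd : Integrable (dv F)) : ∫ x, dv F x = 0 := by
  obtain ⟨C, hC, hCb⟩ := cut_bounds N
  have hz : ∀ n : ℕ, ∫ x, (cut (n + 1 : ℝ) x * dv F x + fderiv ℝ (cut (n+1 : ℝ)) x (F x)) = 0 := by
    intro n
    have hc : ContDiff ℝ 1 (cut (n+1 : ℝ) : EN N → ℝ) := cut_contDiff _ (n := 1)
    have := integral_dv_compact (F := fun x => cut (n+1 : ℝ) x • F x) (hc.smul hF)
      ((cut_hasCompactSupport (by positivity)).smul_right)
    rw [← this]
    congr 1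
    ext x
    rw [dv_smul (hc.differentiable (by norm_num) x) (hF.differentiable (by norm_num) x)]
  have ht : Tendsto (fun n : ℕ => ∫ x, (cut (n + 1 : ℝ) x * dv F x + fderiv ℝ (cut (n+1 : ℝ)) x (F x)))
      atTop (𝓝 (∫ x, dv F x)) := by
    apply tendsto_integral_of_dominated_convergence (fun x => ‖dv F x‖ + C * ‖F x‖)
    · intro n
      have hc : ContDiff ℝ 1 (cut (n+1 : ℝ) : EN N → ℝ) := cut_contDiff _ (n := 1)
      have h1 := hc.continuous_fderiv (by norm_num)
      have h2 := continuous_dv hF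
      have h3 := hF.continuous
      have h4 := hc.continuous
      apply Continuous.aestronglyMeasurable
      exact (h4.mul h2).add (h1.clm_apply h3)
    · exact hd.norm.add (hi.norm.const_mul C)
    · intro n
      refine Eventually.of_forall fun x => ?_
      refine (norm_add_le _ _).trans (add_le_add ?_ ?_)
      · rw [norm_mul]
        have : ‖cut (n+1 : ℝ) x‖ ≤ 1 := by
          rw [Real.norm_eq_abs, abs_of_nonneg (cut_nonneg _ _)]; exact cut_le_one _ _
        nlinarith [norm_nonneg (dv F x)]
      · refine (ContinuousLinearMap.le_opNorm _ _).trans ?_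
        gcongr
        refine (hCb (n+1) (by positivity) x).1.trans ?_
        rw [div_le_iff₀ (by positivity)]
        nlinarith [(Nat.cast_nonneg n : (0:ℝ) ≤ n)]
    · refine Eventually.of_forall fun x => ?_
      apply tendsto_const_nhds.congr'
      filter_upwards [eventually_ge_atTop (Nat.ceil ‖x‖)] with n hn
      have h1 : ‖x‖ ≤ n := (Nat.le_ceil _).trans (by exact_mod_cast hn)
      rw [cut_eq_one (by positivity) (by linarith), cut_fderiv_zero (by positivity) (by left; linarith)]
      simp
  simp_rw [hz] at ht
  exact (tendsto_nhds_unique ht tendsto_const_nhds)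

/-- bounded solutions of the profile equation, with potential `V` -/
structure IsSol {N : ℕ} (φ V : EN N → ℝ) (β M B : ℝ) : Prop where
  c2 : ContDiff ℝ 2 φ
  bdd : ∀ y, |φ y| ≤ B
  Vc : Continuous V
  V0 : ∀ y, 0 ≤ V y
  VM : ∀ y, V y ≤ M
  eq : ∀ y, lap φ y = 1 / 2 * fderiv ℝ φ y y + (β - V y) * φ y
  hβ : 0 < β

lemma IsSol.B0 {N : ℕ} {φ V : EN N → ℝ} {β M B : ℝ} (h : IsSol φ V β M B) : 0 ≤ B :=
  (abs_nonneg _).trans (h.bdd 0)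

lemma IsSol.M0 {N : ℕ} {φ V : EN N → ℝ} {β M B : ℝ} (h : IsSol φ V β M B) : 0 ≤ M :=
  (h.V0 0).trans (h.VM 0)

lemma poly_le_exp (k : ℕ) {σ : ℝ} (hσ : 0 < σ) :
    ∃ C : ℝ, 0 < C ∧ ∀ r : ℝ, 0 ≤ r → (1 + r) ^ k ≤ C * Real.exp (σ * r ^ 2) := by
  refine ⟨Real.exp ((k:ℝ)^2 / (4 * σ)), Real.exp_pos _, fun r hr => ?_⟩
  have h1 : (1 + r) ^ k ≤ Real.exp r ^ k := by
    gcongr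
    linarith [Real.add_one_le_exp r]
  rw [← Real.exp_nat_mul] at h1
  refine h1.trans ?_
  rw [← Real.exp_add]
  apply Real.exp_le_exp.2
  have : 0 ≤ ((k:ℝ) / 2 - σ * r)^2 / σ := by positivity
  have e : ((k:ℝ) / 2 - σ * r)^2 / σ = (k:ℝ)^2/(4*σ) + σ * r^2 - k * r := by field_simp; ring
  linarith

lemma integrable_gauss {N : ℕ} {a : ℝ} (ha : 0 < a) :
    Integrable (fun y : EN N => Real.exp (-a * ‖y‖^2)) := by
  have h := GaussianFourier.integrable_cexp_neg_mul_sq_norm_add (V := EN N) (b := (a:ℂ)) (by simpa using ha) 0 0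
  have h2 := h.norm
  refine h2.congr (Eventually.of_forall fun y => ?_)
  simp only [Complex.norm_exp]
  congr 1
  simp [← Complex.ofReal_pow]

lemma integrable_poly_gauss {N : ℕ} (k : ℕ) {a : ℝ} (ha : 0 < a) :
    Integrable (fun y : EN N => (1 + ‖y‖)^k * Real.exp (-a * ‖y‖^2)) := by
  obtain ⟨C, hC, h⟩ := poly_le_exp k (half_pos ha)
  refine Integrable.mono' ((integrable_gauss (half_pos ha)).const_mul C) ?_ ?_
  · apply Continuous.aestronglyMeasurable; fun_prop
  · refine Eventually.of_forall fun y => ?_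
    rw [Real.norm_eq_abs, abs_of_nonneg (by positivity)]
    calc (1 + ‖y‖)^k * Real.exp (-a * ‖y‖^2) ≤ (C * Real.exp (a/2 * ‖y‖^2)) * Real.exp (-a * ‖y‖^2) := by
          gcongr; exact h _ (norm_nonneg _)
      _ = C * Real.exp (-(a/2) * ‖y‖^2) := by
          rw [mul_assoc, ← Real.exp_add]; ring_nf

lemma hasFDerivAt_gauss {N : ℕ} (a : ℝ) (b y : EN N) :
    HasFDerivAt (fun y : EN N => Real.exp (-a * ‖y - b‖^2))
      ((-2 * a * Real.exp (-a * ‖y - b‖^2)) • (innerSL ℝ (y - b))) y := by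
  have h1 : HasFDerivAt (fun y : EN N => y - b) (ContinuousLinearMap.id ℝ _) y :=
    (hasFDerivAt_id y).sub_const b
  have h2 := (h1.norm_sq.const_mul (-a)).exp
  refine h2.congr_fderiv ?_
  ext v
  simp
  ring

lemma fderiv_gauss {N : ℕ} (a : ℝ) (b y v : EN N) :
    fderiv ℝ (fun y : EN N => Real.exp (-a * ‖y - b‖^2)) y v =
      -2 * a * Real.exp (-a * ‖y - b‖^2) * inner ℝ (y - b) v := by
  rw [(hasFDerivAt_gauss a b y).fderiv]
  simp [inner_sub_left]

lemma contDiff_gauss {N : ℕ} (a : ℝ) (b : EN N) {n : WithTop ℕ∞} :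
    ContDiff ℝ n (fun y : EN N => Real.exp (-a * ‖y - b‖^2)) := by
  apply ContDiff.exp
  exact contDiff_const.mul ((contDiff_id.sub contDiff_const).norm_sq ℝ)

lemma continuous_gradsq {N : ℕ} {φ : EN N → ℝ} (h : ContDiff ℝ 2 φ) :
    Continuous (fun y => ‖gradient φ y‖^2) := 
  (continuous_gradient (h.of_le (by norm_num))).norm.pow 2

lemma caccioppoli_pt {X t g e c d F bb : ℝ} (he : 0 ≤ e)
    (hX : |X| ≤ F * t * g * e * (2 * c + d * t)) (hF : F^2 ≤ bb) :
    -X ≤ 1/2 * (t^2 * e * g^2) + 1/2 * bb * (2 * c + d * t)^2 * e := by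
  have h1 := (abs_le.1 hX).1
  have h2 : 0 ≤ (t * g - F * (2 * c + d*t))^2 * e := by positivity
  have h3 : 0 ≤ (bb - F^2) * ((2 * c + d*t)^2 * e) := mul_nonneg (by linarith) (by positivity)
  nlinarith

set_option maxHeartbeats 1000000 in
lemma IsSol.grad_integrable {N : ℕ} {φ V : EN N → ℝ} {β M B : ℝ} (h : IsSol φ V β M B) {a : ℝ}
    (ha : 0 < a) : Integrable (fun y => ‖gradient φ y‖^2 * Real.exp (-a * ‖y‖^2)) := by
  obtain ⟨C, hC, hCb⟩ := cut_bounds N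
  have hg1 : ContDiff ℝ 1 (gradient φ) := contDiff_gradient h.c2
  have hφ1 : ContDiff ℝ 1 φ := h.c2.of_le (by norm_num)
  have hB := h.B0
  have hM := h.M0
  set D : ℝ := 2 * C + (2 * a + 1/2) with hD
  set K : EN N → ℝ := fun y => (B^2 * D^2 + 2 * M * B^2) * ((1 + ‖y‖)^2 * Real.exp (-a * ‖y‖^2)) with hK
  have hKi : Integrable K := (integrable_poly_gauss 2 ha).const_mul _
  have hfc : Continuous (fun y => ‖gradient φ y‖^2 * Real.exp (-a * ‖y‖^2)) :=
    (continuous_gradsq h.c2).mul (by fun_prop)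
  have main : ∀ n : ℕ, ∫ y, (cut (n+1:ℝ) y)^2 * (‖gradient φ y‖^2 * Real.exp (-a * ‖y‖^2)) ≤ ∫ y, K y := by
    intro n
    set θ : EN N → ℝ := cut (n+1:ℝ) with hθ
    set E : EN N → ℝ := fun y => Real.exp (-a * ‖y - 0‖^2) with hE
    have hθc : ContDiff ℝ 1 θ := cut_contDiff _ (n := 1)
    have hEc : ContDiff ℝ 1 E := contDiff_gauss a 0
    have hwc : ContDiff ℝ 1 (fun y => φ y * (θ y ^2 * E y)) := hφ1.mul ((hθc.pow 2).mul hEc)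
    have hcs : HasCompactSupport (fun y => (φ y * (θ y ^2 * E y)) • gradient φ y) := by
      apply (cut_hasCompactSupport (N := N) (R := n+1) (by positivity)).mono'
      intro y hy
      apply subset_closure
      intro h0
      apply hy
      simp [hθ, h0]
    have hdv : ∀ y, dv (fun y => (φ y * (θ y ^2 * E y)) • gradient φ y) y =
        φ y * (θ y^2 * E y) * lap φ y + θ y^2 * E y * ‖gradient φ y‖^2 
        + φ y * (2 * θ y * E y * fderiv ℝ θ y (gradient φ y) - 2 * a * θ y^2 * E y * fderiv ℝ φ y y) := by
      intro y
      rw [dv_smul (hwc.differentiable (by norm_num) y) (hg1.differentiable (by norm_num) y), ← lap_eq_dv h.c2]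
      have d1 := (hθc.differentiable (by norm_num) y).hasFDerivAt
      have d2 := hasFDerivAt_gauss a 0 y
      have d3 := (hφ1.differentiable (by norm_num) y).hasFDerivAt
      have d4 := d3.mul ((d1.pow 2).mul d2)
      rw [HasFDerivAt.fderiv (f := (fun y => φ y * (θ y ^2 * E y))) d4]
      have e1 : fderiv ℝ φ y (gradient φ y) = ‖gradient φ y‖^2 := by
        rw [← inner_gradient_left, real_inner_self_eq_norm_sq]
      have e2 : inner ℝ y (gradient φ y) = fderiv ℝ φ y y := by
        rw [real_inner_comm, inner_gradient_left]
      simp [e1, e2, hE]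
      ring
    have h0 := integral_dv_compact (hwc.smul hg1) hcs
    have hci : Integrable (fun y => θ y^2 * (‖gradient φ y‖^2 * Real.exp (-a * ‖y‖^2))) := by
      apply Continuous.integrable_of_hasCompactSupport
      · exact (hθc.continuous.pow 2).mul hfc
      · apply (cut_hasCompactSupport (N := N) (R := n+1) (by positivity)).mono'
        intro y hy
        apply subset_closure
        intro h0
        apply hy
        simp [hθ, h0]
    have hdi : Integrable (dv (fun y => (φ y * (θ y ^2 * E y)) • gradient φ y)) := by
      apply Continuous.integrable_of_hasCompactSupport
      · exact continuous_dv (hwc.smul hg1)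
      · apply hcs.mono'
        intro y hy
        by_contra hn
        apply hy
        rw [notMem_tsupport_iff_eventuallyEq] at hn
        unfold dv
        rw [hn.fderiv_eq]
        simp
    have hpt : ∀ y, θ y^2 * (‖gradient φ y‖^2 * Real.exp (-a * ‖y‖^2)) ≤ 
        2 * dv (fun y => (φ y * (θ y ^2 * E y)) • gradient φ y) y + K y := by
      intro y
      have hθ0 : 0 ≤ θ y := cut_nonneg _ _
      have hθ1 : θ y ≤ 1 := cut_le_one _ _
      have hE0 : 0 ≤ E y := (Real.exp_pos _).le
      have hφ2 : φ y^2 ≤ B^2 := sq_le_sq' (by linarith [(abs_le.1 (h.bdd y)).1]) (abs_le.1 (h.bdd y)).2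
      have hn := norm_nonneg y
      have hgn := norm_nonneg (gradient φ y)
      have b1 : |fderiv ℝ θ y (gradient φ y)| ≤ C * ‖gradient φ y‖ := by
        rw [← Real.norm_eq_abs]
        refine ((fderiv ℝ θ y).le_opNorm _).trans ?_
        gcongr
        refine (hCb (n+1) (by positivity) y).1.trans ?_
        rw [div_le_iff₀ (by positivity)]
        nlinarith [(Nat.cast_nonneg n : (0:ℝ) ≤ n)]
      have b2 : |fderiv ℝ φ y y| ≤ ‖y‖ * ‖gradient φ y‖ := by
        rw [← inner_gradient_left, mul_comm]; exact abs_real_inner_le_norm _ _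
      rw [hdv, h.eq]
      set X := 1/2 * φ y * θ y^2 * E y * fderiv ℝ φ y y 
        + φ y * (2 * θ y * E y * fderiv ℝ θ y (gradient φ y) - 2 * a * θ y^2 * E y * fderiv ℝ φ y y) with hX
      have hXb : |X| ≤ |φ y| * θ y * ‖gradient φ y‖ * E y * (2 * C + ((2*a+1/2) * ‖y‖) * θ y) := by
        have : X = φ y * θ y * E y * (2 * fderiv ℝ θ y (gradient φ y) - (2 * a - 1/2) * θ y * fderiv ℝ φ y y) := by
          rw [hX]; ring
        rw [this, abs_mul, abs_mul, abs_mul, abs_of_nonneg hθ0, abs_of_nonneg hE0]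
        have : |2 * fderiv ℝ θ y (gradient φ y) - (2 * a - 1/2) * θ y * fderiv ℝ φ y y| ≤ 
            ‖gradient φ y‖ * (2 * C + ((2*a+1/2) * ‖y‖) * θ y) := by
          refine (abs_sub _ _).trans ?_
          rw [abs_mul, abs_mul, abs_mul, abs_of_nonneg hθ0, abs_two]
          have : |2 * a - 1/2| ≤ 2*a+1/2 := by rw [abs_le]; constructor <;> linarith
          have : |2 * a - 1/2| * θ y * |fderiv ℝ φ y y| ≤ (2*a+1/2) * θ y * (‖y‖ * ‖gradient φ y‖) := by
            gcongr
          nlinarith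
        calc _ ≤ |φ y| * θ y * E y * (‖gradient φ y‖ * (2 * C + ((2*a+1/2) * ‖y‖) * θ y)) := by gcongr
          _ = _ := by ring
      have hc := caccioppoli_pt (bb := B^2) hE0 hXb (by rwa [sq_abs])
      have hEe : Real.exp (-a * ‖y‖^2) = E y := by simp [hE]
      have hd : 2 * C + ((2*a+1/2) * ‖y‖) * θ y ≤ D * (1 + ‖y‖) := by
        rw [hD]
        have : ((2*a+1/2) * ‖y‖) * θ y ≤ ((2*a+1/2) * ‖y‖) * 1 := by gcongr
        nlinarith
      have hd2 : (2 * C + ((2*a+1/2) * ‖y‖) * θ y)^2 ≤ (D * (1 + ‖y‖))^2 := by gcongr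
      have hd3 : B^2 * (2 * C + ((2*a+1/2) * ‖y‖) * θ y)^2 * E y ≤ B^2 * (D * (1 + ‖y‖))^2 * E y := by gcongr
      have hV : -( φ y * (θ y^2 * E y) * ((β - V y) * φ y)) ≤ M * B^2 * (1 + ‖y‖)^2 * E y := by
        have e1 : -( φ y * (θ y^2 * E y) * ((β - V y) * φ y)) = (V y - β) * (φ y ^2 * θ y^2) * E y := by ring
        rw [e1]
        refine mul_le_mul_of_nonneg_right ?_ hE0
        have : φ y^2 * θ y^2 ≤ B^2 * 1 := by
          gcongr
          exact pow_le_one₀ hθ0 hθ1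
        have h3 : (V y - β) * (φ y^2 * θ y^2) ≤ M * (B^2 * 1) := by
          have h5 : 0 ≤ φ y^2 * θ y^2 := by positivity
          calc _ ≤ M * (φ y^2 * θ y^2) := by gcongr; linarith [h.VM y, h.hβ]
            _ ≤ _ := by gcongr
        have h4 : 1 ≤ (1 + ‖y‖)^2 := one_le_pow₀ (by linarith)
        have h5 : 0 ≤ M * B^2 := by positivity
        calc _ ≤ M * B^2 * 1 := by linarith
          _ ≤ _ := mul_le_mul_of_nonneg_left h4 h5
      simp only [hK, hEe]
      rw [hX] at hc
      linarith [hc, hV, hd3]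
    calc ∫ y, θ y^2 * (‖gradient φ y‖^2 * Real.exp (-a * ‖y‖^2))
        ≤ ∫ y, (2 * dv (fun y => (φ y * (θ y ^2 * E y)) • gradient φ y) y + K y) := by
          apply integral_mono hci ((hdi.const_mul 2).add hKi) hpt
      _ = ∫ y, K y := by
          rw [integral_add (hdi.const_mul 2) hKi, integral_const_mul]
          have : ∫ y, dv (fun y => (φ y * (θ y ^2 * E y)) • gradient φ y) y = 0 := h0
          rw [this]; ring
  refine AECover.integrable_of_integral_norm_bounded (l := atTop) (φ := fun n : ℕ => closedBall (0:EN N) n)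
    (aecover_closedBall tendsto_natCast_atTop_atTop) (∫ y, K y) ?_ ?_
  · intro n
    exact hfc.continuousOn.integrableOn_compact (isCompact_closedBall _ _)
  · refine Eventually.of_forall fun n => ?_
    refine le_trans ?_ (main n)
    rw [← integral_indicator measurableSet_closedBall]
    have hci : Integrable (fun y => (cut (n+1:ℝ) y)^2 * (‖gradient φ y‖^2 * Real.exp (-a * ‖y‖^2))) := by
      apply Continuous.integrable_of_hasCompactSupport
      · exact ((cut_contDiff (n+1:ℝ) (n := 1)).continuous.pow 2).mul hfc
      · apply (cut_hasCompactSupport (N := N) (R := n+1) (by positivity)).mono'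
        intro y hy
        apply subset_closure
        intro h0
        apply hy
        simp [h0]
    apply integral_mono_of_nonneg _ hci
    · refine Eventually.of_forall fun y => ?_
      by_cases hy : y ∈ closedBall (0:EN N) n
      · simp only [indicator_of_mem hy]
        rw [cut_eq_one (by positivity) (by have := mem_closedBall_zero_iff.1 hy; linarith)]
        rw [Real.norm_eq_abs, abs_of_nonneg (by positivity)]
        simp
      · simp only [indicator_of_notMem hy]
        positivity
    · refine Eventually.of_forall fun y => ?_
      apply indicator_nonneg
      intro y _
      positivity

lemma IsSol.dom_integrable {N : ℕ} {φ V : EN N → ℝ} {β M B : ℝ} (h : IsSol φ V β M B) (k : ℕ) {a : ℝ}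
    (ha : 0 < a) :
    Integrable (fun y => (1 + ‖y‖)^k * (1 + ‖gradient φ y‖^2) * Real.exp (-a * ‖y‖^2)) := by
  obtain ⟨C, hC, hp⟩ := poly_le_exp k (half_pos ha)
  have h1 := (integrable_gauss (N := N) (half_pos ha)).add (h.grad_integrable (half_pos ha))
  refine Integrable.mono' (h1.const_mul C) ?_ ?_
  · apply Continuous.aestronglyMeasurable
    have := continuous_gradsq h.c2
    fun_prop
  · refine Eventually.of_forall fun y => ?_
    rw [Real.norm_eq_abs, abs_of_nonneg (by positivity)]
    have e : Real.exp (-a * ‖y‖^2) = Real.exp (-(a/2) * ‖y‖^2) * Real.exp (-(a/2) * ‖y‖^2) := by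
      rw [← Real.exp_add]; ring_nf
    have e2 : Real.exp (a/2 * ‖y‖^2) * Real.exp (-(a/2) * ‖y‖^2) = 1 := by
      rw [← Real.exp_add]; ring_nf; simp
    have h3 := hp ‖y‖ (norm_nonneg _)
    calc (1 + ‖y‖)^k * (1 + ‖gradient φ y‖^2) * Real.exp (-a * ‖y‖^2)
        ≤ (C * Real.exp (a/2 * ‖y‖^2)) * (1 + ‖gradient φ y‖^2) * Real.exp (-a * ‖y‖^2) := by gcongr
      _ = C * (Real.exp (a/2 * ‖y‖^2) * Real.exp (-(a/2) * ‖y‖^2)) * 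
          ((1 + ‖gradient φ y‖^2) * Real.exp (-(a/2) * ‖y‖^2)) := by rw [e]; ring
      _ = _ := by rw [e2]; simp only [Pi.add_apply]; ring

lemma IsSol.int_of_bound {N : ℕ} {φ V : EN N → ℝ} {β M B : ℝ} (h : IsSol φ V β M B) {F : Type*}
    [NormedAddCommGroup F] [SecondCountableTopologyEither (EN N) F] {f : EN N → F} (hf : Continuous f) (C : ℝ) (k : ℕ) {a : ℝ} (ha : 0 < a)
    (hb : ∀ y, ‖f y‖ ≤ C * ((1 + ‖y‖)^k * (1 + ‖gradient φ y‖^2) * Real.exp (-a * ‖y‖^2))) :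
    Integrable f :=
  Integrable.mono' ((h.dom_integrable k ha).const_mul C) hf.aestronglyMeasurable
    (Eventually.of_forall hb)

lemma gauss_shift_le {N : ℕ} {a : ℝ} (ha : 1/4 ≤ a) (b y : EN N) :
    Real.exp (-a * ‖y - b‖^2) ≤ Real.exp (‖b‖^2 / 4) * Real.exp (-(1/8) * ‖y‖^2) := by
  rw [← Real.exp_add]
  apply Real.exp_le_exp.2
  have h1 : ‖y‖ ≤ ‖y - b‖ + ‖b‖ := by simpa using norm_add_le (y - b) b
  have h2 : ‖y‖^2 ≤ 2 * ‖y - b‖^2 + 2 * ‖b‖^2 := by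
    have := norm_nonneg y
    nlinarith [sq_nonneg (‖y - b‖ - ‖b‖)]
  nlinarith [sq_nonneg ‖y - b‖]

lemma norm_sub_le_one_add {N : ℕ} (y b : EN N) : ‖y - b‖ ≤ (1 + ‖b‖) * (1 + ‖y‖) := by
  have := norm_sub_le y b
  nlinarith [norm_nonneg y, norm_nonneg b]

lemma pref_deriv (N : ℕ) {c : ℝ} (hc : 0 < c) (hc1 : c < 1) :
    HasDerivAt (fun c : ℝ => ((√(1 - c^2))^N)⁻¹)
      (N * c / (1 - c^2) * ((√(1 - c^2))^N)⁻¹) c := by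
  have hv : 0 < 1 - c^2 := by nlinarith
  have h0 : HasDerivAt (fun c : ℝ => √(1 - c^2)) (-(2 * c) / (2 * √(1 - c^2))) c := by
    have h00 : HasDerivAt (fun c : ℝ => 1 - c^2) (-(2 * c)) c := by
      simpa using ((hasDerivAt_pow 2 c).const_sub 1)
    exact h00.sqrt hv.ne'
  have hs : 0 < √(1 - c^2) := Real.sqrt_pos.2 hv
  have hsq : √(1 - c^2)^2 = 1 - c^2 := Real.sq_sqrt hv.le
  have h1 := (h0.fun_pow N).fun_inv (by positivity)
  refine h1.congr_deriv ?_
  rw [← hsq]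
  rw [Real.sqrt_sq hs.le]
  set s := √(1 - c^2)
  rcases N with _ | n
  · simp
  · field_simp
    simp
    ring

set_option maxHeartbeats 1000000 in
lemma IsSol.ibp_kernel {N : ℕ} {φ V : EN N → ℝ} {β M B : ℝ} (h : IsSol φ V β M B) (y0 : EN N) {c : ℝ}
    (hc : 0 < c) (hc1 : c < 1) :
    ∫ y, Real.exp (-(1/(4*(1-c^2))) * ‖y - c • y0‖^2) * ((β - V y) * φ y +
      φ y * (N * c^2/(2*(1-c^2)) - c^2 * ‖y - c•y0‖^2/(4*(1-c^2)^2) + c * inner ℝ (y - c•y0) y0 / (4 * (1-c^2)))) = 0 := by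
  have hv : 0 < 1 - c^2 := by nlinarith
  set v := 1 - c^2 with hvdef
  have hv1 : v ≤ 1 := by nlinarith
  have ha : 1/4 ≤ 1/(4*v) := by
    rw [div_le_div_iff₀ (by norm_num) (by positivity)]; linarith
  set b := c • y0 with hb
  set K : EN N → ℝ := fun y => Real.exp (-(1/(4*v)) * ‖y - b‖^2) with hK
  have hKc : ContDiff ℝ 1 K := contDiff_gauss _ _
  have hg1 : ContDiff ℝ 1 (gradient φ) := contDiff_gradient h.c2
  have hφ1 : ContDiff ℝ 1 φ := h.c2.of_le (by norm_num)
  set L : EN N → EN N := fun y => -(1/(2*v)) • b + (1/(2*v) - 1/2) • y with hL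
  have hLc : ContDiff ℝ 1 L := by rw [hL]; fun_prop
  set X : EN N → EN N := fun y => gradient φ y + φ y • L y with hX
  have hXc : ContDiff ℝ 1 X := hg1.add (hφ1.smul hLc)
  have hdv : ∀ y, dv (fun y => K y • X y) y = K y * ((β - V y) * φ y +
      φ y * (N * c^2/(2*v) - c^2 * ‖y - b‖^2/(4*v^2) + c * inner ℝ (y - b) y0 / (4 * v))) := by
    intro y
    have h2 := dv_smul (hφ1.differentiable (by norm_num) y) (hLc.differentiable (by norm_num) y)
    have h3 : dv X y = dv (gradient φ) y + dv (fun y => φ y • L y) y := 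
      dv_add (hg1.differentiable (by norm_num) y) ((hφ1.smul hLc).differentiable (by norm_num) y)
    have h4 : dv L y = (1/(2*v) - 1/2) * N := dv_affine _ _ _
    have h5 : fderiv ℝ K y (X y) = -2 * (1/(4*v)) * K y * inner ℝ (y - b) (X y) := fderiv_gauss _ _ _ _
    rw [dv_smul (hKc.differentiable (by norm_num) y) (hXc.differentiable (by norm_num) y), h3, h2, h4, h5,
      ← lap_eq_dv h.c2, h.eq]
    have f1 : fderiv ℝ φ y (L y) = -(1/(2*v)) * c * fderiv ℝ φ y y0 + (1/(2*v) - 1/2) * fderiv ℝ φ y y := by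
      simp only [hL, hb, map_add, map_smul, smul_eq_mul]; ring
    have e3 : (inner ℝ y (gradient φ y) : ℝ) = fderiv ℝ φ y y := by
      rw [real_inner_comm, inner_gradient_left]
    have e4 : (inner ℝ y0 (gradient φ y) : ℝ) = fderiv ℝ φ y y0 := by
      rw [real_inner_comm, inner_gradient_left]
    have e6 : (inner ℝ y0 y : ℝ) = inner ℝ y y0 := real_inner_comm _ _
    have e2 : ‖y - b‖^2 = ‖y‖^2 - 2 * c * inner ℝ y y0 + c^2 * ‖y0‖^2 := by
      rw [norm_sub_sq_real, hb, inner_smul_right, norm_smul, mul_pow]; simp; ring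
    have e7 : (inner ℝ (y - b) y0 : ℝ) = inner ℝ y y0 - c * ‖y0‖^2 := by
      rw [inner_sub_left, hb, inner_smul_left, real_inner_self_eq_norm_sq]; simp
    have f2 : (inner ℝ (y - b) (X y) : ℝ) = fderiv ℝ φ y y - c * fderiv ℝ φ y y0 + φ y * 
        (-(1/(2*v)) * c * (inner ℝ y y0 - c * ‖y0‖^2) + (1/(2*v) - 1/2) * (‖y‖^2 - c * inner ℝ y y0)) := by
      have f3 : (inner ℝ (y - b) (gradient φ y) : ℝ) = fderiv ℝ φ y y - c * fderiv ℝ φ y y0 := by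
        rw [inner_sub_left, hb, inner_smul_left, e3, e4]; simp
      have f4 : (inner ℝ (y - b) y : ℝ) = ‖y‖^2 - c * inner ℝ y y0 := by
        rw [inner_sub_left, hb, inner_smul_left, e6, real_inner_self_eq_norm_sq]; simp
      simp only [hX, hL, inner_add_right, inner_smul_right, f3, f4]
      rw [hb, inner_smul_right, ← hb, e7]
      ring
    rw [f1, f2, e2, e7]
    have hvne : v ≠ 0 := hv.ne'
    generalize fderiv ℝ φ y y = d
    generalize fderiv ℝ φ y y0 = d0
    generalize (inner ℝ y y0 : ℝ) = s
    generalize ‖y‖ = n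
    generalize ‖y0‖ = m
    generalize K y = k
    generalize φ y = f
    generalize V y = W
    clear_value v
    subst hvdef
    field_simp
    ring
  rw [← integral_congr_ae (Eventually.of_forall hdv)]
  have hb0 := h.B0
  -- bounds
  obtain ⟨CX, hCX⟩ : ∃ C : ℝ, ∀ y, ‖X y‖ ≤ C * ((1 + ‖y‖)^1 * (1 + ‖gradient φ y‖^2)) := by
    refine ⟨1 + B * (‖-(1/(2*v)) • b‖ + |1/(2*v) - 1/2|), fun y => ?_⟩
    have g0 := norm_nonneg (gradient φ y)
    have n0 := norm_nonneg y
    have b1 : ‖L y‖ ≤ (‖-(1/(2*v)) • b‖ + |1/(2*v) - 1/2|) * (1 + ‖y‖) := by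
      refine (norm_add_le _ _).trans ?_
      rw [norm_smul (1/(2*v) - 1/2) y, Real.norm_eq_abs]
      nlinarith [norm_nonneg (-(1/(2*v)) • b), abs_nonneg (1/(2*v) - 1/2)]
    have b2 : ‖X y‖ ≤ ‖gradient φ y‖ + B * ((‖-(1/(2*v)) • b‖ + |1/(2*v) - 1/2|) * (1 + ‖y‖)) := by
      refine (norm_add_le _ _).trans ?_
      rw [norm_smul]
      gcongr
      exact h.bdd y
    have b3 : ‖gradient φ y‖ ≤ (1 + ‖y‖) * (1 + ‖gradient φ y‖^2) := by
      have q1 : ‖gradient φ y‖ ≤ 1 + ‖gradient φ y‖^2 := by nlinarith [sq_nonneg (‖gradient φ y‖ - 1/2)]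
      have q2 : 0 ≤ ‖y‖ * (1 + ‖gradient φ y‖^2) := by positivity
      linarith
    set T := B * (‖-(1/(2*v)) • b‖ + |1/(2*v) - 1/2|)
    have hT : 0 ≤ T := by positivity
    have b4 : T * (1 + ‖y‖) ≤ T * (1+‖y‖) * (1 + ‖gradient φ y‖^2) := by
      apply le_mul_of_one_le_right (by positivity); nlinarith
    calc _ ≤ _ := b2
      _ = ‖gradient φ y‖ + T * (1 + ‖y‖) := by ring
      _ ≤ (1 + ‖y‖) * (1 + ‖gradient φ y‖^2) + T * (1+‖y‖) * (1 + ‖gradient φ y‖^2) := by gcongr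
      _ = _ := by ring
  have hKb : ∀ y, K y ≤ Real.exp (‖b‖^2/4) * Real.exp (-(1/8) * ‖y‖^2) := fun y => gauss_shift_le ha b y
  have hcd : ContDiff ℝ 1 (fun y => K y • X y) := hKc.smul hXc
  apply integral_dv hcd
  · apply h.int_of_bound hcd.continuous (Real.exp (‖b‖^2/4) * CX) 1 (a := 1/8) (by norm_num)
    intro y
    rw [norm_smul, Real.norm_eq_abs, abs_of_pos (Real.exp_pos _)]
    calc _ ≤ (Real.exp (‖b‖^2/4) * Real.exp (-(1/8) * ‖y‖^2)) * (CX * ((1 + ‖y‖)^1 * (1 + ‖gradient φ y‖^2))) :=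
          mul_le_mul (hKb y) (hCX y) (norm_nonneg _) (by positivity)
      _ = _ := by ring
  · have hM := h.M0
    have hβ := h.hβ
    set T : ℝ := (β + M) * B + B * (|N * c^2/(2*v)| + c^2 * (1+‖b‖)^2/(4*v^2) + c * (1+‖b‖) * ‖y0‖/(4*v)) with hT
    have hT0 : 0 ≤ T := by positivity
    apply h.int_of_bound (continuous_dv hcd) (Real.exp (‖b‖^2/4) * T) 2 (a := 1/8) (by norm_num)
    intro y
    have n0 := norm_nonneg y
    rw [hdv, norm_mul, Real.norm_eq_abs, abs_of_pos (Real.exp_pos _)]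
    have one1 : 1 ≤ (1+‖y‖)^2 := one_le_pow₀ (by linarith)
    have s1 : ‖y - b‖^2 ≤ (1+‖b‖)^2 * (1+‖y‖)^2 := by
      rw [← mul_pow]; gcongr; exact norm_sub_le_one_add y b
    have s2 : |(inner ℝ (y - b) y0 : ℝ)| ≤ (1+‖b‖) * ‖y0‖ * (1+‖y‖)^2 := by
      refine (abs_real_inner_le_norm _ _).trans ?_
      have := norm_sub_le_one_add y b
      calc ‖y - b‖ * ‖y0‖ ≤ ((1+‖b‖) * (1+‖y‖)) * ‖y0‖ := by gcongr
        _ ≤ ((1+‖b‖) * (1+‖y‖)^2) * ‖y0‖ := by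
          gcongr
          nlinarith
        _ = _ := by ring
    have s3 : |N * c^2/(2*v) - c^2 * ‖y - b‖^2/(4*v^2) + c * inner ℝ (y - b) y0 / (4 * v)| ≤ 
        (|N * c^2/(2*v)| + c^2 * (1+‖b‖)^2/(4*v^2) + c * (1+‖b‖) * ‖y0‖/(4*v)) * (1+‖y‖)^2 := by
      refine (abs_add_le _ _).trans ?_
      refine (add_le_add_left (abs_sub _ _) _).trans ?_
      have t1 : |c^2 * ‖y - b‖^2/(4*v^2)| ≤ c^2 * (1+‖b‖)^2/(4*v^2) * (1+‖y‖)^2 := by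
        rw [abs_of_nonneg (by positivity)]
        calc _ ≤ c^2 * ((1+‖b‖)^2 * (1+‖y‖)^2)/(4*v^2) := by gcongr
          _ = _ := by ring
      have t2 : |c * inner ℝ (y - b) y0 / (4 * v)| ≤ c * (1+‖b‖) * ‖y0‖/(4*v) * (1+‖y‖)^2 := by
        rw [abs_div, abs_mul, abs_of_pos hc, abs_of_pos (show 0 < 4 * v by positivity)]
        calc _ ≤ c * ((1+‖b‖) * ‖y0‖ * (1+‖y‖)^2)/(4*v) := by gcongr
          _ = _ := by ring
      have t3 : |N * c^2/(2*v)| ≤ |N * c^2/(2*v)| * (1+‖y‖)^2 := le_mul_of_one_le_right (abs_nonneg _) one1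
      linarith
    have s4 : |(β - V y) * φ y| ≤ (β + M) * B * (1+‖y‖)^2 := by
      rw [abs_mul]
      have u1 : |β - V y| ≤ β + M := by
        rw [abs_le]; constructor <;> linarith [h.V0 y, h.VM y]
      calc |β - V y| * |φ y| ≤ (β + M) * B := mul_le_mul u1 (h.bdd y) (abs_nonneg _) (by positivity)
        _ ≤ _ := le_mul_of_one_le_right (by positivity) one1
    have s5 : ‖(β - V y) * φ y +
      φ y * (N * c^2/(2*v) - c^2 * ‖y - b‖^2/(4*v^2) + c * inner ℝ (y - b) y0 / (4 * v))‖ ≤ T * (1+‖y‖)^2 := by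
      refine (norm_add_le _ _).trans ?_
      rw [Real.norm_eq_abs, Real.norm_eq_abs, abs_mul (φ y)]
      have := mul_le_mul (h.bdd y) s3 (abs_nonneg _) hb0
      rw [hT]
      linarith
    calc _ ≤ (Real.exp (‖b‖^2/4) * Real.exp (-(1/8) * ‖y‖^2)) * (T * (1 + ‖y‖)^2) := 
          mul_le_mul (hKb y) s5 (norm_nonneg _) (by positivity)
      _ = (Real.exp (‖b‖^2/4) * T * (1 + ‖y‖)^2 * Real.exp (-(1/8) * ‖y‖^2)) * 1 := by ring
      _ ≤ (Real.exp (‖b‖^2/4) * T * (1 + ‖y‖)^2 * Real.exp (-(1/8) * ‖y‖^2)) * (1 + ‖gradient φ y‖^2) := by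
          gcongr; linarith [sq_nonneg ‖gradient φ y‖]
      _ = _ := by ring


lemma gauss_scale {N : ℕ} (f : EN N → ℝ) (b : EN N) {v : ℝ} (hv : 0 < v) :
    ((√v)^N)⁻¹ * ∫ y, f y * Real.exp (-(1/(4*v)) * ‖y - b‖^2) =
      ∫ ζ, f (b + √v • ζ) * Real.exp (-(1/4) * ‖ζ‖^2) := by
  have hs : 0 < √v := Real.sqrt_pos.2 hv
  have h1 := Measure.integral_comp_smul (volume : Measure (EN N))
    (fun y => f (b + y) * Real.exp (-(1/(4*v)) * ‖y‖^2)) (√v)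
  have h2 : ∫ y, f y * Real.exp (-(1/(4*v)) * ‖y - b‖^2) =
      ∫ y, f (b + y) * Real.exp (-(1/(4*v)) * ‖y‖^2) := by
    rw [← integral_add_left_eq_self _ b]
    simp
  rw [h2]
  rw [finrank_euclideanSpace_fin, smul_eq_mul, abs_of_pos (by positivity)] at h1
  rw [← h1]
  congr 1
  ext ζ
  rw [norm_smul, mul_pow, Real.norm_eq_abs, sq_abs, Real.sq_sqrt hv.le]
  congr 2
  field_simp

lemma kernel_deriv {N : ℕ} (y y0 : EN N) {c : ℝ} (hc : 1 - c^2 ≠ 0) :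
    HasDerivAt (fun c : ℝ => Real.exp (-(1/(4*(1-c^2))) * ‖y - c • y0‖^2))
      (Real.exp (-(1/(4*(1-c^2))) * ‖y - c • y0‖^2) *
        (inner ℝ (y - c•y0) y0 / (2*(1-c^2)) - c * ‖y - c•y0‖^2/(2*(1-c^2)^2))) c := by
  have h1 : HasDerivAt (fun c : ℝ => y - c • y0) (-y0) c := by
    simpa using ((hasDerivAt_id c).smul_const y0).const_sub y
  have h2 := h1.norm_sq
  have h3 : HasDerivAt (fun c : ℝ => 4 * (1 - c^2)) (4 * (-(2 * c))) c := by
    simpa using (((hasDerivAt_pow 2 c).const_sub 1).const_mul 4)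
  have h4 := ((h3.fun_inv (by simpa using hc)).fun_neg.fun_mul h2).exp
  simp only [one_div]
  refine h4.congr_deriv ?_
  simp only [inner_neg_right]
  generalize (inner ℝ (y - c•y0) y0 : ℝ) = s
  generalize ‖y - c • y0‖ = n
  congr 1
  generalize hv : 1 - c^2 = v at *
  field_simp
  ring

set_option maxHeartbeats 1000000 in
lemma IsSol.g_deriv {N : ℕ} {φ V : EN N → ℝ} {β M B : ℝ} (h : IsSol φ V β M B) (y0 : EN N) {c : ℝ}
    (hc : 0 < c) (hc1 : c < 1) :
    HasDerivAt (fun c : ℝ => ((√(1-c^2))^N)⁻¹ * ∫ y, φ y * Real.exp (-(1/(4*(1-c^2))) * ‖y - c • y0‖^2))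
      (-(2/c) * (((√(1-c^2))^N)⁻¹ * ∫ y, ((β - V y) * φ y) * Real.exp (-(1/(4*(1-c^2))) * ‖y - c • y0‖^2))) c := by
  have hφc : Continuous φ := h.c2.continuous
  have hVc := h.Vc
  have hB := h.B0
  have hM := h.M0
  have hβ := h.hβ
  have hv : 0 < 1 - c^2 := by nlinarith
  set c1 : ℝ := (1+c)/2 with hc1d
  set v1 : ℝ := 1 - c1^2 with hv1
  have hv1p : 0 < v1 := by rw [hv1, hc1d]; nlinarith
  have hs : Ioo 0 c1 ∈ 𝓝 c := Ioo_mem_nhds hc (by rw [hc1d]; linarith)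
  have kint : ∀ x ∈ Ioo 0 c1, ∀ y, Real.exp (-(1/(4*(1-x^2))) * ‖y - x • y0‖^2) ≤
      Real.exp (‖y0‖^2/4) * Real.exp (-(1/8) * ‖y‖^2) := by
    intro x hx y
    have hxv : v1 ≤ 1 - x^2 := by rw [hv1]; nlinarith [hx.1, hx.2]
    have ha : 1/4 ≤ 1/(4*(1-x^2)) := by
      rw [div_le_div_iff₀ (by norm_num) (by linarith)]; nlinarith [hx.1]
    refine (gauss_shift_le ha (x • y0) y).trans ?_
    gcongr
    rw [norm_smul, Real.norm_eq_abs, abs_of_pos hx.1]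
    have : x ≤ 1 := by nlinarith [hx.1, hx.2]
    nlinarith [norm_nonneg y0, hx.1]
  have hcm : c ∈ Ioo 0 c1 := mem_of_mem_nhds hs
  have intg : ∀ f : EN N → ℝ, Continuous f → (∃ C, ∀ y, |f y| ≤ C) → 
      Integrable (fun y => f y * Real.exp (-(1/(4*(1-c^2))) * ‖y - c • y0‖^2)) := by
    rintro f hf ⟨C, hC⟩
    refine Integrable.mono' (((integrable_gauss (N := N) (a := 1/8) (by norm_num)).const_mul (Real.exp (‖y0‖^2/4))).const_mul C) ?_ ?_
    · apply Continuous.aestronglyMeasurable; fun_prop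
    · refine Eventually.of_forall fun y => ?_
      rw [norm_mul, Real.norm_eq_abs, Real.norm_eq_abs, abs_of_pos (Real.exp_pos _)]
      exact mul_le_mul (hC y) (kint c hcm y) (Real.exp_pos _).le ((abs_nonneg _).trans (hC 0))
  have D := hasDerivAt_integral_of_dominated_loc_of_deriv_le (μ := (volume : Measure (EN N))) (𝕜 := ℝ)
    (F := fun c y => φ y * Real.exp (-(1/(4*(1-c^2))) * ‖y - c • y0‖^2))
    (F' := fun c y => φ y * (Real.exp (-(1/(4*(1-c^2))) * ‖y - c • y0‖^2) *
        (inner ℝ (y - c•y0) y0 / (2*(1-c^2)) - c * ‖y - c•y0‖^2/(2*(1-c^2)^2))))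
    (x₀ := c) (s := Ioo 0 c1)
    (bound := fun y => (B * Real.exp (‖y0‖^2/4) * ((1+‖y0‖)^2/(2*v1) + (1+‖y0‖)^2/(2*v1^2))) * ((1+‖y‖)^2 * Real.exp (-(1/8) * ‖y‖^2)))
    hs
    (Eventually.of_forall fun x => by
      apply Continuous.aestronglyMeasurable; fun_prop)
    (intg φ hφc ⟨B, h.bdd⟩)
    (by apply Continuous.aestronglyMeasurable; fun_prop)
    (Eventually.of_forall fun y x hx => by
      have hx1 : x ≤ 1 := by nlinarith [hx.1, hx.2]
      have hxv : v1 ≤ 1 - x^2 := by rw [hv1]; nlinarith [hx.1, hx.2]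
      have hz : ‖y - x • y0‖ ≤ (1 + ‖y0‖) * (1+‖y‖) := by
        refine (norm_sub_le _ _).trans ?_
        rw [norm_smul, Real.norm_eq_abs, abs_of_pos hx.1]
        nlinarith [norm_nonneg y0, norm_nonneg y, mul_nonneg (norm_nonneg y0) (norm_nonneg y)]
      have n0 := norm_nonneg y
      have m0 := norm_nonneg y0
      have z0 := norm_nonneg (y - x • y0)
      have b1 : |(inner ℝ (y - x•y0) y0 : ℝ) / (2*(1-x^2))| ≤ (1+‖y0‖)^2/(2*v1) * (1+‖y‖)^2 := by
        rw [abs_div, abs_of_pos (show 0 < 2*(1-x^2) by linarith)]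
        have : |(inner ℝ (y - x•y0) y0 : ℝ)| ≤ (1+‖y0‖)^2 * (1+‖y‖)^2 := by
          refine (abs_real_inner_le_norm _ _).trans ?_
          calc ‖y - x • y0‖ * ‖y0‖ ≤ ((1 + ‖y0‖) * (1+‖y‖)) * (1 + ‖y0‖) := by
                apply mul_le_mul hz _ m0 (by positivity); linarith
            _ ≤ ((1 + ‖y0‖) * (1+‖y‖)) * (1 + ‖y0‖) * (1 + ‖y‖) := 
              le_mul_of_one_le_right (by positivity) (by linarith)
            _ = _ := by ring
        calc _ ≤ (1+‖y0‖)^2 * (1+‖y‖)^2 / (2*v1) := by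
              apply div_le_div₀ (by positivity) this (by positivity); linarith
          _ = _ := by ring
      have b2 : |x * ‖y - x•y0‖^2/(2*(1-x^2)^2)| ≤ (1+‖y0‖)^2/(2*v1^2) * (1+‖y‖)^2 := by
        have hx0 := hx.1
        rw [abs_of_nonneg (by positivity)]
        calc _ ≤ 1 * ((1 + ‖y0‖) * (1+‖y‖))^2 / (2*v1^2) := by
              apply div_le_div₀ (by positivity) _ (by positivity)
              · gcongr
              · apply mul_le_mul hx1 _ (by positivity) (by norm_num); gcongr
          _ = _ := by ring
      rw [Real.norm_eq_abs, abs_mul, abs_mul, abs_of_pos (Real.exp_pos _)]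
      calc _ ≤ B * ((Real.exp (‖y0‖^2/4) * Real.exp (-(1/8) * ‖y‖^2)) * ((1+‖y0‖)^2/(2*v1) * (1+‖y‖)^2 + (1+‖y0‖)^2/(2*v1^2) * (1+‖y‖)^2)) := by
            apply mul_le_mul (h.bdd y) _ (by positivity) hB
            apply mul_le_mul (kint x hx y) _ (by positivity) (by positivity)
            exact (abs_sub _ _).trans (add_le_add b1 b2)
        _ = _ := by ring)
    ((integrable_poly_gauss 2 (by norm_num)).const_mul _)
    (Eventually.of_forall fun y x hx => by
      have hxv : v1 ≤ 1 - x^2 := by rw [hv1]; nlinarith [hx.1, hx.2]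
      exact (kernel_deriv y y0 (by linarith)).const_mul _)
  obtain ⟨iF', dI⟩ := D
  have ibp := h.ibp_kernel y0 hc hc1
  have i1 := intg φ hφc ⟨B, h.bdd⟩
  have i2 := intg (fun y => (β - V y) * φ y) (by fun_prop) ⟨(β + M) * B, fun y => by
    rw [abs_mul]
    refine mul_le_mul ?_ (h.bdd y) (abs_nonneg _) (by positivity)
    rw [abs_le]; constructor <;> linarith [h.V0 y, h.VM y]⟩
  have e1 : ∀ y, Real.exp (-(1/(4*(1-c^2))) * ‖y - c • y0‖^2) * ((β - V y) * φ y +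
      φ y * (N * c^2/(2*(1-c^2)) - c^2 * ‖y - c•y0‖^2/(4*(1-c^2)^2) + c * inner ℝ (y - c•y0) y0 / (4 * (1-c^2)))) = 
      (((β - V y) * φ y) * Real.exp (-(1/(4*(1-c^2))) * ‖y - c • y0‖^2) + (N * c^2/(2*(1-c^2))) * (φ y * Real.exp (-(1/(4*(1-c^2))) * ‖y - c • y0‖^2))) + 
      (c/2) * (φ y * (Real.exp (-(1/(4*(1-c^2))) * ‖y - c • y0‖^2) *
        (inner ℝ (y - c•y0) y0 / (2*(1-c^2)) - c * ‖y - c•y0‖^2/(2*(1-c^2)^2)))) := by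
    intro y
    generalize Real.exp (-(1/(4*(1-c^2))) * ‖y - c • y0‖^2) = E
    generalize 1 - c^2 = v
    ring
  simp_rw [e1] at ibp
  rw [integral_add (i2.fun_add (i1.const_mul _)) (iF'.const_mul _), integral_add i2 (i1.const_mul _),
    integral_const_mul, integral_const_mul] at ibp
  have tot := (pref_deriv N hc hc1).mul dI
  refine tot.congr_deriv ?_
  generalize hI : (∫ y, φ y * Real.exp (-(1/(4*(1-c^2))) * ‖y - c • y0‖^2)) = I at *
  generalize hI2 : (∫ y, φ y * (Real.exp (-(1/(4*(1-c^2))) * ‖y - c • y0‖^2) *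
        (inner ℝ (y - c•y0) y0 / (2*(1-c^2)) - c * ‖y - c•y0‖^2/(2*(1-c^2)^2)))) = I2 at *
  generalize (∫ y, ((β - V y) * φ y) * Real.exp (-(1/(4*(1-c^2))) * ‖y - c • y0‖^2)) = I3 at *
  have : I3 = - (N * c^2/(2*(1-c^2)) * I + c/2 * I2) := by linarith
  rw [this]
  have hv' := hv.ne'
  generalize ((√(1-c^2))^N)⁻¹ = P
  generalize 1 - c^2 = v at *
  field_simp

lemma gauss_int_pos (N : ℕ) : 0 < ∫ ζ : EN N, Real.exp (-(1/4) * ‖ζ‖^2) := by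
  rw [integral_pos_iff_support_of_nonneg (fun _ => (Real.exp_pos _).le) (integrable_gauss (by norm_num))]
  have : Function.support (fun ζ : EN N => Real.exp (-(1/4) * ‖ζ‖^2)) = univ := by
    ext x; simp [Real.exp_ne_zero]
  rw [this]
  exact IsOpen.measure_pos _ isOpen_univ univ_nonempty

lemma IsSol.approx {N : ℕ} {φ V : EN N → ℝ} {β M B : ℝ} (h : IsSol φ V β M B) (y0 : EN N) {c : ℝ}
    (hc : 1/2 < c) (hc1 : c < 1) :
    |(∫ ζ : EN N, Real.exp (-(1/4) * ‖ζ‖^2)) * φ y0 -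
      ((√(1-c^2))^N)⁻¹ * ∫ y, φ y * Real.exp (-(1/(4*(1-c^2))) * ‖y - c • y0‖^2)| ≤
      4 * ((β + M) * B * ∫ ζ : EN N, Real.exp (-(1/4) * ‖ζ‖^2)) * (1 - c) := by
  have hφc : Continuous φ := h.c2.continuous
  have hB := h.B0
  have hM := h.M0
  have hβ := h.hβ
  set Z := ∫ ζ : EN N, Real.exp (-(1/4) * ‖ζ‖^2) with hZ
  have hZ0 : 0 < Z := gauss_int_pos N
  set g : ℝ → ℝ := fun c => ((√(1-c^2))^N)⁻¹ * ∫ y, φ y * Real.exp (-(1/(4*(1-c^2))) * ‖y - c • y0‖^2) with hg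
  have gder : ∀ x ∈ Ioo (1/2:ℝ) 1, ‖(-(2/x) * (((√(1-x^2))^N)⁻¹ * ∫ y, ((β - V y) * φ y) * Real.exp (-(1/(4*(1-x^2))) * ‖y - x • y0‖^2)))‖ ≤ 4 * ((β + M) * B * Z) := by
    intro x hx
    have hx0 : 0 < x := by linarith [hx.1]
    rw [gauss_scale (fun y => (β - V y) * φ y) _ (by nlinarith [hx.1, hx.2]), norm_mul]
    have q1 : ‖-(2/x)‖ ≤ 4 := by
      rw [norm_neg, Real.norm_eq_abs, abs_of_pos (by positivity), div_le_iff₀ hx0]; linarith [hx.1]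
    refine mul_le_mul q1 ?_ (norm_nonneg _) (by norm_num)
    rw [hZ, ← integral_const_mul]
    refine norm_integral_le_of_norm_le ((integrable_gauss (by norm_num)).const_mul _) (Eventually.of_forall fun ζ => ?_)
    rw [norm_mul, norm_mul, Real.norm_eq_abs, Real.norm_eq_abs, Real.norm_eq_abs, abs_of_pos (Real.exp_pos _)]
    refine mul_le_mul_of_nonneg_right ?_ (Real.exp_pos _).le
    refine mul_le_mul ?_ (h.bdd _) (abs_nonneg _) (by positivity)
    rw [abs_le]; constructor <;> linarith [h.V0 (x • y0 + √(1-x^2) • ζ), h.VM (x • y0 + √(1-x^2) • ζ)]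
  have mvt : ∀ x ∈ Ioo c 1, ‖g x - g c‖ ≤ 4 * ((β + M) * B * Z) * (1 - c) := by
    intro x hx
    have := (convex_Ioo (1/2:ℝ) 1).norm_image_sub_le_of_norm_hasDerivWithin_le (f := g)
      (fun x hx => (h.g_deriv y0 (by linarith [hx.1]) hx.2).hasDerivWithinAt) gder ⟨hc, hc1⟩ 
      (show x ∈ Ioo (1/2:ℝ) 1 from ⟨by linarith [hx.1], hx.2⟩)
    refine this.trans ?_
    apply mul_le_mul_of_nonneg_left _ (by positivity)
    rw [Real.norm_eq_abs, abs_of_pos (by linarith [hx.1])]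
    linarith [hx.2]
  have lim : Tendsto g (𝓝[<] 1) (𝓝 (Z * φ y0)) := by
    have l1 : Tendsto (fun c : ℝ => ∫ ζ : EN N, φ (c • y0 + √(1-c^2) • ζ) * Real.exp (-(1/4) * ‖ζ‖^2)) (𝓝 1)
        (𝓝 (∫ ζ : EN N, φ ((1:ℝ) • y0 + √(1-(1:ℝ)^2) • ζ) * Real.exp (-(1/4) * ‖ζ‖^2))) := by
      apply tendsto_integral_filter_of_dominated_convergence (fun ζ => B * Real.exp (-(1/4) * ‖ζ‖^2))
      · refine Eventually.of_forall fun x => ?_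
        apply Continuous.aestronglyMeasurable; fun_prop
      · refine Eventually.of_forall fun x => Eventually.of_forall fun ζ => ?_
        rw [norm_mul, Real.norm_eq_abs, Real.norm_eq_abs, abs_of_pos (Real.exp_pos _)]
        exact mul_le_mul_of_nonneg_right (h.bdd _) (Real.exp_pos _).le
      · exact (integrable_gauss (by norm_num)).const_mul _
      · refine Eventually.of_forall fun ζ => ?_
        apply Continuous.tendsto (f := fun c : ℝ => φ (c • y0 + √(1-c^2) • ζ) * Real.exp (-(1/4) * ‖ζ‖^2))
        fun_prop
    have e : (∫ ζ : EN N, φ ((1:ℝ) • y0 + √(1-(1:ℝ)^2) • ζ) * Real.exp (-(1/4) * ‖ζ‖^2)) = Z * φ y0 := by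
      simp only [one_pow, sub_self, Real.sqrt_zero, zero_smul, add_zero, one_smul]
      rw [integral_const_mul, mul_comm]
    rw [e] at l1
    refine (l1.mono_left nhdsWithin_le_nhds).congr' ?_
    filter_upwards [Ioo_mem_nhdsLT (show (0:ℝ) < 1 by norm_num)] with x hx
    rw [hg]; simp only
    rw [gauss_scale φ _ (by nlinarith [hx.1, hx.2])]
  have l2 : Tendsto (fun x => ‖g x - g c‖) (𝓝[<] 1) (𝓝 (‖Z * φ y0 - g c‖)) :=
    (lim.sub_const (g c)).norm
  refine le_of_tendsto l2 ?_
  filter_upwards [Ioo_mem_nhdsLT hc1] with x hx using mvt x hx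

lemma IsSol.tendsto_zero {N : ℕ} {φ V : EN N → ℝ} {β M B q : ℝ} (h : IsSol φ V β M B) (hq : 0 < q)
    (hi : Integrable (fun y => |φ y| ^ q)) {ε : ℝ} (hε : 0 < ε) : ∃ R, ∀ y, R ≤ ‖y‖ → |φ y| ≤ ε := by
  have hφc : Continuous φ := h.c2.continuous
  have hB := h.B0
  have hM := h.M0
  have hβ := h.hβ
  set Z := ∫ ζ : EN N, Real.exp (-(1/4) * ‖ζ‖^2) with hZ
  have hZ0 : 0 < Z := gauss_int_pos N
  obtain ⟨c, hc, hc1, hcε⟩ : ∃ c : ℝ, 1/2 < c ∧ c < 1 ∧ 4 * ((β + M) * B * Z) * (1 - c) ≤ Z * ε / 3 := by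
    have : ∀ᶠ c in 𝓝[<] (1:ℝ), 4 * ((β + M) * B * Z) * (1 - c) < Z * ε / 3 := by
      apply Tendsto.eventually_lt_const (v := 0) (by positivity)
      have : Tendsto (fun c : ℝ => 4 * ((β + M) * B * Z) * (1 - c)) (𝓝 1) (𝓝 (4 * ((β + M) * B * Z) * (1 - 1))) :=
        Continuous.tendsto (by fun_prop) 1
      simpa using this.mono_left nhdsWithin_le_nhds
    obtain ⟨c, h1, h2⟩ := (this.and (Ioo_mem_nhdsLT (show (1/2:ℝ) < 1 by norm_num))).exists
    exact ⟨c, h2.1, h2.2, h1.le⟩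
  have hv : 0 < 1 - c^2 := by nlinarith
  set v := 1 - c^2 with hvd
  have hs : 0 < √v := Real.sqrt_pos.2 hv
  set P := ((√v)^N)⁻¹ with hP
  have hP0 : 0 < P := by positivity
  set η := ε/3 with hη
  have hη0 : 0 < η := by positivity
  have l1 : Tendsto (fun y0 : EN N => ∫ y, |φ y|^q * Real.exp (-(1/(4*v)) * ‖y - c • y0‖^2)) (comap norm atTop)
      (𝓝 (∫ y : EN N, 0)) := by
    apply tendsto_integral_filter_of_dominated_convergence (fun y => |φ y|^q)
    · refine Eventually.of_forall fun x => ?_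
      refine hi.aestronglyMeasurable.mul ?_
      apply Continuous.aestronglyMeasurable; fun_prop
    · refine Eventually.of_forall fun x => Eventually.of_forall fun y => ?_
      rw [norm_mul, Real.norm_eq_abs, Real.norm_eq_abs, abs_of_pos (Real.exp_pos _), abs_of_nonneg (by positivity)]
      refine mul_le_of_le_one_right (by positivity) ?_
      apply Real.exp_le_one_iff.2
      have : 0 ≤ 1/(4*v) * ‖y - c • x‖^2 := by positivity
      linarith
    · exact hi
    · refine Eventually.of_forall fun y => ?_
      rw [show (0:ℝ) = |φ y|^q * 0 by ring]
      apply Tendsto.const_mul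
      apply Real.tendsto_exp_atBot.comp
      have t1 : Tendsto (fun y0 : EN N => (1/(4*v)) * (c * ‖y0‖ - ‖y‖)^2) (comap norm atTop) atTop := by
        apply Tendsto.const_mul_atTop (by positivity)
        apply (tendsto_pow_atTop (by norm_num)).comp
        apply tendsto_atTop_add_const_right
        exact Tendsto.const_mul_atTop (by linarith) tendsto_comap
      have t2 : ∀ᶠ y0 : EN N in comap norm atTop, -(1/(4*v)) * ‖y - c • y0‖^2 ≤ -((1/(4*v)) * (c * ‖y0‖ - ‖y‖)^2) := by
        have : ∀ᶠ y0 : EN N in comap norm atTop, ‖y‖/c ≤ ‖y0‖ := tendsto_comap.eventually_ge_atTop _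
        filter_upwards [this] with y0 hy0
        rw [neg_mul, neg_le_neg_iff]
        apply mul_le_mul_of_nonneg_left _ (by positivity)
        have c0 : 0 < c := by linarith
        rw [div_le_iff₀ c0] at hy0
        apply pow_le_pow_left₀ (by linarith)
        have := norm_sub_norm_le (c • y0) y
        rw [norm_smul, Real.norm_eq_abs, abs_of_pos c0, norm_sub_rev] at this
        exact this
      exact tendsto_atBot_mono' _ t2 (tendsto_neg_atTop_atBot.comp t1)
  rw [integral_zero] at l1
  have l2 : ∀ᶠ y0 : EN N in comap norm atTop, (P * (B * η^(-q))) * ∫ y, |φ y|^q * Real.exp (-(1/(4*v)) * ‖y - c • y0‖^2) < Z * ε / 3 := by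
    have := l1.const_mul (P * (B * η^(-q)))
    rw [mul_zero] at this
    exact this.eventually_lt_const (by positivity)
  have l3 : ∀ᶠ y0 : EN N in comap norm atTop, |φ y0| ≤ ε := by
    filter_upwards [l2] with y0 hy
    have a1 := h.approx y0 hc hc1
    rw [← hZ, ← hvd, ← hP] at a1
    have i1 : Integrable (fun y : EN N => Real.exp (-(1/(4*v)) * ‖y - c • y0‖^2)) :=
      (integrable_gauss (by positivity)).comp_sub_right (c • y0)
    have i2 : Integrable (fun y => |φ y|^q * Real.exp (-(1/(4*v)) * ‖y - c • y0‖^2)) := by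
      refine hi.mono (hi.aestronglyMeasurable.mul (by apply Continuous.aestronglyMeasurable; fun_prop)) ?_
      refine Eventually.of_forall fun y => ?_
      rw [norm_mul]
      refine mul_le_of_le_one_right (by positivity) ?_
      rw [Real.norm_eq_abs, abs_of_pos (Real.exp_pos _)]
      apply Real.exp_le_one_iff.2
      have : 0 ≤ 1/(4*v) * ‖y - c • y0‖^2 := by positivity
      linarith
    have sc : P * ∫ y : EN N, Real.exp (-(1/(4*v)) * ‖y - c • y0‖^2) = Z := by
      have := gauss_scale (fun _ : EN N => (1:ℝ)) (c • y0) hv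
      simp only [one_mul] at this
      exact this
    have a2 : |∫ y, φ y * Real.exp (-(1/(4*v)) * ‖y - c • y0‖^2)| ≤ 
        η * (∫ y : EN N, Real.exp (-(1/(4*v)) * ‖y - c • y0‖^2)) + (B * η^(-q)) * ∫ y, |φ y|^q * Real.exp (-(1/(4*v)) * ‖y - c • y0‖^2) := by
      rw [← integral_const_mul, ← integral_const_mul, ← integral_add (i1.const_mul _) (i2.const_mul _), ← Real.norm_eq_abs]
      refine norm_integral_le_of_norm_le ((i1.const_mul _).add (i2.const_mul _)) (Eventually.of_forall fun y => ?_)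
      rw [norm_mul, Real.norm_eq_abs, Real.norm_eq_abs, abs_of_pos (Real.exp_pos _)]
      have : |φ y| ≤ η + B * η^(-q) * |φ y|^q := by
        rcases le_or_gt |φ y| η with hle | hgt
        · have : 0 ≤ B * η^(-q) * |φ y|^q := by positivity
          linarith
        · have r1 : 1 ≤ η^(-q) * |φ y|^q := by
            rw [Real.rpow_neg hη0.le, inv_mul_eq_div, ← Real.div_rpow (abs_nonneg _) hη0.le]
            apply Real.one_le_rpow _ hq.le
            rw [one_le_div hη0]; exact hgt.le
          have r2 := mul_le_mul_of_nonneg_left r1 hB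
          have := h.bdd y
          linarith
      calc _ ≤ (η + B * η^(-q) * |φ y|^q) * Real.exp (-(1/(4*v)) * ‖y - c • y0‖^2) :=
            mul_le_mul_of_nonneg_right this (Real.exp_pos _).le
        _ = _ := by ring
    have a3 : |P * ∫ y, φ y * Real.exp (-(1/(4*v)) * ‖y - c • y0‖^2)| ≤ η * Z + Z * ε/3 := by
      rw [abs_mul, abs_of_pos hP0]
      have := mul_le_mul_of_nonneg_left a2 hP0.le
      rw [← sc] at hy ⊢
      linarith
    have a4 : |Z * φ y0| ≤ Z * ε := by
      have := abs_sub_abs_le_abs_sub (Z * φ y0) (P * ∫ y, φ y * Real.exp (-(1/(4*v)) * ‖y - c • y0‖^2))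
      rw [hη] at a3
      linarith
    rw [abs_mul, abs_of_pos hZ0] at a4
    exact le_of_mul_le_mul_left a4 hZ0
  rw [eventually_comap, ] at l3
  obtain ⟨R, hR⟩ := eventually_atTop.1 l3
  exact ⟨R, fun y hy => hR _ hy y rfl⟩


lemma fderiv_lin {N : ℕ} {f g : EN N → ℝ} {x : EN N} (hf : DifferentiableAt ℝ f x)
    (hg : DifferentiableAt ℝ g x) (a b : ℝ) (v : EN N) :
    fderiv ℝ (fun y => a * f y + b * g y) x v = a * fderiv ℝ f x v + b * fderiv ℝ g x v := by
  rw [fderiv_fun_add (hf.const_mul a) (hg.const_mul b), fderiv_const_mul hf, fderiv_const_mul hg]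
  simp

lemma lap_lin {N : ℕ} {f g : EN N → ℝ} (hf : ContDiff ℝ 2 f) (hg : ContDiff ℝ 2 g) (a b : ℝ) (x : EN N) :
    lap (fun y => a * f y + b * g y) x = a * lap f x + b * lap g x := by
  unfold lap
  rw [Finset.mul_sum, Finset.mul_sum, ← Finset.sum_add_distrib]
  refine Finset.sum_congr rfl fun i _ => ?_
  have h1 : ∀ {f : EN N → ℝ}, ContDiff ℝ 2 f → Differentiable ℝ f := fun h => h.differentiable (by norm_num)
  have h2 : ∀ {f : EN N → ℝ}, ContDiff ℝ 2 f →
      Differentiable ℝ (fun y => fderiv ℝ f y (EuclideanSpace.single i 1)) := by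
    intro f h
    have : ContDiff ℝ 1 (fderiv ℝ f) := h.fderiv_right (by norm_num)
    exact (this.clm_apply contDiff_const).differentiable (by norm_num)
  have e : (fun y => fderiv ℝ (fun y => a * f y + b * g y) y (EuclideanSpace.single i 1)) =
     fun y => a * fderiv ℝ f y (EuclideanSpace.single i 1) + b * fderiv ℝ g y (EuclideanSpace.single i 1) := by
    ext y
    exact fderiv_lin (h1 hf y) (h1 hg y) a b _
  rw [e, fderiv_lin (h2 hf x) (h2 hg x)]

/-- second order condition at a minimum -/
lemma lap_nonneg_of_min {N : ℕ} {f : EN N → ℝ} (hf : ContDiff ℝ 2 f) {x : EN N} (hx : IsLocalMin f x) :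
    0 ≤ lap f x := by
  unfold lap
  refine Finset.sum_nonneg fun i _ => ?_
  set e : EN N := EuclideanSpace.single i 1
  set g : ℝ → ℝ := fun t => f (x + t • e) with hg
  have hd : Differentiable ℝ f := hf.differentiable (by norm_num)
  have hl : ∀ t : ℝ, HasDerivAt (fun t : ℝ => x + t • e) e t := by
    intro t
    simpa using ((hasDerivAt_id t).smul_const e).const_add x
  have hg1 : ∀ t, HasDerivAt g (fderiv ℝ f (x + t • e) e) t := fun t =>
    (hd (x + t • e)).hasFDerivAt.comp_hasDerivAt t (hl t)
  have hF : Differentiable ℝ (fun y => fderiv ℝ f y e) := by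
    have : ContDiff ℝ 1 (fderiv ℝ f) := hf.fderiv_right (by norm_num)
    exact (this.clm_apply contDiff_const).differentiable (by norm_num)
  have hg' : deriv g = fun t => fderiv ℝ f (x + t • e) e := by
    ext t; exact (hg1 t).deriv
  have hg2 : deriv (deriv g) 0 = fderiv ℝ (fun y => fderiv ℝ f y e) x e := by
    rw [hg']
    have := (hF (x + (0:ℝ) • e)).hasFDerivAt.comp_hasDerivAt 0 (hl 0)
    have h2 := this.deriv
    simp only [zero_smul, add_zero] at h2
    exact h2
  have hmin : IsLocalMin g 0 := by
    have hc : Tendsto (fun t : ℝ => x + t • e) (𝓝 0) (𝓝 x) := by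
      have := (hl 0).continuousAt.tendsto
      simpa using this
    have := hc.eventually hx
    filter_upwards [this] with t ht
    simpa [hg] using ht
  rw [← hg2]
  by_contra hneg
  push Not at hneg
  have hmax := isLocalMax_of_deriv_deriv_neg hneg hmin.deriv_eq_zero (hg1 0).continuousAt
  have hconst : g =ᶠ[𝓝 0] fun _ => g 0 := by
    filter_upwards [hmin, hmax] with t h1 h2 using le_antisymm h2 h1
  have : deriv (deriv g) 0 = 0 := by
    have h1 : deriv g =ᶠ[𝓝 0] deriv (fun _ => g 0) := hconst.deriv
    rw [h1.deriv_eq]; simp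
  linarith

/-- comparison principle -/
lemma IsSol.compare1 {N : ℕ} {φ V : EN N → ℝ} {β M B : ℝ} (h : IsSol φ V β M B)
    (h0 : ∀ ε > 0, ∃ R, ∀ y, R ≤ ‖y‖ → |φ y| ≤ ε) {f : EN N → ℝ} (hf : ContDiff ℝ 2 f)
    (hf0 : ∀ y, 0 ≤ f y) {R C : ℝ} (hC : 0 ≤ C) (hR : ∀ y, ‖y‖ ≤ R → φ y ≤ C * f y)
    (hV : ∀ y, R ≤ ‖y‖ → V y < β)
    (hL : ∀ y, R ≤ ‖y‖ → lap f y - 1/2 * fderiv ℝ f y y - β * f y + V y * f y ≤ 0) (y : EN N) :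
    φ y ≤ C * f y := by
  by_contra hy
  push Not at hy
  set ψ : EN N → ℝ := fun y => C * f y + (-1) * φ y with hψ
  have hψc : ContDiff ℝ 2 ψ := (contDiff_const.mul hf).add (contDiff_const.mul h.c2)
  have hψy : ψ y < 0 := by simp only [hψ]; linarith
  obtain ⟨R', hR'⟩ := h0 (-(ψ y)/2) (by linarith)
  obtain ⟨x, hx, hxm⟩ := (isCompact_closedBall (0:EN N) (max R' ‖y‖)).exists_isMinOn
    ⟨y, by simp⟩ hψc.continuous.continuousOn
  have hxy : ψ x ≤ ψ y := hxm (by simp)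
  have hglob : ∀ w, ψ x ≤ ψ w := by
    intro w
    by_cases hw : ‖w‖ ≤ max R' ‖y‖
    · exact hxm (by simpa using hw)
    · push Not at hw
      have := hR' w ((le_max_left _ _).trans hw.le)
      have h2 := (abs_le.1 this).2
      have h3 := mul_nonneg hC (hf0 w)
      have : ψ w ≥ ψ y / 2 := by simp only [hψ] at *; linarith
      linarith
  have hxR : R ≤ ‖x‖ := by
    by_contra hlt
    push Not at hlt
    have := hR x hlt.le
    simp only [hψ] at hxy hψy
    linarith
  have hlm : IsLocalMin ψ x := Eventually.of_forall hglob
  have l0 := lap_nonneg_of_min hψc hlm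
  have d0 : fderiv ℝ ψ x x = 0 := by rw [hlm.fderiv_eq_zero]; simp
  rw [hψ, lap_lin hf h.c2] at l0
  rw [hψ, fderiv_lin (hf.differentiable (by norm_num) x) (h.c2.differentiable (by norm_num) x)] at d0
  have e1 := h.eq x
  have e2 := mul_nonneg_of_nonpos_of_nonpos (hL x hxR) (neg_nonpos.2 hC)
  have hneg : ψ x < 0 := by linarith
  have e3 : 0 < (V x - β) * ψ x := mul_pos_of_neg_of_neg (by linarith [hV x hxR]) hneg
  simp only [hψ] at e3
  nlinarith

lemma IsSol.neg {N : ℕ} {φ V : EN N → ℝ} {β M B : ℝ} (h : IsSol φ V β M B) : IsSol (fun y => -φ y) V β M B where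
  c2 := h.c2.neg
  bdd y := by rw [abs_neg]; exact h.bdd y
  Vc := h.Vc
  V0 := h.V0
  VM := h.VM
  hβ := h.hβ
  eq y := by
    have e : (fun y => -φ y) = fun y => (-1) * φ y + 0 * φ y := by ext; ring
    rw [e, lap_lin h.c2 h.c2, fderiv_lin (h.c2.differentiable (by norm_num) y) (h.c2.differentiable (by norm_num) y), h.eq]
    ring

lemma IsSol.compare {N : ℕ} {φ V : EN N → ℝ} {β M B : ℝ} (h : IsSol φ V β M B)
    (h0 : ∀ ε > 0, ∃ R, ∀ y, R ≤ ‖y‖ → |φ y| ≤ ε) {f : EN N → ℝ} (hf : ContDiff ℝ 2 f)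
    (hf0 : ∀ y, 0 < f y) (R : ℝ)
    (hV : ∀ y, R ≤ ‖y‖ → V y < β)
    (hL : ∀ y, R ≤ ‖y‖ → lap f y - 1/2 * fderiv ℝ f y y - β * f y + V y * f y ≤ 0) :
    ∃ C, 0 ≤ C ∧ ∀ y, |φ y| ≤ C * f y := by
  have hc : Continuous (fun y => |φ y| / f y) := 
    (h.c2.continuous.abs).div hf.continuous (fun y => (hf0 y).ne')
  obtain ⟨C0, hC0⟩ := (isCompact_closedBall (0:EN N) R).bddAbove_image hc.continuousOn
  set C := max C0 0
  have hR : ∀ y, ‖y‖ ≤ R → |φ y| ≤ C * f y := by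
    intro y hy
    have : |φ y| / f y ≤ C0 := hC0 (mem_image_of_mem _ (by simpa using hy))
    rw [div_le_iff₀ (hf0 y)] at this
    exact this.trans (mul_le_mul_of_nonneg_right (le_max_left _ _) (hf0 y).le)
  refine ⟨C, le_max_right _ _, fun y => abs_le.2 ⟨?_, ?_⟩⟩
  · have := h.neg.compare1 (by simpa using h0) hf (fun y => (hf0 y).le) (le_max_right C0 0)
      (fun y hy => (neg_le_abs _).trans (hR y hy)) hV hL y
    linarith
  · exact h.compare1 h0 hf (fun y => (hf0 y).le) (le_max_right _ _)
      (fun y hy => (le_abs_self _).trans (hR y hy)) hV hL y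

lemma Q_pos {N : ℕ} (y : EN N) : 0 < 1 + ‖y‖^2 := by positivity

lemma contDiff_Q {N : ℕ} (a : ℝ) {n : WithTop ℕ∞} : ContDiff ℝ n (fun y : EN N => (1 + ‖y‖^2)^a) :=
  (contDiff_const.add (contDiff_id.norm_sq ℝ)).rpow_const_of_ne (fun y => (Q_pos y).ne')

lemma fderiv_Q {N : ℕ} (a : ℝ) (y v : EN N) :
    fderiv ℝ (fun y : EN N => (1 + ‖y‖^2)^a) y v = 2 * a * (1 + ‖y‖^2)^(a-1) * inner ℝ y v := by
  have h1 : HasFDerivAt (fun y : EN N => 1 + ‖y‖^2) (2 • (innerSL ℝ y)) y := by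
    simpa using ((hasFDerivAt_id y).norm_sq).const_add (1:ℝ)
  have h2 := h1.rpow_const (p := a) (Or.inl (Q_pos y).ne')
  rw [h2.fderiv]
  simp
  ring

lemma lap_Q {N : ℕ} (a : ℝ) (y : EN N) :
    lap (fun y : EN N => (1 + ‖y‖^2)^a) y =
      2 * a * N * (1 + ‖y‖^2)^(a-1) + 4 * a * (a-1) * ‖y‖^2 * (1 + ‖y‖^2)^(a-2) := by
  rw [lap_eq_dv (contDiff_Q a)]
  have e : gradient (fun y : EN N => (1 + ‖y‖^2)^a) = fun y => (1 + ‖y‖^2)^(a-1) • ((0:EN N) + (2 * a) • y) := by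
    ext1 z
    apply ext_inner_right ℝ
    intro v
    rw [inner_gradient_left, fderiv_Q, zero_add, smul_smul, inner_smul_left]
    simp only [conj_trivial]; ring
  rw [e, dv_smul ((contDiff_Q (a-1) (n := 1)).differentiable (by norm_num) y) (by fun_prop), dv_affine, fderiv_Q,
    zero_add, inner_smul_right, real_inner_self_eq_norm_sq]
  ring_nf

lemma L_Q {N : ℕ} (a β : ℝ) (y : EN N) :
    lap (fun y : EN N => (1 + ‖y‖^2)^(-a)) y - 1/2 * fderiv ℝ (fun y : EN N => (1 + ‖y‖^2)^(-a)) y y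
      - β * (1 + ‖y‖^2)^(-a) = (1 + ‖y‖^2)^(-a) * (-(2 * a * N * (1+‖y‖^2)⁻¹) + 
      4 * a * (a+1) * (1 - (1+‖y‖^2)⁻¹) * (1+‖y‖^2)⁻¹ + a * (1 - (1+‖y‖^2)⁻¹) - β) := by
  rw [lap_Q, fderiv_Q, real_inner_self_eq_norm_sq]
  have hQ := Q_pos y
  have e1 : (1 + ‖y‖^2)^(-a-1) = (1 + ‖y‖^2)^(-a) * (1+‖y‖^2)⁻¹ := by
    rw [Real.rpow_sub_one hQ.ne', div_eq_mul_inv]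
  have e2 : (1 + ‖y‖^2)^(-a-2) = (1 + ‖y‖^2)^(-a) * ((1+‖y‖^2)⁻¹)^2 := by
    rw [show -a-2 = -a-1-1 by ring, Real.rpow_sub_one hQ.ne', e1, div_eq_mul_inv]; ring
  rw [e1, e2]
  generalize (1 + ‖y‖^2)^(-a) = X
  have : ‖y‖^2 = (1 + ‖y‖^2) - 1 := by ring
  generalize ‖y‖^2 = n at *
  field_simp
  ring

lemma IsSol.barrier1 {N : ℕ} {φ V : EN N → ℝ} {β M B : ℝ} (h : IsSol φ V β M B)
    (hV : ∀ y, V y = |φ y|^(1/β))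
    (h0 : ∀ ε > 0, ∃ R, ∀ y, R ≤ ‖y‖ → |φ y| ≤ ε) :
    ∃ C, 0 ≤ C ∧ ∀ y, |φ y| ≤ C * (1 + ‖y‖^2)^(-(β/2)) := by
  have hβ := h.hβ
  obtain ⟨R, hR⟩ := h0 ((β/8)^β) (by positivity)
  have hVs : ∀ y, R ≤ ‖y‖ → V y ≤ β/8 := by
    intro y hy
    rw [hV]
    calc |φ y|^(1/β) ≤ ((β/8)^β)^(1/β) := Real.rpow_le_rpow (abs_nonneg _) (hR y hy) (by positivity)
      _ = β/8 := by rw [← Real.rpow_mul (by positivity), mul_one_div_cancel hβ.ne', Real.rpow_one]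
  refine h.compare h0 (contDiff_Q _) (fun y => Real.rpow_pos_of_pos (Q_pos y) _) (max R (16*(β/2+1))) ?_ ?_
  · intro y hy
    have := hVs y ((le_max_left _ _).trans hy)
    linarith
  · intro y hy
    have v1 := hVs y ((le_max_left _ _).trans hy)
    have y1 := (le_max_right _ _).trans hy
    have hX : 0 < (1 + ‖y‖^2)^(-(β/2)) := Real.rpow_pos_of_pos (Q_pos y) _
    rw [L_Q]
    have hu : (1+‖y‖^2)⁻¹ * (16*(β/2+1)) ≤ 1 := by
      rw [inv_mul_le_iff₀ (Q_pos y)]; nlinarith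
    have hu0 : 0 < (1+‖y‖^2)⁻¹ := inv_pos.2 (Q_pos y)
    generalize (1+‖y‖^2)⁻¹ = u at *
    generalize (1 + ‖y‖^2)^(-(β/2)) = X at *
    have key : -(2 * (β/2) * N * u) + 4 * (β/2) * (β/2+1) * (1 - u) * u + (β/2) * (1 - u) - β + V y ≤ 0 := by
      have n1 : 0 ≤ 2 * (β/2) * N * u := by positivity
      have n2 : 4 * (β/2) * (β/2+1) * (1 - u) * u ≤ (β/8) * (1 - 0) := by
        have : 4 * (β/2) * (β/2+1) * (1 - u) * u = β/8 * (u * (16 * (β/2+1))) * (1 - u) := by ring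
        rw [this]
        have q1 : u ≤ 1 := by nlinarith
        have q2 : β/8 * (u * (16 * (β/2+1))) ≤ β/8 := mul_le_of_le_one_right (by positivity) hu
        refine mul_le_mul q2 (by linarith) (by linarith) (by positivity)
      nlinarith
    nlinarith

set_option maxHeartbeats 1000000 in
lemma IsSol.barrier2 {N : ℕ} {φ V : EN N → ℝ} {β M B : ℝ} (h : IsSol φ V β M B)
    (hV : ∀ y, V y = |φ y|^(1/β))
    (h0 : ∀ ε > 0, ∃ R, ∀ y, R ≤ ‖y‖ → |φ y| ≤ ε) :
    ∃ C, 0 ≤ C ∧ ∀ y, |φ y| ≤ C * (1 + ‖y‖^2)^(-β) := by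
  have hβ := h.hβ
  obtain ⟨C, hC, hCb⟩ := h.barrier1 hV h0
  set C' := C^(1/β) with hC'
  have hC'0 : 0 ≤ C' := by positivity
  have hVs : ∀ y, V y ≤ C' * (1+‖y‖^2)^(-(1/2:ℝ)) := by
    intro y
    rw [hV]
    calc |φ y|^(1/β) ≤ (C * (1 + ‖y‖^2)^(-(β/2)))^(1/β) := Real.rpow_le_rpow (abs_nonneg _) (hCb y) (by positivity)
      _ = _ := by
        rw [Real.mul_rpow hC (by positivity), ← Real.rpow_mul (by positivity)]
        congr 2
        field_simp
  set b := β + 1/4 with hb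
  set f : EN N → ℝ := fun y => 1 * (1 + ‖y‖^2)^(-β) + (-1/2) * (1+‖y‖^2)^(-b) with hf
  have hfc : ContDiff ℝ 2 f := (contDiff_const.mul (contDiff_Q _)).add (contDiff_const.mul (contDiff_Q _))
  have es : ∀ y : EN N, (1+‖y‖^2)^(-b) = (1 + ‖y‖^2)^(-β) * (1+‖y‖^2)^(-(1/4:ℝ)) := by
    intro y
    rw [← Real.rpow_add (Q_pos y)]; congr 1; rw [hb]; ring
  have s1 : ∀ y : EN N, (1+‖y‖^2)^(-(1/4:ℝ)) ≤ 1 := by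
    intro y
    apply Real.rpow_le_one_of_one_le_of_nonpos <;> [nlinarith [sq_nonneg ‖y‖]; norm_num]
  have hf0 : ∀ y, 1/2 * (1 + ‖y‖^2)^(-β) ≤ f y := by
    intro y
    simp only [hf]
    rw [es]
    have := mul_le_of_le_one_right (Real.rpow_pos_of_pos (Q_pos y) (-β)).le (s1 y)
    linarith
  set T := 4*β*(β+1) + C' + b + 2*b*N + C'/(8*β) + 1 with hT
  have hb0 : 0 < b := by positivity
  have hT0 : 0 < T := by positivity
  have hsm : ∀ y : EN N, (8*T)^2 ≤ ‖y‖ → (1+‖y‖^2)^(-(1/4:ℝ)) * (8 * T) ≤ 1 := by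
    intro y hy
    rw [Real.rpow_neg (Q_pos y).le, inv_mul_le_iff₀ (by positivity), mul_one]
    have : 8 * T = ((8*T)^(4:ℝ))^(1/4:ℝ) := by
      rw [← Real.rpow_mul (by positivity)]; norm_num
    rw [this]
    apply Real.rpow_le_rpow (by positivity) _ (by norm_num)
    rw [show (4:ℝ) = ((4:ℕ):ℝ) by norm_num, Real.rpow_natCast]
    have : 0 ≤ (8*T)^2 := by positivity
    nlinarith
  have eu : ∀ y : EN N, (1+‖y‖^2)⁻¹ = ((1+‖y‖^2)^(-(1/4:ℝ)))^4 := by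
    intro y
    have hQ := Q_pos y
    generalize 1 + ‖y‖^2 = Q at *
    rw [← Real.rpow_natCast, ← Real.rpow_mul hQ.le, ← Real.rpow_neg_one]; norm_num
  have eh : ∀ y : EN N, (1+‖y‖^2)^(-(1/2:ℝ)) = ((1+‖y‖^2)^(-(1/4:ℝ)))^2 := by
    intro y
    have hQ := Q_pos y
    generalize 1 + ‖y‖^2 = Q at *
    rw [← Real.rpow_natCast, ← Real.rpow_mul hQ.le]; norm_num
  obtain ⟨C2, hC2, hb2⟩ := h.compare h0 hfc (fun y => lt_of_lt_of_le (by have := Q_pos y; positivity) (hf0 y)) ((8*T)^2) (by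
    intro y hy
    have v1 := hVs y
    rw [eh] at v1
    have v2 := hsm y hy
    have v3 := s1 y
    have v4 : 0 < (1+‖y‖^2)^(-(1/4:ℝ)) := Real.rpow_pos_of_pos (Q_pos y) _
    generalize (1+‖y‖^2)^(-(1/4:ℝ)) = s at *
    have w1 : C' ≤ 8 * β * T := by
      have : 8 * β * T = 8*β*(4*β*(β+1) + C' + b + 2*b*N + 1) + C' := by rw [hT]; field_simp; ring
      rw [this]
      have : 0 ≤ 8*β*(4*β*(β+1) + C' + b + 2*b*N + 1) := by positivity
      linarith
    have w2 : C' * s^2 ≤ β * (s * (8*T)) * s := by nlinarith [sq_nonneg s]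
    have w3 : β * (s * (8*T)) * s ≤ β * 1 * s := by gcongr
    have w4 : s < 1 := by
      have : 1 ≤ T := by
        rw [hT]
        have : 0 ≤ 4*β*(β+1) + C' + b + 2*b*N + C'/(8*β) := by positivity
        linarith
      nlinarith
    nlinarith) (by
    intro y hy
    have l1 := L_Q (N := N) β β y
    have l2 := L_Q (N := N) b β y
    rw [hf, lap_lin (contDiff_Q _) (contDiff_Q _), fderiv_lin ((contDiff_Q _ (n := 1)).differentiable (by norm_num) y) ((contDiff_Q _ (n := 1)).differentiable (by norm_num) y)]
    have v1 := hVs y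
    have v0 := h.V0 y
    rw [eh] at v1
    have v2 := hsm y hy
    have v3 := s1 y
    have v4 : 0 < (1+‖y‖^2)^(-(1/4:ℝ)) := Real.rpow_pos_of_pos (Q_pos y) _
    have v5 : 0 < (1+‖y‖^2)^(-β) := Real.rpow_pos_of_pos (Q_pos y) _
    rw [eu] at l1 l2
    have e3 := es y
    generalize (1+‖y‖^2)^(-(1/4:ℝ)) = s at *
    have key : ∀ X : ℝ, 0 < X → 
       X * (-(2 * β * N * s^4) + 4 * β * (β+1) * (1 - s^4) * s^4 + β * (1 - s^4) - β + V y)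
       - 1/2 * (X * s * (-(2 * b * N * s^4) + 4 * b * (b+1) * (1 - s^4) * s^4 + b * (1 - s^4) - β + V y)) ≤ 0 := by
      intro X hX
      have s4 : s^4 ≤ 1 := pow_le_one₀ v4.le v3
      have s40 : 0 < s^4 := by positivity
      have k1 : -(2 * β * N * s^4) + 4 * β * (β+1) * (1 - s^4) * s^4 + β * (1 - s^4) - β + V y ≤ 4*β*(β+1)*s^4 + C' * s^2 := by
        have n1 : 0 ≤ 2 * β * N * s^4 := by positivity
        have n2 : 0 ≤ β * s^4 := by positivity
        have n3 : 0 ≤ 4 * β * (β+1) * s^4 * s^4 := by positivity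
        linarith
      have k2 : 1/4 - (b + 2 * b * N) * s^4 ≤ -(2 * b * N * s^4) + 4 * b * (b+1) * (1 - s^4) * s^4 + b * (1 - s^4) - β + V y := by
        have n1 : 0 ≤ 4 * b * (b+1) * (1 - s^4) * s^4 := by
          have : 0 ≤ 1 - s^4 := by linarith
          positivity
        have : b - β = 1/4 := by rw [hb]; ring
        linarith
      have k3 : s * (4*β*(β+1) + C' + b + 2*b*N) ≤ 1/8 := by
        have : 0 ≤ s * (C'/(8*β) + 1) := by positivity
        have : s * T = s * (4*β*(β+1) + C' + b + 2*b*N) + s * (C'/(8*β) + 1) := by rw [hT]; ring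
        linarith
      have k4 : 4*β*(β+1)*s^4 + C' * s^2 - 1/2 * s * (1/4 - (b + 2 * b * N) * s^4) ≤ 0 := by
        have p1 : s^4 ≤ s^2 := pow_le_pow_of_le_one v4.le v3 (by norm_num)
        have p2 : 4*β*(β+1)*s^4 ≤ 4*β*(β+1)*s^2 := by gcongr
        have p3 : (b + 2 * b * N) * (s^4) * s ≤ (b + 2*b*N) * s^1 * s := by
          gcongr (b + 2*b*N) * ?_ * s
          exact pow_le_pow_of_le_one v4.le v3 (by norm_num)
        have p4 : 0 ≤ (b + 2*b*N) * s * s := by positivity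
        have p5 := mul_le_mul_of_nonneg_left k3 v4.le
        linarith
      have k5 : s * (1/4 - (b + 2 * b * N) * s^4) ≤ s * (-(2 * b * N * s^4) + 4 * b * (b+1) * (1 - s^4) * s^4 + b * (1 - s^4) - β + V y) := mul_le_mul_of_nonneg_left k2 v4.le
      have k6 : (-(2 * β * N * s^4) + 4 * β * (β+1) * (1 - s^4) * s^4 + β * (1 - s^4) - β + V y)
       - 1/2 * (s * (-(2 * b * N * s^4) + 4 * b * (b+1) * (1 - s^4) * s^4 + b * (1 - s^4) - β + V y)) ≤ 0 := by linarith
      have k7 := mul_nonpos_of_nonneg_of_nonpos hX.le k6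
      linarith
    have := key _ v5
    beta_reduce
    rw [e3] at l2 ⊢
    linarith)
  refine ⟨C2, hC2, fun y => (hb2 y).trans (mul_le_mul_of_nonneg_left ?_ hC2)⟩
  have : 0 < (1+‖y‖^2)^(-b) := Real.rpow_pos_of_pos (Q_pos y) _
  simp only [hf]
  linarith


/-- polynomially bounded functions of `(y, a)` with weight `(1 + |∇φ|)^d` -/
def Gr {N : ℕ} (φ : EN N → ℝ) (d : ℕ) (F : EN N × EN N → ℝ) : Prop :=
  Continuous F ∧ ∃ (C : ℝ) (k : ℕ), 0 ≤ C ∧ ∀ x, |F x| ≤ C * ((1 + ‖x.1‖) * (1 + ‖x.2‖))^k * (1 + ‖gradient φ x.1‖)^d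

lemma base_one {N : ℕ} (x : EN N × EN N) : 1 ≤ (1 + ‖x.1‖) * (1 + ‖x.2‖) := by
  nlinarith [norm_nonneg x.1, norm_nonneg x.2, mul_nonneg (norm_nonneg x.1) (norm_nonneg x.2)]

lemma Gr.mul {N : ℕ} {φ : EN N → ℝ} {d e : ℕ} {F G : EN N × EN N → ℝ} (hF : Gr φ d F) (hG : Gr φ e G) :
    Gr φ (d + e) (fun x => F x * G x) := by
  obtain ⟨hFc, C, k, hC, h⟩ := hF
  obtain ⟨hGc, C', k', hC', h'⟩ := hG
  refine ⟨hFc.mul hGc, C * C', k + k', by positivity, fun x => ?_⟩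
  rw [abs_mul]
  refine (mul_le_mul (h x) (h' x) (abs_nonneg _) (by positivity)).trans (le_of_eq ?_)
  rw [pow_add, pow_add]; ring

lemma Gr.mono {N : ℕ} {φ : EN N → ℝ} {d e : ℕ} {F : EN N × EN N → ℝ} (hF : Gr φ d F) (hde : d ≤ e) :
    Gr φ e F := by
  obtain ⟨hFc, C, k, hC, h⟩ := hF
  refine ⟨hFc, C, k, hC, fun x => (h x).trans ?_⟩
  apply mul_le_mul_of_nonneg_left _ (by positivity)
  exact pow_le_pow_right₀ (by linarith [norm_nonneg (gradient φ x.1)]) hde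

lemma Gr.add {N : ℕ} {φ : EN N → ℝ} {d : ℕ} {F G : EN N × EN N → ℝ} (hF : Gr φ d F) (hG : Gr φ d G) :
    Gr φ d (fun x => F x + G x) := by
  obtain ⟨hFc, C, k, hC, h⟩ := hF
  obtain ⟨hGc, C', k', hC', h'⟩ := hG
  refine ⟨hFc.add hGc, C + C', k + k', by positivity, fun x => ?_⟩
  have b := base_one x
  have p1 := pow_le_pow_right₀ b (Nat.le_add_right k k')
  have p2 := pow_le_pow_right₀ b (Nat.le_add_left k' k)
  calc |F x + G x| ≤ |F x| + |G x| := abs_add_le _ _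
    _ ≤ C * ((1 + ‖x.1‖) * (1 + ‖x.2‖))^k * (1 + ‖gradient φ x.1‖)^d + C' * ((1 + ‖x.1‖) * (1 + ‖x.2‖))^k' * (1 + ‖gradient φ x.1‖)^d := add_le_add (h x) (h' x)
    _ ≤ C * ((1 + ‖x.1‖) * (1 + ‖x.2‖))^(k+k') * (1 + ‖gradient φ x.1‖)^d + C' * ((1 + ‖x.1‖) * (1 + ‖x.2‖))^(k+k') * (1 + ‖gradient φ x.1‖)^d := by
        apply add_le_add <;> apply mul_le_mul_of_nonneg_right _ (by positivity) <;> apply mul_le_mul_of_nonneg_left _ (by positivity)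
        · exact p1
        · exact p2
    _ = _ := by ring

lemma Gr.const {N : ℕ} {φ : EN N → ℝ} (c : ℝ) : Gr φ 0 (fun _ => c) :=
  ⟨continuous_const, |c|, 0, abs_nonneg _, fun x => by simp⟩

lemma Gr.cmul {N : ℕ} {φ : EN N → ℝ} {d : ℕ} {F : EN N × EN N → ℝ} (hF : Gr φ d F) (c : ℝ) :
    Gr φ d (fun x => c * F x) := by
  have := (Gr.const (φ := φ) c).mul hF
  rwa [zero_add] at this

lemma Gr.of_le {N : ℕ} {φ : EN N → ℝ} {F : EN N × EN N → ℝ} (hF : Continuous F) (C : ℝ) (k : ℕ)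
    (h : ∀ x, |F x| ≤ C * ((1 + ‖x.1‖) * (1 + ‖x.2‖))^k) : Gr φ 0 F := by
  refine ⟨hF, C, k, ?_, fun x => by simpa using h x⟩
  have := (abs_nonneg _).trans (h 0)
  simpa using this

lemma Gr.inner12 {N : ℕ} {φ : EN N → ℝ} : Gr φ 0 (fun x => inner ℝ x.1 x.2) := by
  refine Gr.of_le (by fun_prop) 1 1 fun x => (abs_real_inner_le_norm _ _).trans ?_
  nlinarith [norm_nonneg x.1, norm_nonneg x.2]

lemma Gr.inner22 {N : ℕ} {φ : EN N → ℝ} : Gr φ 0 (fun x => inner ℝ x.2 x.2) := by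
  refine Gr.of_le (by fun_prop) 1 2 fun x => (abs_real_inner_le_norm _ _).trans ?_
  have h1 : ‖x.2‖ ≤ (1 + ‖x.1‖) * (1 + ‖x.2‖) := by
    nlinarith [norm_nonneg x.1, norm_nonneg x.2, mul_nonneg (norm_nonneg x.1) (norm_nonneg x.2)]
  rw [one_mul, sq]
  exact mul_le_mul h1 h1 (norm_nonneg _) (by positivity)

lemma Gr.zin {N : ℕ} {φ : EN N → ℝ} (ρ : ℝ) : Gr φ 0 (fun x => inner ℝ (x.1 - ρ • x.2) x.2) := by
  have := (Gr.inner12 (φ := φ)).add ((Gr.inner22 (φ := φ)).cmul (-ρ))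
  convert this using 2 with x
  rw [inner_sub_left, inner_smul_left]; simp; ring

lemma Gr.fst {N : ℕ} {φ f : EN N → ℝ} (hf : Continuous f) (C : ℝ) (h : ∀ y, |f y| ≤ C) : Gr φ 0 (fun x => f x.1) :=
  Gr.of_le (by fun_prop) C 0 fun x => by simpa using h x.1

lemma Gr.p {N : ℕ} {φ : EN N → ℝ} (h : ContDiff ℝ 2 φ) : Gr φ 1 (fun x => fderiv ℝ φ x.1 x.2) := by
  have hg := continuous_gradient (h.of_le (by norm_num : (1:WithTop ℕ∞) ≤ 2))
  have e : (fun x : EN N × EN N => fderiv ℝ φ x.1 x.2) = fun x => inner ℝ (gradient φ x.1) x.2 := by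
    ext x; rw [inner_gradient_left]
  refine ⟨by rw [e]; fun_prop, 1, 1, by norm_num, fun x => ?_⟩
  beta_reduce
  rw [← inner_gradient_left]
  refine (abs_real_inner_le_norm _ _).trans ?_
  rw [one_mul, pow_one, pow_one, mul_comm]
  apply mul_le_mul _ (by linarith) (norm_nonneg _) (by positivity)
  nlinarith [norm_nonneg x.1, norm_nonneg x.2, mul_nonneg (norm_nonneg x.1) (norm_nonneg x.2)]

lemma Gr.gs {N : ℕ} {φ : EN N → ℝ} (h : ContDiff ℝ 2 φ) : Gr φ 2 (fun x => ‖gradient φ x.1‖^2) := by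
  have hg := continuous_gradsq h
  refine ⟨hg.comp continuous_fst, 1, 0, by norm_num, fun x => ?_⟩
  rw [abs_of_nonneg (by positivity)]
  have := norm_nonneg (gradient φ x.1)
  simp only [pow_zero, one_mul]
  gcongr
  linarith

/-- the averaging density -/
def mm {N : ℕ} (i0 : Fin N) (a : EN N) : ℝ := expNegInvGlue (a i0 - 1) * Real.exp (-‖a‖^2)

lemma glue_le_one (x : ℝ) : expNegInvGlue x ≤ 1 := by
  unfold expNegInvGlue
  split_ifs with h
  · norm_num
  · apply Real.exp_le_one_iff.2
    push Not at h
    have := inv_pos.2 h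
    linarith

lemma mm_nonneg {N : ℕ} (i0 : Fin N) (a : EN N) : 0 ≤ mm i0 a :=
  mul_nonneg (expNegInvGlue.nonneg _) (Real.exp_pos _).le

lemma mm_le {N : ℕ} (i0 : Fin N) (a : EN N) : mm i0 a ≤ Real.exp (-‖a‖^2) :=
  mul_le_of_le_one_left (Real.exp_pos _).le (glue_le_one _)

lemma mm_cont {N : ℕ} (i0 : Fin N) : Continuous (mm i0) := by
  unfold mm
  have : Continuous expNegInvGlue := (expNegInvGlue.contDiff (n := 0)).continuous
  fun_prop

def wt {N : ℕ} (i0 : Fin N) (ρ : ℝ) (x : EN N × EN N) : ℝ :=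
  Real.exp (-(1/4) * ‖x.1 - ρ • x.2‖^2) * mm i0 x.2

lemma wt_nonneg {N : ℕ} (i0 : Fin N) (ρ : ℝ) (x : EN N × EN N) : 0 ≤ wt i0 ρ x :=
  mul_nonneg (Real.exp_pos _).le (mm_nonneg _ _)

lemma wt_cont {N : ℕ} (i0 : Fin N) (ρ : ℝ) : Continuous (wt i0 ρ) := by
  unfold wt
  have := mm_cont i0
  fun_prop

lemma gk_le {N : ℕ} {ρ ρ1 : ℝ} (hρ : |ρ| ≤ ρ1) (x : EN N × EN N) :
    Real.exp (-(1/4) * ‖x.1 - ρ • x.2‖^2) * Real.exp (-‖x.2‖^2) ≤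
      Real.exp (-(1/(8*(1+ρ1^2))) * ‖x.1‖^2) * Real.exp (-(1/2) * ‖x.2‖^2) := by
  rw [← Real.exp_add, ← Real.exp_add]
  apply Real.exp_le_exp.2
  set ε := 1/(8*(1+ρ1^2)) with hε
  have he : ε * (1 + ρ1^2) = 1/8 := by rw [hε]; field_simp
  have he0 : 0 < ε := by positivity
  have h1 : ‖x.1‖ ≤ ‖x.1 - ρ • x.2‖ + ρ1 * ‖x.2‖ := by
    have := norm_add_le (x.1 - ρ • x.2) (ρ • x.2)
    rw [sub_add_cancel, norm_smul, Real.norm_eq_abs] at this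
    have h2 := mul_le_mul_of_nonneg_right hρ (norm_nonneg x.2)
    linarith
  have h2 : ‖x.1‖^2 ≤ 2 * ‖x.1 - ρ • x.2‖^2 + 2 * (ρ1^2 * ‖x.2‖^2) := by
    have := norm_nonneg x.1
    nlinarith [sq_nonneg (‖x.1 - ρ • x.2‖ - ρ1 * ‖x.2‖)]
  have h3 : ε * ‖x.1‖^2 ≤ ε * (2 * ‖x.1 - ρ • x.2‖^2 + 2 * (ρ1^2 * ‖x.2‖^2)) := mul_le_mul_of_nonneg_left h2 he0.le
  have h4 : ε * ρ1^2 ≤ 1/8 := by nlinarith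
  have h5 : ε ≤ 1/8 := by nlinarith [mul_nonneg he0.le (sq_nonneg ρ1)]
  have h6 : ε * ‖x.1 - ρ • x.2‖^2 ≤ 1/8 * ‖x.1 - ρ • x.2‖^2 := mul_le_mul_of_nonneg_right h5 (by positivity)
  have h7 : ε * ρ1^2 * ‖x.2‖^2 ≤ 1/8 * ‖x.2‖^2 := mul_le_mul_of_nonneg_right h4 (by positivity)
  nlinarith [sq_nonneg ‖x.2‖]

lemma wt_le {N : ℕ} (i0 : Fin N) {ρ ρ1 : ℝ} (hρ : |ρ| ≤ ρ1) (x : EN N × EN N) :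
    wt i0 ρ x ≤ Real.exp (-(1/(8*(1+ρ1^2))) * ‖x.1‖^2) * Real.exp (-(1/2) * ‖x.2‖^2) :=
  (mul_le_mul_of_nonneg_left (mm_le i0 x.2) (Real.exp_pos _).le).trans (gk_le hρ x)

def domf {N : ℕ} (φ : EN N → ℝ) (k : ℕ) (ρ1 : ℝ) (x : EN N × EN N) : ℝ :=
  ((1 + ‖x.1‖)^k * (1 + ‖gradient φ x.1‖^2) * Real.exp (-(1/(8*(1+ρ1^2))) * ‖x.1‖^2)) *
    ((1 + ‖x.2‖)^k * Real.exp (-(1/2) * ‖x.2‖^2))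

lemma IsSol.domf_int {N : ℕ} {φ V : EN N → ℝ} {β M B : ℝ} (h : IsSol φ V β M B) (k : ℕ) (ρ1 : ℝ) :
    Integrable (domf φ k ρ1) :=
  Integrable.mul_prod (h.dom_integrable k (by positivity)) (integrable_poly_gauss k (by norm_num))

lemma dom_bd {N : ℕ} {φ : EN N → ℝ} {d : ℕ} (hd : d ≤ 2) {C : ℝ} (hC : 0 ≤ C) {k : ℕ} {ρ1 f w : ℝ} {x : EN N × EN N}
    (hf : |f| ≤ C * ((1 + ‖x.1‖) * (1 + ‖x.2‖))^k * (1 + ‖gradient φ x.1‖)^d) (hw0 : 0 ≤ w)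
    (hw : w ≤ Real.exp (-(1/(8*(1+ρ1^2))) * ‖x.1‖^2) * Real.exp (-(1/2) * ‖x.2‖^2)) :
    ‖f * w‖ ≤ (2 * C) * domf φ k ρ1 x := by
  have g0 := norm_nonneg (gradient φ x.1)
  have h1 : (1 + ‖gradient φ x.1‖)^d ≤ 2 * (1 + ‖gradient φ x.1‖^2) := by
    calc _ ≤ (1 + ‖gradient φ x.1‖)^2 := pow_le_pow_right₀ (by linarith) hd
      _ ≤ _ := by nlinarith [sq_nonneg (1 - ‖gradient φ x.1‖)]
  rw [norm_mul, Real.norm_eq_abs, Real.norm_eq_abs, abs_of_nonneg hw0]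
  have h2 : |f| ≤ C * ((1 + ‖x.1‖) * (1 + ‖x.2‖))^k * (2 * (1 + ‖gradient φ x.1‖^2)) :=
    hf.trans (mul_le_mul_of_nonneg_left h1 (by positivity))
  refine (mul_le_mul h2 hw hw0 (by positivity)).trans (le_of_eq ?_)
  unfold domf
  rw [mul_pow]; ring

lemma IsSol.int_gen {N : ℕ} {φ V : EN N → ℝ} {β M B : ℝ} (h : IsSol φ V β M B) {d : ℕ} (hd : d ≤ 2)
    {F : EN N × EN N → ℝ} (hF : Gr φ d F) {w : EN N × EN N → ℝ} (hw : Continuous w) (ρ1 : ℝ) (hw0 : ∀ x, 0 ≤ w x)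
    (hwl : ∀ x, w x ≤ Real.exp (-(1/(8*(1+ρ1^2))) * ‖x.1‖^2) * Real.exp (-(1/2) * ‖x.2‖^2)) :
    Integrable (fun x => F x * w x) := by
  obtain ⟨hFc, C, k, hC, hb⟩ := hF
  exact Integrable.mono' ((h.domf_int k ρ1).const_mul (2 * C)) (hFc.mul hw).aestronglyMeasurable
    (Eventually.of_forall fun x => dom_bd hd hC (hb x) (hw0 x) (hwl x))

lemma IsSol.int {N : ℕ} {φ V : EN N → ℝ} {β M B : ℝ} (h : IsSol φ V β M B) (i0 : Fin N) (ρ : ℝ) {d : ℕ} (hd : d ≤ 2)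
    {F : EN N × EN N → ℝ} (hF : Gr φ d F) : Integrable (fun x => F x * wt i0 ρ x) :=
  h.int_gen hd hF (wt_cont i0 ρ) |ρ| (wt_nonneg i0 ρ) (wt_le i0 le_rfl)

lemma wt_deriv {N : ℕ} (i0 : Fin N) (ρ : ℝ) (x : EN N × EN N) :
    HasDerivAt (fun ρ => wt i0 ρ x) ((1/2 * inner ℝ (x.1 - ρ • x.2) x.2) * wt i0 ρ x) ρ := by
  have h1 : HasDerivAt (fun c : ℝ => x.1 - c • x.2) (-x.2) ρ := by
    simpa using ((hasDerivAt_id ρ).smul_const x.2).const_sub x.1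
  have h2 := ((h1.norm_sq.const_mul (-(1/4:ℝ))).exp).mul_const (mm i0 x.2)
  unfold wt
  refine h2.congr_deriv ?_
  rw [inner_neg_right]
  ring

/-- derivative of weighted integrals in `ρ` -/
lemma IsSol.deriv_int {N : ℕ} {φ V : EN N → ℝ} {β M B : ℝ} (h : IsSol φ V β M B) (i0 : Fin N) (ρ : ℝ) {d : ℕ} (hd : d ≤ 2)
    {F : EN N × EN N → ℝ} (hF : Gr φ d F) :
    HasDerivAt (fun ρ => ∫ x, F x * wt i0 ρ x)
      (∫ x, (F x * (1/2 * inner ℝ (x.1 - ρ • x.2) x.2)) * wt i0 ρ x) ρ := by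
  set ρ1 := |ρ| + 1 with hρ1
  have hs : ∀ r ∈ ball ρ 1, |r| ≤ ρ1 := by
    intro r hr
    rw [mem_ball, Real.dist_eq] at hr
    have := abs_sub_abs_le_abs_sub r ρ
    linarith
  obtain ⟨C, k, hC, hb⟩ : ∃ (C : ℝ) (k : ℕ), 0 ≤ C ∧ ∀ r ∈ ball ρ 1, ∀ x, 
      |F x * (1/2 * inner ℝ (x.1 - r • x.2) x.2)| ≤ C * ((1 + ‖x.1‖) * (1 + ‖x.2‖))^k * (1 + ‖gradient φ x.1‖)^d := by
    obtain ⟨hFc, C, k, hC, hb⟩ := hF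
    refine ⟨C * (1 + ρ1), k + 2, by positivity, fun r hr x => ?_⟩
    have b1 := base_one x
    have n1 := norm_nonneg x.1
    have n2 := norm_nonneg x.2
    have t1 : |1/2 * (inner ℝ (x.1 - r • x.2) x.2 : ℝ)| ≤ (1 + ρ1) * ((1 + ‖x.1‖) * (1 + ‖x.2‖))^2 := by
      rw [abs_mul, abs_of_pos (by norm_num : (0:ℝ) < 1/2)]
      have q1 := abs_real_inner_le_norm (x.1 - r • x.2) x.2
      have q2 : ‖x.1 - r • x.2‖ ≤ (1 + ρ1) * ((1 + ‖x.1‖) * (1 + ‖x.2‖)) := by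
        refine (norm_sub_le _ _).trans ?_
        rw [norm_smul, Real.norm_eq_abs]
        have q3 := mul_le_mul_of_nonneg_right (hs r hr) n2
        have q4 : ‖x.1‖ ≤ (1 + ‖x.1‖) * (1 + ‖x.2‖) := by nlinarith [mul_nonneg n1 n2]
        have q5 : ‖x.2‖ ≤ (1 + ‖x.1‖) * (1 + ‖x.2‖) := by nlinarith [mul_nonneg n1 n2]
        have q6 : ρ1 * ‖x.2‖ ≤ ρ1 * ((1 + ‖x.1‖) * (1 + ‖x.2‖)) := mul_le_mul_of_nonneg_left q5 (by positivity)
        linarith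
      have q5 : ‖x.2‖ ≤ (1 + ‖x.1‖) * (1 + ‖x.2‖) := by nlinarith [mul_nonneg n1 n2]
      have q7 := mul_le_mul q2 q5 n2 (by positivity)
      have q8 : 0 ≤ |(inner ℝ (x.1 - r • x.2) x.2 : ℝ)| := abs_nonneg _
      nlinarith
    rw [abs_mul]
    refine (mul_le_mul (hb x) t1 (abs_nonneg _) (by positivity)).trans (le_of_eq ?_)
    rw [pow_add]; ring
  have D := hasDerivAt_integral_of_dominated_loc_of_deriv_le (μ := (volume : Measure (EN N × EN N))) (𝕜 := ℝ)
    (F := fun r x => F x * wt i0 r x)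
    (F' := fun r x => (F x * (1/2 * inner ℝ (x.1 - r • x.2) x.2)) * wt i0 r x)
    (x₀ := ρ) (s := ball ρ 1)
    (bound := fun x => (2 * C) * domf φ k ρ1 x)
    (ball_mem_nhds ρ one_pos)
    (Eventually.of_forall fun r => (hF.1.mul (wt_cont i0 r)).aestronglyMeasurable)
    (h.int i0 ρ hd hF)
    (((hF.1.mul (by fun_prop)).mul (wt_cont i0 ρ)).aestronglyMeasurable)
    (Eventually.of_forall fun x r hr => dom_bd hd hC (hb r hr x) (wt_nonneg _ _ _) (wt_le i0 (hs r hr) x))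
    ((h.domf_int k ρ1).const_mul _)
    (Eventually.of_forall fun x r hr => by
      refine ((wt_deriv i0 r x).const_mul (F x)).congr_deriv ?_
      ring)
  exact D.2

/-- integration by parts in `y` -/
lemma IsSol.ibp_prod {N : ℕ} {φ V : EN N → ℝ} {β M B : ℝ} (h : IsSol φ V β M B) (i0 : Fin N) (ρ : ℝ)
    {X : EN N → EN N → EN N} (hX : ∀ a, ContDiff ℝ 1 (X a)) 
    (hXb : ∀ a, ∃ (C : ℝ) (k : ℕ), ∀ y, ‖X a y‖ ≤ C * ((1 + ‖y‖)^k * (1 + ‖gradient φ y‖^2)))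
    (hF : Gr φ 2 (fun x => dv (X x.2) x.1 - 1/2 * inner ℝ (x.1 - ρ • x.2) (X x.2 x.1))) :
    ∫ x : EN N × EN N, (dv (X x.2) x.1 - 1/2 * inner ℝ (x.1 - ρ • x.2) (X x.2 x.1)) * wt i0 ρ x = 0 := by
  have hntg := h.int i0 ρ le_rfl hF
  rw [Measure.volume_eq_prod] at hntg ⊢
  rw [integral_prod_symm _ hntg]
  rw [← integral_zero (EN N) ℝ]
  congr 1
  ext a
  unfold wt
  simp only
  simp_rw [← mul_assoc]
  rw [integral_mul_const]
  suffices ∫ y, (dv (X a) y - 1/2 * inner ℝ (y - ρ • a) (X a y)) * Real.exp (-(1/4) * ‖y - ρ • a‖^2) = 0 by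
    rw [this, zero_mul]
  set K : EN N → ℝ := fun y => Real.exp (-(1/4) * ‖y - ρ • a‖^2) with hK
  have hKc : ContDiff ℝ 1 K := contDiff_gauss _ _
  have hdv : ∀ y, dv (fun y => K y • X a y) y = (dv (X a) y - 1/2 * inner ℝ (y - ρ • a) (X a y)) * K y := by
    intro y
    have h5 : fderiv ℝ K y (X a y) = -2 * (1/4) * K y * inner ℝ (y - ρ • a) (X a y) := fderiv_gauss _ _ _ _
    rw [dv_smul (hKc.differentiable (by norm_num) y) ((hX a).differentiable (by norm_num) y), h5]
    ring
  have hKb : ∀ y, K y ≤ Real.exp (‖ρ • a‖^2/4) * Real.exp (-(1/8) * ‖y‖^2) := fun y => gauss_shift_le le_rfl _ y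
  have hcd : ContDiff ℝ 1 (fun y => K y • X a y) := hKc.smul (hX a)
  rw [← integral_congr_ae (Eventually.of_forall hdv)]
  apply integral_dv hcd
  · obtain ⟨C, k, hb⟩ := hXb a
    apply h.int_of_bound hcd.continuous (Real.exp (‖ρ • a‖^2/4) * C) k (a := 1/8) (by norm_num)
    intro y
    rw [norm_smul, Real.norm_eq_abs, abs_of_pos (Real.exp_pos _)]
    calc _ ≤ (Real.exp (‖ρ • a‖^2/4) * Real.exp (-(1/8) * ‖y‖^2)) * (C * ((1 + ‖y‖)^k * (1 + ‖gradient φ y‖^2))) :=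
          mul_le_mul (hKb y) (hb y) (norm_nonneg _) (by positivity)
      _ = _ := by ring
  · obtain ⟨-, C, k, hC, hb⟩ := hF
    apply h.int_of_bound (continuous_dv hcd) (Real.exp (‖ρ • a‖^2/4) * (2 * C * (1 + ‖a‖)^k)) k (a := 1/8) (by norm_num)
    intro y
    rw [hdv, norm_mul, Real.norm_eq_abs, Real.norm_eq_abs (K y), abs_of_pos (Real.exp_pos _), mul_comm]
    have b1 := hb (y, a)
    simp only at b1
    have b2 : (1 + ‖gradient φ y‖)^2 ≤ 2 * (1 + ‖gradient φ y‖^2) := by nlinarith [sq_nonneg (1 - ‖gradient φ y‖)]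
    have b3 := b1.trans (mul_le_mul_of_nonneg_left b2 (by positivity))
    refine (mul_le_mul (hKb y) b3 (abs_nonneg _) (by positivity)).trans (le_of_eq ?_)
    rw [mul_pow]; ring


/-- weighted integral -/
def II {N : ℕ} (i0 : Fin N) (ρ : ℝ) (F : EN N × EN N → ℝ) : ℝ := ∫ x, F x * wt i0 ρ x

lemma IsSol.II_add {N : ℕ} {φ V : EN N → ℝ} {β M B : ℝ} (h : IsSol φ V β M B) (i0 : Fin N) (ρ : ℝ) {d e : ℕ} (hd : d ≤ 2) (he : e ≤ 2)
    {F G : EN N × EN N → ℝ} (hF : Gr φ d F) (hG : Gr φ e G) :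
    II i0 ρ (fun x => F x + G x) = II i0 ρ F + II i0 ρ G := by
  unfold II
  rw [← integral_add (h.int i0 ρ hd hF) (h.int i0 ρ he hG)]
  congr 1; ext x; ring

lemma II_cmul {N : ℕ} (i0 : Fin N) (ρ : ℝ) (c : ℝ) (F : EN N × EN N → ℝ) :
    II i0 ρ (fun x => c * F x) = c * II i0 ρ F := by
  unfold II
  rw [← integral_const_mul]
  congr 1; ext x; ring

lemma II_nonneg {N : ℕ} (i0 : Fin N) (ρ : ℝ) {F : EN N × EN N → ℝ} (hF : ∀ x, 0 ≤ F x) : 0 ≤ II i0 ρ F :=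
  integral_nonneg fun x => mul_nonneg (hF x) (wt_nonneg _ _ _)

lemma IsSol.II_mono {N : ℕ} {φ V : EN N → ℝ} {β M B : ℝ} (h : IsSol φ V β M B) (i0 : Fin N) (ρ : ℝ) {d e : ℕ} (hd : d ≤ 2) (he : e ≤ 2)
    {F G : EN N × EN N → ℝ} (hF : Gr φ d F) (hG : Gr φ e G) (hle : ∀ x, F x ≤ G x) :
    II i0 ρ F ≤ II i0 ρ G :=
  integral_mono (h.int i0 ρ hd hF) (h.int i0 ρ he hG) fun x => mul_le_mul_of_nonneg_right (hle x) (wt_nonneg _ _ _)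

lemma IsSol.grφ {N : ℕ} {φ V : EN N → ℝ} {β M B : ℝ} (h : IsSol φ V β M B) : Gr φ 0 (fun x => φ x.1) :=
  Gr.fst h.c2.continuous B h.bdd

lemma IsSol.grV {N : ℕ} {φ V : EN N → ℝ} {β M B : ℝ} (h : IsSol φ V β M B) : Gr φ 0 (fun x => V x.1) :=
  Gr.fst h.Vc M fun y => by rw [abs_of_nonneg (h.V0 y)]; exact h.VM y

section
variable {N : ℕ} (φ V : EN N → ℝ) (i0 : Fin N) (ρ : ℝ)
def JJ : ℝ := II i0 ρ (fun x => φ x.1 * φ x.1)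
def DD : ℝ := II i0 ρ (fun x => ‖gradient φ x.1‖^2)
def P1 : ℝ := II i0 ρ (fun x => φ x.1 * fderiv ℝ φ x.1 x.2)
def P2 : ℝ := II i0 ρ (fun x => fderiv ℝ φ x.1 x.2 * fderiv ℝ φ x.1 x.2)
def U0 : ℝ := II i0 ρ (fun x => V x.1 * (φ x.1 * φ x.1))
def U1 : ℝ := II i0 ρ (fun x => V x.1 * (φ x.1 * fderiv ℝ φ x.1 x.2))
def U2 : ℝ := II i0 ρ (fun x => V x.1 * V x.1 * (φ x.1 * φ x.1))
end

lemma IsSol.gr1 {N : ℕ} {φ V : EN N → ℝ} {β M B : ℝ} (h : IsSol φ V β M B) : Gr φ 1 (fun x => φ x.1 * fderiv ℝ φ x.1 x.2) := by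
  simpa using h.grφ.mul (Gr.p h.c2)
lemma IsSol.gr2 {N : ℕ} {φ V : EN N → ℝ} {β M B : ℝ} (h : IsSol φ V β M B) : Gr φ 2 (fun x => fderiv ℝ φ x.1 x.2 * fderiv ℝ φ x.1 x.2) := by
  simpa using (Gr.p h.c2).mul (Gr.p h.c2)
lemma IsSol.gr0 {N : ℕ} {φ V : EN N → ℝ} {β M B : ℝ} (h : IsSol φ V β M B) : Gr φ 0 (fun x => φ x.1 * φ x.1) := by
  simpa using h.grφ.mul h.grφ
lemma IsSol.grU0 {N : ℕ} {φ V : EN N → ℝ} {β M B : ℝ} (h : IsSol φ V β M B) : Gr φ 0 (fun x => V x.1 * (φ x.1 * φ x.1)) := by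
  simpa using h.grV.mul h.gr0
lemma IsSol.grU1 {N : ℕ} {φ V : EN N → ℝ} {β M B : ℝ} (h : IsSol φ V β M B) : Gr φ 1 (fun x => V x.1 * (φ x.1 * fderiv ℝ φ x.1 x.2)) := by
  simpa using h.grV.mul h.gr1
lemma IsSol.grU2 {N : ℕ} {φ V : EN N → ℝ} {β M B : ℝ} (h : IsSol φ V β M B) : Gr φ 0 (fun x => V x.1 * V x.1 * (φ x.1 * φ x.1)) := by
  simpa using (h.grV.mul h.grV).mul h.gr0

lemma dv_const {N : ℕ} (a x : EN N) : dv (fun _ : EN N => a) x = 0 := by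
  have := dv_affine a 0 x
  simpa using this

/-- first identity : `J' = 2 P1` -/
lemma IsSol.id1 {N : ℕ} {φ V : EN N → ℝ} {β M B : ℝ} (h : IsSol φ V β M B) (i0 : Fin N) (ρ : ℝ) :
    HasDerivAt (fun ρ => JJ φ i0 ρ) (2 * P1 φ i0 ρ) ρ := by
  have hd := h.deriv_int i0 ρ (by norm_num) h.gr0
  refine hd.congr_deriv ?_
  have hF : ∀ x : EN N × EN N, dv (fun y => (φ y * φ y) • x.2) x.1 - 1/2 * inner ℝ (x.1 - ρ • x.2) ((φ x.1 * φ x.1) • x.2) 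
      = 2 * (φ x.1 * fderiv ℝ φ x.1 x.2) + (-1) * ((φ x.1 * φ x.1) * (1/2 * inner ℝ (x.1 - ρ • x.2) x.2)) := by
    intro x
    have hdφ : DifferentiableAt ℝ φ x.1 := h.c2.differentiable (by norm_num) x.1
    rw [dv_smul (hdφ.fun_mul hdφ) (differentiableAt_const _), dv_const, fderiv_fun_mul hdφ hdφ, inner_smul_right]
    simp
    ring
  have g1 := h.gr1.cmul 2
  have g2 : Gr φ 0 (fun x => (φ x.1 * φ x.1) * (1/2 * inner ℝ (x.1 - ρ • x.2) x.2)) := by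
    simpa using h.gr0.mul ((Gr.zin (φ := φ) ρ).cmul (1/2))
  have := h.ibp_prod i0 ρ (X := fun a y => (φ y * φ y) • a) (fun a => by
      have := h.c2.of_le (by norm_num : (1:WithTop ℕ∞) ≤ 2)
      fun_prop) (fun a => ⟨B * B * ‖a‖, 0, fun y => by
        rw [norm_smul, norm_mul, Real.norm_eq_abs]
        have b := h.bdd y
        have b0 := h.B0
        have : |φ y| * |φ y| ≤ B * B := mul_le_mul b b (abs_nonneg _) b0
        have t := mul_le_mul_of_nonneg_right this (norm_nonneg a)
        have t2 : 0 ≤ B * B * ‖a‖ * ‖gradient φ y‖^2 := by positivity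
        simp only [pow_zero, one_mul]
        linarith⟩) (by
        simp_rw [hF]
        exact (g1.mono (by norm_num)).add ((g2.cmul (-1)).mono (by norm_num)))
  simp_rw [hF] at this
  have e1 := h.II_add i0 ρ (by norm_num) (by norm_num) g1 (g2.cmul (-1))
  rw [II_cmul, II_cmul] at e1
  unfold P1
  unfold II at *
  linarith

lemma grad_fderiv {N : ℕ} (φ : EN N → ℝ) (y : EN N) : fderiv ℝ φ y (gradient φ y) = ‖gradient φ y‖^2 := by
  rw [← inner_gradient_left, real_inner_self_eq_norm_sq]

/-- second identity : `E = D + β J = -(ρ/2) P1 + U` -/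
lemma IsSol.id2 {N : ℕ} {φ V : EN N → ℝ} {β M B : ℝ} (h : IsSol φ V β M B) (i0 : Fin N) (ρ : ℝ) :
    DD φ i0 ρ + β * JJ φ i0 ρ = -(ρ/2) * P1 φ i0 ρ + U0 φ V i0 ρ := by
  have hF : ∀ x : EN N × EN N, dv (fun y => φ y • gradient φ y) x.1 - 1/2 * inner ℝ (x.1 - ρ • x.2) (φ x.1 • gradient φ x.1) 
      = (‖gradient φ x.1‖^2 + β * (φ x.1 * φ x.1)) + ((-1) * (V x.1 * (φ x.1 * φ x.1)) + (ρ/2) * (φ x.1 * fderiv ℝ φ x.1 x.2)) := by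
    intro x
    have hdφ : DifferentiableAt ℝ φ x.1 := h.c2.differentiable (by norm_num) x.1
    rw [dv_smul hdφ ((contDiff_gradient h.c2).differentiable (by norm_num) _), ← lap_eq_dv h.c2, h.eq, grad_fderiv,
      inner_smul_right, real_inner_comm, inner_gradient_left, map_sub, map_smul, smul_eq_mul]
    ring
  have g1 := Gr.gs h.c2
  have g2 := h.gr0.cmul β
  have g3 := h.grU0.cmul (-1)
  have g4 := h.gr1.cmul (ρ/2)
  have g12 := g1.add (g2.mono (by norm_num : 0 ≤ 2))
  have g34 := (g3.mono (by norm_num : 0 ≤ 1)).add g4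
  have := h.ibp_prod i0 ρ (X := fun a y => φ y • gradient φ y) (fun a => (h.c2.of_le (by norm_num)).smul (contDiff_gradient h.c2)) 
     (fun a => ⟨B, 0, fun y => by
        rw [norm_smul, Real.norm_eq_abs]
        have b := h.bdd y
        have b0 := h.B0
        simp only [pow_zero, one_mul]
        apply mul_le_mul b _ (norm_nonneg _) b0
        nlinarith [sq_nonneg (1 - ‖gradient φ y‖)]⟩) (by
        simp_rw [hF]
        exact g12.add (g34.mono (by norm_num)))
  simp_rw [hF] at this
  have e1 := h.II_add i0 ρ (by norm_num) (by norm_num) g12 g34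
  rw [h.II_add i0 ρ (by norm_num) (by norm_num) g1 g2, h.II_add i0 ρ (by norm_num) (by norm_num) g3 g4,
    II_cmul, II_cmul, II_cmul] at e1
  unfold P1 U0 DD JJ
  unfold II at *
  linarith

/-- third identity : `D' = -ρ P2 - 2 β P1 + 2 U1` -/
lemma IsSol.id3 {N : ℕ} {φ V : EN N → ℝ} {β M B : ℝ} (h : IsSol φ V β M B) (i0 : Fin N) (ρ : ℝ) :
    HasDerivAt (fun ρ => DD φ i0 ρ) (-ρ * P2 φ i0 ρ - 2 * β * P1 φ i0 ρ + 2 * U1 φ V i0 ρ) ρ := by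
  have hd := h.deriv_int i0 ρ le_rfl (Gr.gs h.c2)
  refine hd.congr_deriv ?_
  have hF : ∀ x : EN N × EN N, dv (rel φ x.2 0) x.1 - 1/2 * inner ℝ (x.1 - ρ • x.2) (rel φ x.2 0 x.1) 
      = (β * (φ x.1 * fderiv ℝ φ x.1 x.2) + (-1) * (V x.1 * (φ x.1 * fderiv ℝ φ x.1 x.2))) + ((ρ/2) * (fderiv ℝ φ x.1 x.2 * fderiv ℝ φ x.1 x.2)
        + (1/2) * (‖gradient φ x.1‖^2 * (1/2 * inner ℝ (x.1 - ρ • x.2) x.2))) := by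
    intro x
    rw [dv_rel h.c2, h.eq]
    unfold rel
    rw [inner_sub_right, inner_smul_right, inner_smul_right, real_inner_comm (gradient φ x.1) (x.1 - ρ • x.2), 
      inner_gradient_left, inner_gradient_left, map_sub, map_smul, smul_eq_mul]
    simp only [zero_smul, add_zero]
    ring
  have g1 := h.gr1.cmul β
  have g2 := h.grU1.cmul (-1)
  have g3 := h.gr2.cmul (ρ/2)
  have g4' : Gr φ 2 (fun x => ‖gradient φ x.1‖^2 * (1/2 * inner ℝ (x.1 - ρ • x.2) x.2)) := by
    simpa using (Gr.gs h.c2).mul ((Gr.zin (φ := φ) ρ).cmul (1/2))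
  have g4 := g4'.cmul (1/2)
  have g12 := g1.add g2
  have g34 := g3.add g4
  have := h.ibp_prod i0 ρ (X := fun a => rel φ a 0) (fun a => contDiff_rel h.c2 a 0) 
     (fun a => ⟨2 * ‖a‖, 0, fun y => by
        unfold rel
        simp only [pow_zero, one_mul, zero_smul, add_zero]
        refine (norm_sub_le _ _).trans ?_
        rw [norm_smul, norm_smul, Real.norm_eq_abs, Real.norm_eq_abs, abs_of_nonneg (by positivity : 0 ≤ 1/2 * ‖gradient φ y‖^2)]
        have t := mul_le_mul_of_nonneg_right (abs_real_inner_le_norm (gradient φ y) a) (norm_nonneg (gradient φ y))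
        have := norm_nonneg a
        have t2 : 0 ≤ ‖gradient φ y‖^2 * ‖a‖ := by positivity
        nlinarith⟩) (by
        simp_rw [hF]
        exact (g12.mono (by norm_num)).add g34)
  simp_rw [hF] at this
  have e1 := h.II_add i0 ρ (by norm_num) (by norm_num) g12 g34
  rw [h.II_add i0 ρ (by norm_num) (by norm_num) g1 g2, h.II_add i0 ρ (by norm_num) (by norm_num) g3 g4,
    II_cmul, II_cmul, II_cmul, II_cmul] at e1
  unfold P1 P2 U1
  unfold II at *
  linarith


def YY {N : ℕ} (φ : EN N → ℝ) (i0 : Fin N) (ρ t : ℝ) : ℝ :=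
  II i0 ρ (fun x => (fderiv ℝ φ x.1 x.2 - t * φ x.1)^2)

lemma IsSol.JJ_pos {N : ℕ} {φ V : EN N → ℝ} {β M B : ℝ} (h : IsSol φ V β M B) (hne : ∃ y, φ y ≠ 0) (i0 : Fin N) (ρ : ℝ) :
    0 < JJ φ i0 ρ := by
  obtain ⟨y0, hy0⟩ := hne
  unfold JJ II
  refine integral_pos_of_integrable_nonneg_nonzero (x := (y0, EuclideanSpace.single i0 2)) ?_ ?_ ?_ ?_
  · exact h.gr0.1.mul (wt_cont i0 ρ)
  · exact h.int i0 ρ (by norm_num) h.gr0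
  · intro x
    exact mul_nonneg (mul_self_nonneg _) (wt_nonneg _ _ _)
  · refine mul_ne_zero (mul_ne_zero hy0 hy0) (mul_ne_zero (Real.exp_pos _).ne' (mul_ne_zero ?_ (Real.exp_pos _).ne'))
    apply (expNegInvGlue.pos_of_pos _).ne'
    simp

lemma IsSol.grY {N : ℕ} {φ V : EN N → ℝ} {β M B : ℝ} (h : IsSol φ V β M B) (t : ℝ) :
    Gr φ 2 (fun x => (fderiv ℝ φ x.1 x.2 - t * φ x.1)^2) := by
  have := (Gr.p h.c2).add ((h.grφ.cmul (-t)).mono (by norm_num : 0 ≤ 1))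
  have := this.mul this
  convert this using 2 with x
  ring

lemma IsSol.ratio_deriv {N : ℕ} {φ V : EN N → ℝ} {β M B : ℝ} (h : IsSol φ V β M B) (hne : ∃ y, φ y ≠ 0) (i0 : Fin N) {ρ : ℝ} (hρ : 0 < ρ) :
    ∃ d, HasDerivAt (fun ρ => DD φ i0 ρ / JJ φ i0 ρ) d ρ ∧
      d ≤ (-(ρ/2) * YY φ i0 ρ (P1 φ i0 ρ / JJ φ i0 ρ) + (2/ρ) * U2 φ V i0 ρ) / JJ φ i0 ρ := by
  have hJ := h.JJ_pos hne i0 ρ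
  have hd := (h.id3 i0 ρ).fun_div (h.id1 i0 ρ) hJ.ne'
  refine ⟨_, hd, ?_⟩
  have e2 := h.id2 i0 ρ
  set t := P1 φ i0 ρ / JJ φ i0 ρ with ht
  have hY : YY φ i0 ρ t = P2 φ i0 ρ + ((-2*t) * P1 φ i0 ρ + t^2 * JJ φ i0 ρ) := by
    unfold P2 P1 JJ YY
    rw [← II_cmul, ← II_cmul, ← h.II_add i0 ρ (by norm_num) (by norm_num) (h.gr1.cmul _) (h.gr0.cmul _),
     ← h.II_add i0 ρ (by norm_num) (by norm_num) h.gr2 ((h.gr1.cmul _).add ((h.gr0.cmul _).mono (by norm_num : 0 ≤ 1)))]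
    congr 1; ext x; ring
  have hcs : 2 * U1 φ V i0 ρ + (-2*t) * U0 φ V i0 ρ ≤ (ρ/2) * YY φ i0 ρ t + (2/ρ) * U2 φ V i0 ρ := by
    unfold U1 U0 YY U2
    rw [← II_cmul, ← II_cmul, ← II_cmul, ← II_cmul, ← h.II_add i0 ρ (by norm_num) (by norm_num) (h.grU1.cmul _) (h.grU0.cmul _),
     ← h.II_add i0 ρ (by norm_num) (by norm_num) ((h.grY _).cmul _) (h.grU2.cmul _)]
    apply h.II_mono i0 ρ (d := 1) (e := 2) (by norm_num) le_rfl ((h.grU1.cmul _).add ((h.grU0.cmul _).mono (by norm_num)))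
      (((h.grY _).cmul _).add ((h.grU2.cmul _).mono (by norm_num)))
    intro x
    set p := fderiv ℝ φ x.1 x.2
    set f := φ x.1
    set v := V x.1
    have : ρ/2 * (p - t * f)^2 + 2/ρ * (v * v * (f * f)) - (2 * (v * (f * p)) + -2 * t * (v * (f * f)))
      = (ρ * (p - t * f) - 2 * (v * f))^2 / (2 * ρ) := by field_simp; ring
    have h2 : 0 ≤ (ρ * (p - t * f) - 2 * (v * f))^2 / (2 * ρ) := by positivity
    linarith
  set J := JJ φ i0 ρ
  have hP : P1 φ i0 ρ = t * J := by rw [ht]; field_simp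
  set Y := YY φ i0 ρ t
  have hD : DD φ i0 ρ = -(ρ/2) * (t * J) + U0 φ V i0 ρ - β * J := by rw [hP] at e2; linarith
  have hP2 : P2 φ i0 ρ = Y + t^2 * J := by rw [hP] at hY; linarith
  rw [hD, hP2, hP, div_le_div_iff₀ (by positivity) hJ]
  have := mul_le_mul_of_nonneg_right hcs (mul_pos hJ hJ).le
  nlinarith


def gg (k : ℕ) (x : ℝ) : ℝ := (x⁻¹)^k * expNegInvGlue x

lemma gg_zero (x : ℝ) : gg 0 x = expNegInvGlue x := by simp [gg]

lemma gg_contDiff (k : ℕ) : ContDiff ℝ 1 (gg k) := by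
  have := expNegInvGlue.contDiff_polynomial_eval_inv_mul (n := (1:ℕ∞)) (Polynomial.X^k : Polynomial ℝ)
  have e : gg k = fun x => Polynomial.eval x⁻¹ (Polynomial.X^k : Polynomial ℝ) * expNegInvGlue x := by ext x; simp [gg]
  rw [e]
  exact this

lemma gg_deriv0 (x : ℝ) : HasDerivAt (gg 0) (gg 2 x) x := by
  have := expNegInvGlue.hasDerivAt_polynomial_eval_inv_mul (1 : Polynomial ℝ) x
  have e : gg 0 = fun x => Polynomial.eval x⁻¹ (1 : Polynomial ℝ) * expNegInvGlue x := by ext x; simp [gg]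
  rw [e]
  refine this.congr_deriv ?_
  simp [gg]

lemma gg_deriv2 (x : ℝ) : HasDerivAt (gg 2) (gg 4 x - 2 * gg 3 x) x := by
  have := expNegInvGlue.hasDerivAt_polynomial_eval_inv_mul (Polynomial.X^2 : Polynomial ℝ) x
  have e : gg 2 = fun x => Polynomial.eval x⁻¹ (Polynomial.X^2 : Polynomial ℝ) * expNegInvGlue x := by ext x; simp [gg]
  rw [e]
  refine this.congr_deriv ?_
  simp [gg]
  ring

lemma gg_of_nonpos (k : ℕ) {x : ℝ} (hx : x ≤ 0) : gg k x = 0 := by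
  rw [gg, expNegInvGlue.zero_of_nonpos hx, mul_zero]

lemma gg_of_pos (k : ℕ) {x : ℝ} (hx : 0 < x) : gg k x = (x⁻¹)^k * Real.exp (-x⁻¹) := by
  rw [gg, expNegInvGlue, if_neg (not_le.2 hx)]

lemma gg_nonneg (k : ℕ) (x : ℝ) : 0 ≤ gg k x := by
  rcases le_or_gt x 0 with hx | hx
  · rw [gg_of_nonpos k hx]
  · rw [gg_of_pos k hx]; positivity

lemma gg_le (k : ℕ) (x : ℝ) : gg k x ≤ k.factorial := by
  rcases le_or_gt x 0 with hx | hx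
  · rw [gg_of_nonpos k hx]; positivity
  · rw [gg_of_pos k hx, Real.exp_neg, ← div_eq_mul_inv, div_le_iff₀ (Real.exp_pos _)]
    have := Real.pow_div_factorial_le_exp _ (inv_pos.2 hx).le k
    rw [div_le_iff₀ (by positivity)] at this
    linarith

lemma gg3_le {ρ : ℝ} (hρ : 1 ≤ ρ) (x : ℝ) : gg 3 x ≤ ρ^2 * gg 0 x + 48 * Real.exp (-(√ρ/2)) := by
  rcases le_or_gt x 0 with hx | hx
  · rw [gg_of_nonpos _ hx, gg_of_nonpos _ hx]; positivity
  · rw [gg_of_pos _ hx, gg_of_pos _ hx]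
    have hv := inv_pos.2 hx
    set v := x⁻¹
    have h0 := Real.exp_pos (-v)
    by_cases hc : v^3 ≤ ρ^2
    · have := mul_le_mul_of_nonneg_right hc h0.le
      have := Real.exp_pos (-(√ρ/2))
      simp only [pow_zero, one_mul]
      linarith
    · push Not at hc
      have hr : √ρ ≤ v := by
        by_contra hlt
        push Not at hlt
        have h1 : 1 ≤ √ρ := Real.one_le_sqrt.2 hρ
        have h2 : √ρ^2 = ρ := Real.sq_sqrt (by linarith)
        have h3 : v^3 ≤ √ρ^3 := by gcongr
        have h4 : √ρ^3 ≤ √ρ^4 := pow_le_pow_right₀ h1 (by norm_num)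
        have h5 : √ρ^4 = ρ^2 := by rw [← h2]; ring_nf; rw [Real.sqrt_sq (by positivity)]
        linarith
      have h1 := Real.pow_div_factorial_le_exp (v/2) (by positivity) 3
      have h2 : v^3 ≤ 48 * Real.exp (v/2) := by
        have : ((3:ℕ).factorial : ℝ) = 6 := by norm_num [Nat.factorial]
        rw [this] at h1
        nlinarith
      have h3 : Real.exp (v/2) * Real.exp (-v) = Real.exp (-(v/2)) := by rw [← Real.exp_add]; ring_nf
      have h4 : Real.exp (-(v/2)) ≤ Real.exp (-(√ρ/2)) := Real.exp_le_exp.2 (by linarith)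
      have h5 := mul_le_mul_of_nonneg_right h2 h0.le
      have h6 : 0 ≤ ρ^2 * (v^0 * Real.exp (-v)) := by positivity
      nlinarith

def ww {N : ℕ} (ρ : ℝ) (x : EN N × EN N) : ℝ := Real.exp (-(1/4) * ‖x.1 - ρ • x.2‖^2) * Real.exp (-‖x.2‖^2)

lemma ww_pos {N : ℕ} (ρ : ℝ) (x : EN N × EN N) : 0 < ww ρ x := by unfold ww; positivity

lemma wt_eq {N : ℕ} (i0 : Fin N) (ρ : ℝ) (x : EN N × EN N) : wt i0 ρ x = gg 0 (x.2 i0 - 1) * ww ρ x := by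
  rw [gg_zero]; unfold wt mm ww; ring

lemma ww_le {N : ℕ} (ρ : ℝ) (x : EN N × EN N) : ww ρ x ≤ Real.exp (-1 * ‖x.2‖^2) := by
  unfold ww
  rw [← Real.exp_add]
  apply Real.exp_le_exp.2
  nlinarith [sq_nonneg ‖x.1 - ρ • x.2‖]

lemma int_a {N : ℕ} (ρ : ℝ) (y : EN N) {E : Type*} [NormedAddCommGroup E] {F : EN N → E} (hF : Continuous F) (C : ℝ) (k : ℕ)
    (hb : ∀ a, ‖F a‖ ≤ C * (1 + ‖a‖)^k * ww ρ (y, a)) : Integrable F := by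
  refine Integrable.mono' ((integrable_poly_gauss (N := N) k (a := 1) one_pos).const_mul C) hF.aestronglyMeasurable 
    (Eventually.of_forall fun a => (hb a).trans ?_)
  have hC : 0 ≤ C := by
    have := (norm_nonneg _).trans (hb 0)
    have h2 := ww_pos ρ (y, (0 : EN N))
    simp at this
    exact nonneg_of_mul_nonneg_left this h2
  have := ww_le ρ (y, a)
  rw [mul_assoc]
  gcongr

/-- the scalar field for the integration by parts in `a` -/
def Sf {N : ℕ} (i0 : Fin N) (ρ k : ℝ) (y ξ : EN N) (s : ℝ) (a : EN N) : ℝ :=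
  (inner ℝ ξ a - s + k * (1/2 * ρ * inner ℝ ξ (y - ρ • a) - 2 * inner ℝ ξ a)) * (gg 0 (a i0 - 1) * ww ρ (y, a))
    + k * ξ i0 * (gg 2 (a i0 - 1) * ww ρ (y, a))

lemma Sf_contDiff {N : ℕ} (i0 : Fin N) (ρ k : ℝ) (y ξ : EN N) (s : ℝ) : ContDiff ℝ 1 (Sf i0 ρ k y ξ s) := by
  have h1 : ContDiff ℝ 1 (fun a : EN N => ‖y - ρ • a‖^2) := (by fun_prop : ContDiff ℝ 1 (fun a : EN N => y - ρ • a)).norm_sq ℝ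
  have h2 : ContDiff ℝ 1 (fun a : EN N => ‖a‖^2) := contDiff_id.norm_sq ℝ
  have hw : ContDiff ℝ 1 (fun a => ww ρ (y, a)) := by
    unfold ww
    simp only
    exact (contDiff_const.mul h1).exp.mul h2.neg.exp
  have hc : ContDiff ℝ 1 (fun a : EN N => a i0 - 1) := by fun_prop
  have hg0 := (gg_contDiff 0).comp hc
  have hg2 := (gg_contDiff 2).comp hc
  unfold Sf
  have h3 : ContDiff ℝ 1 (fun a : EN N => (inner ℝ ξ a - s + k * (1/2 * ρ * inner ℝ ξ (y - ρ • a) - 2 * inner ℝ ξ a) : ℝ)) := by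
    have hi : ContDiff ℝ 1 (fun a : EN N => (inner ℝ ξ a : ℝ)) := contDiff_const.inner ℝ contDiff_id
    have hj : ContDiff ℝ 1 (fun a : EN N => (inner ℝ ξ (y - ρ • a) : ℝ)) := contDiff_const.inner ℝ (by fun_prop)
    exact (hi.sub contDiff_const).add (contDiff_const.mul ((contDiff_const.mul hj).sub (contDiff_const.mul hi)))
  exact (h3.mul (hg0.mul hw)).add (contDiff_const.mul (hg2.mul hw))

def Sd {N : ℕ} (i0 : Fin N) (ρ k : ℝ) (y ξ : EN N) (s : ℝ) (a : EN N) : ℝ :=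
  (((1 - k * (ρ^2/2 + 2)) * ‖ξ‖^2) * gg 0 (a i0 - 1) 
  + (inner ℝ ξ a - s + k * (1/2 * ρ * inner ℝ ξ (y - ρ • a) - 2 * inner ℝ ξ a)) *
     (gg 2 (a i0 - 1) * ξ i0 + gg 0 (a i0 - 1) * (1/2 * ρ * inner ℝ ξ (y - ρ • a) - 2 * inner ℝ ξ a))
  + k * ξ i0 * ((gg 4 (a i0 - 1) - 2 * gg 3 (a i0 - 1)) * ξ i0 + gg 2 (a i0 - 1) * (1/2 * ρ * inner ℝ ξ (y - ρ • a) - 2 * inner ℝ ξ a))) * ww ρ (y, a)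

lemma Sf_fderiv {N : ℕ} (i0 : Fin N) (ρ k : ℝ) (y ξ : EN N) (s : ℝ) (a : EN N) :
    fderiv ℝ (Sf i0 ρ k y ξ s) a ξ = Sd i0 ρ k y ξ s a := by
  have hline : HasDerivAt (fun τ : ℝ => a + τ • ξ) ξ 0 := by
    simpa using ((hasDerivAt_id (0:ℝ)).smul_const ξ).const_add a
  have hS : HasDerivAt (fun τ : ℝ => Sf i0 ρ k y ξ s (a + τ • ξ)) (fderiv ℝ (Sf i0 ρ k y ξ s) a ξ) 0 := by
    have hd : HasFDerivAt (Sf i0 ρ k y ξ s) (fderiv ℝ (Sf i0 ρ k y ξ s) a) (a + (0:ℝ) • ξ) := by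
      rw [zero_smul, add_zero]
      exact ((Sf_contDiff i0 ρ k y ξ s).differentiable (by norm_num) a).hasFDerivAt
    exact hd.comp_hasDerivAt 0 hline
  have h1 : HasDerivAt (fun τ : ℝ => (inner ℝ ξ (a + τ • ξ) : ℝ)) (‖ξ‖^2) 0 := by
    have := ((innerSL ℝ ξ).hasFDerivAt (x := a + (0:ℝ) • ξ)).comp_hasDerivAt 0 hline
    simpa [Function.comp_def] using this
  have hz : HasDerivAt (fun τ : ℝ => y - ρ • (a + τ • ξ)) (-(ρ • ξ)) 0 := by
    simpa using (hline.const_smul ρ).const_sub y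
  have h2 : HasDerivAt (fun τ : ℝ => (inner ℝ ξ (y - ρ • (a + τ • ξ)) : ℝ)) (-ρ * ‖ξ‖^2) 0 := by
    have := ((innerSL ℝ ξ).hasFDerivAt (x := y - ρ • (a + (0:ℝ) • ξ))).comp_hasDerivAt 0 hz
    refine this.congr_deriv ?_
    simp [inner_neg_right, inner_smul_right]
  have hx : HasDerivAt (fun τ : ℝ => (a + τ • ξ) i0 - 1) (ξ i0) 0 := by
    have : HasDerivAt (fun τ : ℝ => a i0 + τ * ξ i0 - 1) (ξ i0) 0 := by
      simpa using (((hasDerivAt_id (0:ℝ)).mul_const (ξ i0)).const_add (a i0)).sub_const 1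
    simpa using this
  have e0 : (a + (0:ℝ) • ξ) i0 - 1 = a i0 - 1 := by simp
  have hg0 : HasDerivAt (fun τ : ℝ => gg 0 ((a + τ • ξ) i0 - 1)) (gg 2 (a i0 - 1) * ξ i0) 0 := by
    have := gg_deriv0 ((a + (0:ℝ) • ξ) i0 - 1)
    have := HasDerivAt.comp (0:ℝ) this hx
    rwa [e0] at this
  have hg2 : HasDerivAt (fun τ : ℝ => gg 2 ((a + τ • ξ) i0 - 1)) ((gg 4 (a i0 - 1) - 2 * gg 3 (a i0 - 1)) * ξ i0) 0 := by
    have := gg_deriv2 ((a + (0:ℝ) • ξ) i0 - 1)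
    have := HasDerivAt.comp (0:ℝ) this hx
    rwa [e0] at this
  have hw : HasDerivAt (fun τ : ℝ => ww ρ (y, a + τ • ξ)) ((1/2 * ρ * inner ℝ ξ (y - ρ • a) - 2 * inner ℝ ξ a) * ww ρ (y, a)) 0 := by
    unfold ww
    simp only
    refine ((hz.norm_sq.const_mul (-(1/4))).exp.fun_mul hline.norm_sq.fun_neg.exp).congr_deriv ?_
    simp only [zero_smul, add_zero, inner_neg_right, inner_smul_right, real_inner_comm ξ]
    ring
  have hT := (((h1.sub_const s).fun_add (((h2.const_mul (1/2*ρ)).fun_sub (h1.const_mul 2)).const_mul k)).fun_mul (hg0.fun_mul hw)).fun_add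
    ((hg2.fun_mul hw).const_mul (k * ξ i0))
  rw [hS.unique hT]
  unfold Sd
  simp only [zero_smul, add_zero]
  ring


lemma Gr.int_a {N : ℕ} {φ : EN N → ℝ} {F : EN N × EN N → ℝ} (hF : Gr φ 0 F) (ρ : ℝ) (y : EN N) :
    Integrable (fun a => F (y, a) * ww ρ (y, a)) := by
  obtain ⟨hc, C, k, hC, hb⟩ := hF
  refine _root_.int_a ρ y ?_ (C * (1 + ‖y‖)^k) k fun a => ?_
  · refine (hc.comp (by fun_prop : Continuous fun a : EN N => (y, a))).mul ?_
    unfold ww; simp only; fun_prop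
  · rw [norm_mul, Real.norm_eq_abs, Real.norm_eq_abs, abs_of_pos (ww_pos _ _)]
    apply mul_le_mul_of_nonneg_right _ (ww_pos _ _).le
    refine (hb (y, a)).trans (le_of_eq ?_)
    simp only [pow_zero, mul_pow]; ring

lemma Gr.gg {N : ℕ} {φ : EN N → ℝ} (k : ℕ) (i0 : Fin N) : Gr φ 0 (fun x => gg k (x.2 i0 - 1)) := by
  refine Gr.of_le ((gg_contDiff k).continuous.comp (by fun_prop)) k.factorial 0 fun x => ?_
  rw [abs_of_nonneg (gg_nonneg _ _)]
  simpa using gg_le k _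

lemma Gr.inner2 {N : ℕ} {φ : EN N → ℝ} (ξ : EN N) : Gr φ 0 (fun x => inner ℝ ξ x.2) := by
  refine Gr.of_le (by fun_prop) ‖ξ‖ 1 fun x => (abs_real_inner_le_norm _ _).trans ?_
  apply mul_le_mul_of_nonneg_left _ (norm_nonneg _)
  nlinarith [norm_nonneg x.1, norm_nonneg x.2, mul_nonneg (norm_nonneg x.1) (norm_nonneg x.2)]

lemma Gr.inner1 {N : ℕ} {φ : EN N → ℝ} (ξ : EN N) : Gr φ 0 (fun x => inner ℝ ξ x.1) := by
  refine Gr.of_le (by fun_prop) ‖ξ‖ 1 fun x => (abs_real_inner_le_norm _ _).trans ?_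
  apply mul_le_mul_of_nonneg_left _ (norm_nonneg _)
  nlinarith [norm_nonneg x.1, norm_nonneg x.2, mul_nonneg (norm_nonneg x.1) (norm_nonneg x.2)]

lemma Gr.congr {N : ℕ} {φ : EN N → ℝ} {d : ℕ} {F G : EN N × EN N → ℝ} (hF : Gr φ d F) (h : ∀ x, G x = F x) : Gr φ d G := by
  rwa [show G = F from funext h]

lemma Gr.mul0 {N : ℕ} {φ : EN N → ℝ} {F G : EN N × EN N → ℝ} (hF : Gr φ 0 F) (hG : Gr φ 0 G) :
    Gr φ 0 (fun x => F x * G x) := hF.mul hG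

lemma Gr.ell {N : ℕ} {φ : EN N → ℝ} (ρ : ℝ) (ξ : EN N) : Gr φ 0 (fun x => 1/2 * ρ * inner ℝ ξ (x.1 - ρ • x.2) - 2 * inner ℝ ξ x.2) := by
  refine (((Gr.inner1 ξ).cmul (1/2*ρ)).add ((Gr.inner2 ξ).cmul (-1/2*ρ*ρ - 2))).congr fun x => ?_
  rw [inner_sub_right, inner_smul_right]; ring

lemma Sd_integrable {N : ℕ} (i0 : Fin N) (ρ k : ℝ) (y ξ : EN N) (s : ℝ) : Integrable (Sd i0 ρ k y ξ s) := by
  have l := Gr.ell (φ := fun _ : EN N => (0:ℝ)) ρ ξ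
  have i := Gr.inner2 (φ := fun _ : EN N => (0:ℝ)) ξ
  have g := fun k => Gr.gg (φ := fun _ : EN N => (0:ℝ)) k i0
  have h := (((g 0).cmul ((1 - k * (ρ^2/2 + 2)) * ‖ξ‖^2)).add (((i.add (Gr.const (-s))).add (l.cmul k)).mul0
    (((g 2).mul0 (Gr.const (ξ i0))).add ((g 0).mul0 l)))).add 
      (((((g 4).add ((g 3).cmul (-2))).mul0 (Gr.const (ξ i0))).add ((g 2).mul0 l)).cmul (k * ξ i0))
  convert h.int_a ρ y using 2 with a
  unfold Sd
  ring

lemma Sf_integrable {N : ℕ} (i0 : Fin N) (ρ k : ℝ) (y ξ : EN N) (s : ℝ) : Integrable (Sf i0 ρ k y ξ s) := by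
  have l := Gr.ell (φ := fun _ : EN N => (0:ℝ)) ρ ξ
  have i := Gr.inner2 (φ := fun _ : EN N => (0:ℝ)) ξ
  have g := fun k => Gr.gg (φ := fun _ : EN N => (0:ℝ)) k i0
  have h := (((i.add (Gr.const (-s))).add (l.cmul k)).mul0 (g 0)).add ((g 2).cmul (k * ξ i0))
  convert h.int_a ρ y using 2 with a
  unfold Sf
  ring

lemma Sd_zero {N : ℕ} (i0 : Fin N) (ρ k : ℝ) (y ξ : EN N) (s : ℝ) : ∫ a, Sd i0 ρ k y ξ s a = 0 := by
  have hdv : ∀ a, dv (fun a => Sf i0 ρ k y ξ s a • ξ) a = Sd i0 ρ k y ξ s a := by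
    intro a
    rw [dv_smul ((Sf_contDiff i0 ρ k y ξ s).differentiable (by norm_num) a) (differentiableAt_const _), dv_const, Sf_fderiv]
    simp
  have := integral_dv (F := fun a => Sf i0 ρ k y ξ s a • ξ) ((Sf_contDiff i0 ρ k y ξ s).smul contDiff_const)
    ((Sf_integrable i0 ρ k y ξ s).smul_const ξ) (by
      rw [show dv (fun a => Sf i0 ρ k y ξ s a • ξ) = Sd i0 ρ k y ξ s from funext hdv]
      exact Sd_integrable i0 ρ k y ξ s)
  simpa [hdv] using this

lemma Sd_lower {N : ℕ} (i0 : Fin N) {ρ : ℝ} (hρ : 1 ≤ ρ) (y ξ : EN N) (s : ℝ) (a : EN N) :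
    (11/20) * (‖ξ‖^2 * wt i0 ρ (y, a)) ≤ Sd i0 ρ (1/(10*ρ^2)) y ξ s a + (5/2*ρ^2) * ((inner ℝ ξ a - s)^2 * wt i0 ρ (y, a))
      + 10 * Real.exp (-(√ρ/2)) * (‖ξ‖^2 * ww ρ (y, a)) := by
  rw [wt_eq]
  unfold Sd
  simp only
  set x := a i0 - 1
  set l : ℝ := 1/2 * ρ * inner ℝ ξ (y - ρ • a) - 2 * inner ℝ ξ a
  set u : ℝ := inner ℝ ξ a
  set e := Real.exp (-(√ρ/2))
  have he : 0 < e := Real.exp_pos _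
  set w := ww ρ (y, a)
  have hw : 0 < w := ww_pos _ _
  set ξ0 := ξ i0
  have hξ : ξ0^2 ≤ ‖ξ‖^2 := by
    have := PiLp.norm_apply_le ξ i0
    rw [Real.norm_eq_abs] at this
    rw [← sq_abs]; gcongr
  have h3 := gg3_le hρ x
  have key : (11/20) * (‖ξ‖^2 * gg 0 x) ≤ (((1 - 1/(10*ρ^2) * (ρ^2/2 + 2)) * ‖ξ‖^2) * gg 0 x
    + (u - s + 1/(10*ρ^2) * l) * (gg 2 x * ξ0 + gg 0 x * l)
    + 1/(10*ρ^2) * ξ0 * ((gg 4 x - 2 * gg 3 x) * ξ0 + gg 2 x * l)) + (5/2*ρ^2) * ((u - s)^2 * gg 0 x) + 10 * e * ‖ξ‖^2 := by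
    have hr2 : 1 ≤ ρ^2 := by nlinarith
    set k := 1/(10*ρ^2) with hk
    have hk0 : 0 < k := by positivity
    have hkr : k * ρ^2 = 1/10 := by rw [hk]; field_simp
    have hk1 : k ≤ 1/10 := by nlinarith
    have hg0 := gg_nonneg 0 x
    have hg3 := gg_nonneg 3 x
    -- the g3 term
    have t1 : 2 * k * (ξ0^2 * gg 3 x) ≤ 1/5 * (‖ξ‖^2 * gg 0 x) + 10 * e * ‖ξ‖^2 := by
      have a1 : ξ0^2 * gg 3 x ≤ ‖ξ‖^2 * (ρ^2 * gg 0 x + 48 * e) := mul_le_mul hξ h3 hg3 (by positivity)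
      have a2 := mul_le_mul_of_nonneg_left a1 (by positivity : 0 ≤ 2 * k)
      have a3 : 2 * k * (‖ξ‖^2 * (ρ^2 * gg 0 x + 48 * e)) = 1/5 * (‖ξ‖^2 * gg 0 x) + k * (96 * e * ‖ξ‖^2) := by
        linear_combination 2 * ‖ξ‖^2 * gg 0 x * hkr
      have a4 := mul_le_mul_of_nonneg_right hk1 (by positivity : 0 ≤ 96 * e * ‖ξ‖^2)
      have : 0 ≤ e * ‖ξ‖^2 := by positivity
      linarith
    have t2 : 1/4 * (‖ξ‖^2 * gg 0 x) ≥ k * (ρ^2/2+2) * (‖ξ‖^2 * gg 0 x) := by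
      apply mul_le_mul_of_nonneg_right _ (by positivity)
      linarith
    have t3 : 0 ≤ (u - s) * (gg 2 x * ξ0 + gg 0 x * l) + k * (gg 0 x * l^2 + 2 * l * ξ0 * gg 2 x + ξ0^2 * gg 4 x) + (5/2*ρ^2) * ((u-s)^2 * gg 0 x) := by
      rcases le_or_gt x 0 with hx | hx
      · rw [gg_of_nonpos _ hx, gg_of_nonpos _ hx, gg_of_nonpos _ hx]; simp
      · have e2 : gg 2 x = (x⁻¹)^2 * gg 0 x := by rw [gg_of_pos _ hx, gg_of_pos _ hx]; ring
        have e4 : gg 4 x = (x⁻¹)^4 * gg 0 x := by rw [gg_of_pos _ hx, gg_of_pos _ hx]; ring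
        rw [e2, e4]
        set v := x⁻¹
        have : (u - s) * (v^2 * gg 0 x * ξ0 + gg 0 x * l) + k * (gg 0 x * l^2 + 2 * l * ξ0 * (v^2 * gg 0 x) + ξ0^2 * (v^4 * gg 0 x)) + (5/2*ρ^2) * ((u-s)^2 * gg 0 x)
          = gg 0 x * (5/2*ρ^2) * ((u - s) + 2 * k * (l + v^2 * ξ0))^2 := by
          linear_combination (-gg 0 x * (l + v^2*ξ0) * (10 * (u-s) + (l+v^2*ξ0)*10*k)) * hkr
        rw [this]; positivity
    linarith
  have := mul_le_mul_of_nonneg_right key hw.le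
  nlinarith


lemma IsSol.grad_bd {N : ℕ} {φ V : EN N → ℝ} {β M B : ℝ} (h : IsSol φ V β M B) (b : EN N) :
    ∫ y, ‖gradient φ y‖^2 * Real.exp (-(1/4) * ‖y - b‖^2) ≤ 
      (2 * M * B^2 + 1/4 * B^2 * ‖b‖^2) * ∫ y : EN N, Real.exp (-(1/4) * ‖y‖^2) := by
  have hB := h.B0
  have hM := h.M0
  have hβ := h.hβ
  set K : EN N → ℝ := fun y => Real.exp (-(1/4) * ‖y - b‖^2) with hK
  have hKc : ContDiff ℝ 1 K := contDiff_gauss _ _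
  have hKb : ∀ y, K y ≤ Real.exp (‖b‖^2/4) * Real.exp (-(1/8) * ‖y‖^2) := fun y => gauss_shift_le le_rfl _ y
  have hK0 : ∀ y, 0 < K y := fun y => Real.exp_pos _
  have hgc := contDiff_gradient h.c2
  have hdv : ∀ y, dv (fun y => K y • (φ y • gradient φ y)) y = 
      (‖gradient φ y‖^2 + (β - V y) * φ y^2 + 1/2 * (φ y * inner ℝ (gradient φ y) b)) * K y := by
    intro y
    have hdφ : DifferentiableAt ℝ φ y := h.c2.differentiable (by norm_num) y
    have hdg : DifferentiableAt ℝ (gradient φ) y := hgc.differentiable (by norm_num) _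
    have h5 : fderiv ℝ K y (φ y • gradient φ y) = -2 * (1/4) * K y * inner ℝ (y - b) (φ y • gradient φ y) := fderiv_gauss _ _ _ _
    rw [dv_smul (hKc.differentiable (by norm_num) y) (hdφ.fun_smul hdg), h5, dv_smul hdφ hdg, ← lap_eq_dv h.c2, h.eq, grad_fderiv,
      inner_smul_right, real_inner_comm, inner_gradient_left, inner_gradient_left, map_sub]
    ring
  have hcd : ContDiff ℝ 1 (fun y => K y • (φ y • gradient φ y)) := hKc.smul ((h.c2.of_le (by norm_num)).smul hgc)
  have hntg1 : Integrable (fun y => ‖gradient φ y‖^2 * K y) := by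
    apply h.int_of_bound ((continuous_gradsq h.c2).mul hKc.continuous) (Real.exp (‖b‖^2/4)) 0 (a := 1/8) (by norm_num)
    intro y
    rw [Pi.mul_apply, norm_mul, Real.norm_eq_abs, Real.norm_eq_abs, abs_of_pos (hK0 y), abs_of_nonneg (by positivity)]
    refine (mul_le_mul (by linarith : _ ≤ 1 + ‖gradient φ y‖^2) (hKb y) (hK0 y).le (by positivity)).trans (le_of_eq (by ring))
  have hntg2 : Integrable K := by
    apply h.int_of_bound hKc.continuous (Real.exp (‖b‖^2/4)) 0 (a := 1/8) (by norm_num)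
    intro y
    rw [Real.norm_eq_abs, abs_of_pos (hK0 y)]
    refine (hKb y).trans ?_
    have := mul_nonneg (sq_nonneg ‖gradient φ y‖) (mul_nonneg (Real.exp_pos (‖b‖^2/4)).le (Real.exp_pos (-(1/8) * ‖y‖^2)).le)
    simp only [pow_zero]
    linarith
  have hid : Integrable (dv (fun y => K y • (φ y • gradient φ y))) := by
    apply h.int_of_bound (continuous_dv hcd) (Real.exp (‖b‖^2/4) * (1 + (β + M) * B^2 + B * ‖b‖)) 0 (a := 1/8) (by norm_num)
    intro y
    rw [hdv, norm_mul, Real.norm_eq_abs, Real.norm_eq_abs, abs_of_pos (hK0 y)]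
    have a1 : |(β - V y) * φ y^2| ≤ (β + M) * B^2 := by
      rw [abs_mul]
      apply mul_le_mul _ _ (abs_nonneg _) (by positivity)
      · have := h.V0 y; have := h.VM y
        rw [abs_le]; constructor <;> linarith
      · rw [abs_of_nonneg (by positivity), ← sq_abs]
        have := h.bdd y
        gcongr
    have a2 : |φ y * inner ℝ (gradient φ y) b| ≤ B * (‖gradient φ y‖ * ‖b‖) := by
      rw [abs_mul]
      exact mul_le_mul (h.bdd y) (abs_real_inner_le_norm _ _) (abs_nonneg _) hB
    have a3 : ‖gradient φ y‖ ≤ (1 + ‖gradient φ y‖^2) := by nlinarith [sq_nonneg (1 - ‖gradient φ y‖)]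
    have a4 : |‖gradient φ y‖^2 + (β - V y) * φ y^2 + 1/2 * (φ y * inner ℝ (gradient φ y) b)| ≤ (1 + (β + M) * B^2 + B * ‖b‖) * (1 + ‖gradient φ y‖^2) := by
      have b1 := abs_add_le (‖gradient φ y‖^2 + (β - V y) * φ y^2) (1/2 * (φ y * inner ℝ (gradient φ y) b))
      have b2 := abs_add_le (‖gradient φ y‖^2) ((β - V y) * φ y^2)
      rw [abs_of_nonneg (sq_nonneg ‖gradient φ y‖)] at b2
      rw [abs_mul (1/2), abs_of_pos (by norm_num : (0:ℝ) < 1/2)] at b1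
      have b3 := mul_le_mul_of_nonneg_left a3 (mul_nonneg hB (norm_nonneg b))
      have b4 : 0 ≤ (β + M) * B^2 * ‖gradient φ y‖^2 := by positivity
      have b5 : 0 ≤ B * ‖b‖ * (1 + ‖gradient φ y‖^2) := by positivity
      nlinarith
    refine (mul_le_mul a4 (hKb y) (hK0 y).le (by positivity)).trans (le_of_eq (by ring))
  have hz := integral_dv hcd (h.int_of_bound hcd.continuous (Real.exp (‖b‖^2/4) * B) 0 (a := 1/8) (by norm_num) (by
    intro y
    rw [norm_smul, norm_smul, Real.norm_eq_abs, Real.norm_eq_abs, abs_of_pos (hK0 y)]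
    have a3 : ‖gradient φ y‖ ≤ (1 + ‖gradient φ y‖^2) := by nlinarith [sq_nonneg (1 - ‖gradient φ y‖)]
    refine (mul_le_mul (hKb y) (mul_le_mul (h.bdd y) a3 (norm_nonneg _) hB) (by positivity) (by positivity)).trans (le_of_eq (by ring)))) hid
  have e1 : ∫ y, ‖gradient φ y‖^2 * K y ≤ ∫ y, (2 * dv (fun y => K y • (φ y • gradient φ y)) y + (2 * M * B^2 + 1/4 * B^2 * ‖b‖^2) * K y) := by
    apply integral_mono hntg1 ((hid.const_mul _).add (hntg2.const_mul _))
    intro y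
    show ‖gradient φ y‖^2 * K y ≤ 2 * dv (fun y => K y • (φ y • gradient φ y)) y + (2 * M * B^2 + 1/4 * B^2 * ‖b‖^2) * K y
    rw [hdv]
    have a1 : M * B^2 + (β - V y) * φ y^2 ≥ 0 := by
      have h1 : φ y^2 ≤ B^2 := by rw [← sq_abs]; have := h.bdd y; gcongr
      have h2 : V y * φ y^2 ≤ M * B^2 := mul_le_mul (h.VM y) h1 (sq_nonneg _) hM
      have h3 : 0 ≤ β * φ y^2 := by positivity
      linarith
    have a2 : |φ y * inner ℝ (gradient φ y) b| ≤ B * (‖gradient φ y‖ * ‖b‖) := by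
      rw [abs_mul]
      exact mul_le_mul (h.bdd y) (abs_real_inner_le_norm _ _) (abs_nonneg _) hB
    have a3 := (abs_le.1 a2).1
    have : ‖gradient φ y‖^2 ≤ 2 * (‖gradient φ y‖^2 + (β - V y) * φ y^2 + 1/2 * (φ y * inner ℝ (gradient φ y) b)) + (2 * M * B^2 + 1/4 * B^2 * ‖b‖^2) := by
      nlinarith [sq_nonneg (‖gradient φ y‖ - 1/2 * (B * ‖b‖))]
    have := mul_le_mul_of_nonneg_right this (hK0 y).le
    refine this.trans (le_of_eq (by ring))
  rw [integral_add (hid.const_mul _) (hntg2.const_mul _), integral_const_mul, integral_const_mul, hz] at e1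
  have e2 : ∫ y, K y = ∫ y : EN N, Real.exp (-(1/4) * ‖y‖^2) :=
    integral_sub_right_eq_self (μ := (volume : Measure (EN N))) (fun y : EN N => Real.exp (-(1/4) * ‖y‖^2)) b
  rw [e2] at e1
  linarith

lemma IsSol.int_ww {N : ℕ} {φ V : EN N → ℝ} {β M B : ℝ} (h : IsSol φ V β M B) (ρ : ℝ) {d : ℕ} (hd : d ≤ 2)
    {F : EN N × EN N → ℝ} (hF : Gr φ d F) : Integrable (fun x => F x * ww ρ x) :=
  h.int_gen hd hF (by unfold ww; fun_prop) |ρ| (fun x => (ww_pos ρ x).le) (gk_le le_rfl)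

lemma IsSol.grad_ww {N : ℕ} {φ V : EN N → ℝ} {β M B : ℝ} (h : IsSol φ V β M B) :
    ∃ C, 0 ≤ C ∧ ∀ ρ, 1 ≤ ρ → ∫ x : EN N × EN N, ‖gradient φ x.1‖^2 * ww ρ x ≤ C * ρ^2 := by
  have hB := h.B0
  have hM := h.M0
  set c := ∫ y : EN N, Real.exp (-(1/4) * ‖y‖^2)
  have hc : 0 ≤ c := integral_nonneg fun _ => (Real.exp_pos _).le
  have hi := integrable_poly_gauss (N := N) 2 one_pos
  refine ⟨(2 * M * B^2 + 1/4 * B^2) * c * ∫ a : EN N, (1 + ‖a‖)^2 * Real.exp (-1 * ‖a‖^2), 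
    mul_nonneg (by positivity) (integral_nonneg fun _ => by positivity), fun ρ hρ => ?_⟩
  have hntg := h.int_ww ρ le_rfl (Gr.gs h.c2)
  rw [Measure.volume_eq_prod] at hntg ⊢
  rw [integral_prod_symm _ hntg]
  rw [show ∀ A I : ℝ, A * I * ρ^2 = (A * ρ^2) * I by intros; ring, ← integral_const_mul]
  apply integral_mono hntg.integral_prod_right (hi.const_mul _)
  intro a
  simp only [ww]
  simp_rw [← mul_assoc]
  rw [integral_mul_const]
  have := h.grad_bd (ρ • a)
  have t : (2 * M * B^2 + 1/4 * B^2 * ‖ρ • a‖^2) ≤ (2 * M * B^2 + 1/4 * B^2) * ρ^2 * (1 + ‖a‖)^2 := by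
    rw [norm_smul, mul_pow, Real.norm_eq_abs, sq_abs]
    have r1 : 1 ≤ ρ^2 := by nlinarith
    have r2 : ‖a‖^2 ≤ (1 + ‖a‖)^2 := by gcongr; linarith
    have r3 : 1 ≤ (1 + ‖a‖)^2 := by nlinarith [norm_nonneg a]
    have r4 : 1 ≤ ρ^2 * (1 + ‖a‖)^2 := by nlinarith
    have r5 := mul_le_mul_of_nonneg_left r2 (sq_nonneg ρ)
    have r6 := mul_le_mul_of_nonneg_left r5 (by positivity : 0 ≤ 1/4 * B^2)
    have r7 := mul_le_mul_of_nonneg_left r4 (by positivity : 0 ≤ 2 * M * B^2)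
    linarith
  have t2 := mul_le_mul_of_nonneg_right t hc
  have := mul_le_mul_of_nonneg_right (this.trans t2) (Real.exp_pos (-‖a‖^2)).le
  refine this.trans (le_of_eq ?_)
  rw [neg_one_mul]
  ring

lemma IsSol.fisher {N : ℕ} {φ V : EN N → ℝ} {β M B : ℝ} (h : IsSol φ V β M B) (i0 : Fin N) :
    ∃ C, 0 ≤ C ∧ ∀ ρ t, 1 ≤ ρ → DD φ i0 ρ ≤ 5 * ρ^2 * YY φ i0 ρ t + C * ρ^2 * Real.exp (-(√ρ/2)) := by
  obtain ⟨C, hC, hw⟩ := h.grad_ww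
  refine ⟨20 * C, by positivity, fun ρ t hρ => ?_⟩
  have hw := hw ρ hρ
  have he := Real.exp_pos (-(√ρ/2))
  suffices DD φ i0 ρ ≤ 5 * ρ^2 * YY φ i0 ρ t + 20 * Real.exp (-(√ρ/2)) * ∫ x : EN N × EN N, ‖gradient φ x.1‖^2 * ww ρ x by
    have := mul_le_mul_of_nonneg_left hw he.le
    linarith
  have i1 := h.int i0 ρ le_rfl (Gr.gs h.c2)
  have i2 := h.int i0 ρ le_rfl (h.grY t)
  have i3 := h.int_ww ρ le_rfl (Gr.gs h.c2)
  unfold DD YY II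
  rw [Measure.volume_eq_prod] at *
  rw [integral_prod _ i1, integral_prod _ i2, integral_prod _ i3, ← integral_const_mul, ← integral_const_mul,
    ← integral_add (i2.integral_prod_left.const_mul _) (i3.integral_prod_left.const_mul _)]
  apply integral_mono i1.integral_prod_left ((i2.integral_prod_left.const_mul _).add (i3.integral_prod_left.const_mul _))
  intro y
  simp only [Pi.add_apply]
  set ξ := gradient φ y
  have hp : ∀ a, fderiv ℝ φ y a = inner ℝ ξ a := fun a => (inner_gradient_left).symm
  simp_rw [hp]
  set s := t * φ y
  have g0 := Gr.gg (φ := fun _ : EN N => (0:ℝ)) 0 i0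
  have ii := (Gr.inner2 (φ := fun _ : EN N => (0:ℝ)) ξ).add (Gr.const (-s))
  have j1 : Integrable (fun a => ‖ξ‖^2 * wt i0 ρ (y, a)) := by
    convert (g0.cmul (‖ξ‖^2)).int_a ρ y using 2 with a
    rw [wt_eq]; ring
  have j2 : Integrable (fun a => (inner ℝ ξ a - s)^2 * wt i0 ρ (y, a)) := by
    convert ((ii.mul0 ii).mul0 g0).int_a ρ y using 2 with a
    rw [wt_eq]; ring
  have j3 : Integrable (fun a => ‖ξ‖^2 * ww ρ (y, a)) := 
    (Gr.const (φ := fun _ : EN N => (0:ℝ)) (‖ξ‖^2)).int_a ρ y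
  have j4 := Sd_integrable i0 ρ (1/(10*ρ^2)) y ξ s
  have main : ∫ a, (11/20) * (‖ξ‖^2 * wt i0 ρ (y, a)) ≤ ∫ a, (Sd i0 ρ (1/(10*ρ^2)) y ξ s a + (5/2*ρ^2) * ((inner ℝ ξ a - s)^2 * wt i0 ρ (y, a))
      + 10 * Real.exp (-(√ρ/2)) * (‖ξ‖^2 * ww ρ (y, a))) :=
    integral_mono (j1.const_mul _) ((j4.add (j2.const_mul _)).add (j3.const_mul _)) (fun a => Sd_lower i0 hρ y ξ s a)
  rw [integral_add (j4.fun_add (j2.const_mul _)) (j3.const_mul _), integral_add j4 (j2.const_mul _), Sd_zero,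
    integral_const_mul (11/20), integral_const_mul (5/2*ρ^2), integral_const_mul (10 * Real.exp (-(√ρ/2)))] at main
  have n2 : 0 ≤ ρ^2 * ∫ a, (inner ℝ ξ a - s)^2 * wt i0 ρ (y, a) := mul_nonneg (sq_nonneg _) (integral_nonneg fun a => mul_nonneg (sq_nonneg _) (wt_nonneg _ _ _))
  have n3 : 0 ≤ Real.exp (-(√ρ/2)) * ∫ a, ‖ξ‖^2 * ww ρ (y, a) := mul_nonneg he.le (integral_nonneg fun a => mul_nonneg (sq_nonneg _) (ww_pos _ _).le)
  linarith


lemma mono_helper {f : ℝ → ℝ} (hf : ∀ ρ, 1 ≤ ρ → ∃ d, HasDerivAt f d ρ ∧ 0 ≤ d) {ρ : ℝ} (hρ : 1 ≤ ρ) : f 1 ≤ f ρ := by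
  have hm : MonotoneOn f (Ici 1) := by
    apply monotoneOn_of_deriv_nonneg (convex_Ici 1)
    · intro x hx
      obtain ⟨d, hd, -⟩ := hf x hx
      exact hd.continuousAt.continuousWithinAt
    · intro x hx
      rw [interior_Ici] at hx
      obtain ⟨d, hd, -⟩ := hf x (le_of_lt hx)
      exact hd.differentiableAt.differentiableWithinAt
    · intro x hx
      rw [interior_Ici] at hx
      obtain ⟨d, hd, h0⟩ := hf x (le_of_lt hx)
      rwa [hd.deriv]
  exact hm (mem_Ici.2 le_rfl) hρ hρ

lemma IsSol.DD_nonneg {N : ℕ} {φ V : EN N → ℝ} {β M B : ℝ} (_h : IsSol φ V β M B) (i0 : Fin N) (ρ : ℝ) : 0 ≤ DD φ i0 ρ :=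
  II_nonneg i0 ρ fun _ => sq_nonneg _

lemma IsSol.U0_nonneg {N : ℕ} {φ V : EN N → ℝ} {β M B : ℝ} (h : IsSol φ V β M B) (i0 : Fin N) (ρ : ℝ) : 0 ≤ U0 φ V i0 ρ :=
  II_nonneg i0 ρ fun _ => mul_nonneg (h.V0 _) (mul_self_nonneg _)

lemma IsSol.YY_nonneg {N : ℕ} {φ V : EN N → ℝ} {β M B : ℝ} (_h : IsSol φ V β M B) (i0 : Fin N) (ρ t : ℝ) : 0 ≤ YY φ i0 ρ t :=
  II_nonneg i0 ρ fun _ => sq_nonneg _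

lemma IsSol.logJ_deriv {N : ℕ} {φ V : EN N → ℝ} {β M B : ℝ} (h : IsSol φ V β M B) (hne : ∃ y, φ y ≠ 0) (i0 : Fin N) {ρ : ℝ} (hρ : 0 < ρ) :
    ∃ d, HasDerivAt (fun ρ => Real.log (JJ φ i0 ρ)) d ρ ∧ -(4/ρ) * (DD φ i0 ρ / JJ φ i0 ρ + β) ≤ d := by
  have hJ := h.JJ_pos hne i0 ρ
  refine ⟨_, (h.id1 i0 ρ).log hJ.ne', ?_⟩
  rw [le_div_iff₀ hJ]
  have e2 := h.id2 i0 ρ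
  have hU := h.U0_nonneg i0 ρ
  have e3 : -(4/ρ) * (DD φ i0 ρ / JJ φ i0 ρ + β) * JJ φ i0 ρ = -(4/ρ) * (DD φ i0 ρ + β * JJ φ i0 ρ) := by field_simp
  rw [e3, e2]
  have : -(4/ρ) * (-(ρ/2) * P1 φ i0 ρ + U0 φ V i0 ρ) = 2 * P1 φ i0 ρ - (4/ρ) * U0 φ V i0 ρ := by field_simp; ring
  rw [this]
  have : 0 ≤ (4/ρ) * U0 φ V i0 ρ := by positivity
  linarith

lemma IsSol.U2_le {N : ℕ} {φ V : EN N → ℝ} {β M B : ℝ} (h : IsSol φ V β M B) (i0 : Fin N) (ρ : ℝ) :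
    U2 φ V i0 ρ ≤ M^2 * JJ φ i0 ρ := by
  unfold U2 JJ
  rw [← II_cmul]
  apply h.II_mono i0 ρ (by norm_num) (by norm_num) h.grU2 (h.gr0.cmul _)
  intro x
  apply mul_le_mul_of_nonneg_right _ (mul_self_nonneg _)
  nlinarith [h.V0 x.1, h.VM x.1]

/-- a crude lower bound for `J` -/
lemma IsSol.J_crude {N : ℕ} {φ V : EN N → ℝ} {β M B : ℝ} (h : IsSol φ V β M B) (hne : ∃ y, φ y ≠ 0) (i0 : Fin N) :
    ∃ a b : ℝ, 0 ≤ b ∧ ∀ ρ, 1 ≤ ρ → a - b * Real.log ρ - b * Real.log ρ^2 ≤ Real.log (JJ φ i0 ρ) := by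
  have hβ := h.hβ
  set m : ℝ → ℝ := fun ρ => DD φ i0 ρ / JJ φ i0 ρ with hm
  have hm0 : ∀ ρ, 0 ≤ m ρ := fun ρ => div_nonneg (h.DD_nonneg i0 ρ) (h.JJ_pos hne i0 ρ).le
  have h1 : ∀ ρ, 1 ≤ ρ → m ρ ≤ m 1 + 2 * M^2 * Real.log ρ := by
    intro ρ hρ
    have := mono_helper (f := fun ρ => 2 * M^2 * Real.log ρ - m ρ) (fun r hr => by
      have hr0 : 0 < r := by linarith
      obtain ⟨d, hd, hle⟩ := h.ratio_deriv hne i0 hr0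
      refine ⟨_, ((Real.hasDerivAt_log hr0.ne').const_mul (2*M^2)).fun_sub hd, ?_⟩
      have hJ := h.JJ_pos hne i0 r
      have hY := h.YY_nonneg i0 r (P1 φ i0 r / JJ φ i0 r)
      have hU := h.U2_le i0 r
      have : (-(r/2) * YY φ i0 r (P1 φ i0 r / JJ φ i0 r) + (2/r) * U2 φ V i0 r) / JJ φ i0 r ≤ 2 * M^2 * r⁻¹ := by
        rw [div_le_iff₀ hJ]
        have a1 := mul_le_mul_of_nonneg_left hU (by positivity : 0 ≤ 2/r)
        have a2 : 0 ≤ (r/2) * YY φ i0 r (P1 φ i0 r / JJ φ i0 r) := by positivity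
        have a3 : 2/r * (M^2 * JJ φ i0 r) = 2 * M^2 * r⁻¹ * JJ φ i0 r := by ring
        linarith
      linarith) hρ
    simp only [Real.log_one, mul_zero] at this
    linarith
  refine ⟨Real.log (JJ φ i0 1), 4 * (m 1 + β) + 4 * M^2, by have := hm0 1; positivity, fun ρ hρ => ?_⟩
  have := mono_helper (f := fun ρ => Real.log (JJ φ i0 ρ) + (4 * (m 1 + β) * Real.log ρ + 4 * M^2 * Real.log ρ^2)) (fun r hr => by
    have hr0 : 0 < r := by linarith
    obtain ⟨d, hd, hle⟩ := h.logJ_deriv hne i0 hr0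
    have hl := Real.hasDerivAt_log hr0.ne'
    refine ⟨_, hd.fun_add ((hl.const_mul (4 * (m 1 + β))).fun_add ((hl.fun_pow 2).const_mul (4 * M^2))), ?_⟩
    have a1 := mul_le_mul_of_nonneg_left (h1 r hr) (by positivity : 0 ≤ 4/r)
    have a2 : -(4/r) * (m r + β) ≤ d := hle
    simp only [Nat.cast_ofNat, Nat.add_one_sub_one, pow_one]
    have a3 : 4 * (m 1 + β) * r⁻¹ + 4 * M^2 * (2 * Real.log r * r⁻¹) = 4/r * (m 1 + 2*M^2*Real.log r) + 4/r * β := by ring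
    linarith) hρ
  simp only [Real.log_one] at this
  have hlr := Real.log_nonneg hρ
  have q1 : 0 ≤ M^2 * Real.log ρ := by positivity
  have q2 : 0 ≤ (m 1 + β) * Real.log ρ^2 := by have := hm0 1; positivity
  linarith

lemma log_absorb {a b : ℝ} (hb : 0 ≤ b) :
    ∃ K : ℝ, ∀ ρ, 1 ≤ ρ → Real.exp (-(√ρ/2)) ≤ K * (ρ⁻¹)^3 * Real.exp (a - b * Real.log ρ - b * Real.log ρ^2) := by
  set c := b + 3 with hc
  set R := max 1 (192 * c * 4) with hR
  have hR1 : 1 ≤ R := le_max_left _ _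
  have hR2 : 192 * c * 4 ≤ R := le_max_right _ _
  refine ⟨Real.exp (c * (1 + R)^2 - a), fun ρ hρ => ?_⟩
  have hρ0 : 0 < ρ := by linarith
  have hl := Real.log_nonneg hρ
  set L := Real.log ρ with hL
  have e1 : (ρ⁻¹)^3 = Real.exp (-3 * L) := by
    rw [neg_mul, Real.exp_neg, inv_pow]
    congr 1
    rw [show (3:ℝ) * L = (3:ℕ) * L by norm_num, Real.exp_nat_mul, hL, Real.exp_log hρ0]
  have e2 : √ρ = Real.exp (L/2) := by
    rw [hL, Real.sqrt_eq_rpow, Real.rpow_def_of_pos hρ0]; ring_nf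
  rw [e1, ← Real.exp_add, ← Real.exp_add]
  apply Real.exp_le_exp.2
  have h3 := Real.pow_div_factorial_le_exp (L/2) (by positivity) 3
  have : ((3:ℕ).factorial : ℝ) = 6 := by norm_num [Nat.factorial]
  rw [this] at h3
  rw [e2]
  have h4 : L^3/96 ≤ Real.exp (L/2)/2 := by
    have : (L/2)^3/6 = L^3/48 := by ring
    linarith
  have h5 : c * (1 + L)^2 ≤ c * (1+R)^2 + L^3/96 := by
    have hc0 : 0 ≤ c := by linarith
    by_cases hLR : L ≤ R
    · have : (1+L)^2 ≤ (1+R)^2 := by gcongr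
      have := mul_le_mul_of_nonneg_left this hc0
      have : 0 ≤ L^3/96 := by positivity
      linarith
    · push Not at hLR
      have h1 : (1 + L)^2 ≤ 4 * L^2 := by nlinarith
      have h2 := mul_le_mul_of_nonneg_left h1 hc0
      have h3 : (192 * c * 4) * L^2 ≤ L * L^2 := mul_le_mul_of_nonneg_right (by linarith) (sq_nonneg _)
      have h4 : 0 ≤ c * (1+R)^2 := by positivity
      have h5 : 0 ≤ c * L^2 := by positivity
      nlinarith
  have h6 : b * L + b * L^2 + 3 * L ≤ c * (1+L)^2 := by nlinarith [mul_nonneg hb hl, sq_nonneg L]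
  linarith


def wt2 {N : ℕ} (ρ : ℝ) (x : EN N × EN N) : ℝ := Real.exp (-(1/8) * ‖x.1 - ρ • x.2‖^2) * Real.exp (-1 * ‖x.2‖^2)

lemma wt2_pos {N : ℕ} (ρ : ℝ) (x : EN N × EN N) : 0 < wt2 ρ x := by unfold wt2; positivity

lemma wt2_integrable {N : ℕ} (ρ : ℝ) : Integrable (wt2 (N := N) ρ) := by
  have hc : Continuous (wt2 (N := N) ρ) := by unfold wt2; fun_prop
  rw [Measure.volume_eq_prod]
  rw [integrable_prod_iff' (by exact hc.aestronglyMeasurable)]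
  constructor
  · refine Eventually.of_forall fun a => ?_
    unfold wt2
    simp only
    exact ((integrable_gauss (N := N) (by norm_num : (0:ℝ) < 1/8)).comp_sub_right (ρ • a)).mul_const _
  · simp_rw [Real.norm_eq_abs, abs_of_pos (wt2_pos ρ _)]
    unfold wt2
    simp only
    simp_rw [integral_mul_const]
    have : ∀ a : EN N, ∫ y : EN N, Real.exp (-(1/8) * ‖y - ρ • a‖^2) = ∫ y : EN N, Real.exp (-(1/8) * ‖y‖^2) := fun a =>
      integral_sub_right_eq_self (μ := (volume : Measure (EN N))) (fun y : EN N => Real.exp (-(1/8) * ‖y‖^2)) (ρ • a)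
    simp_rw [this]
    exact (integrable_gauss (N := N) one_pos).const_mul _

lemma wt2_integral {N : ℕ} (ρ : ℝ) : ∫ x, wt2 (N := N) ρ x = (∫ y : EN N, Real.exp (-(1/8) * ‖y‖^2)) * ∫ a : EN N, Real.exp (-1 * ‖a‖^2) := by
  have hi := wt2_integrable (N := N) ρ
  rw [Measure.volume_eq_prod] at *
  rw [integral_prod_symm _ hi]
  unfold wt2
  simp only
  simp_rw [integral_mul_const]
  have : ∀ a : EN N, ∫ y : EN N, Real.exp (-(1/8) * ‖y - ρ • a‖^2) = ∫ y : EN N, Real.exp (-(1/8) * ‖y‖^2) := fun a =>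
      integral_sub_right_eq_self (μ := (volume : Measure (EN N))) (fun y : EN N => Real.exp (-(1/8) * ‖y‖^2)) (ρ • a)
  simp_rw [this]
  rw [integral_const_mul]

def TT (N : ℕ) : ℝ := (∫ y : EN N, Real.exp (-(1/8) * ‖y‖^2)) * ∫ a : EN N, Real.exp (-1 * ‖a‖^2)

lemma TT_nonneg (N : ℕ) : 0 ≤ TT N := mul_nonneg (integral_nonneg fun _ => (Real.exp_pos _).le) (integral_nonneg fun _ => (Real.exp_pos _).le)

lemma wt_le_wt2 {N : ℕ} (i0 : Fin N) (ρ : ℝ) (x : EN N × EN N) : wt i0 ρ x ≤ wt2 ρ x := by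
  refine (mul_le_mul_of_nonneg_left (mm_le i0 x.2) (Real.exp_pos _).le).trans ?_
  unfold wt2
  rw [neg_one_mul]
  apply mul_le_mul_of_nonneg_right _ (Real.exp_pos _).le
  apply Real.exp_le_exp.2
  nlinarith [sq_nonneg ‖x.1 - ρ • x.2‖]

lemma wt_near {N : ℕ} (i0 : Fin N) {ρ : ℝ} (hρ : 0 ≤ ρ) {x : EN N × EN N} (hx : ‖x.1‖ ≤ ρ/2) : 
    wt i0 ρ x ≤ Real.exp (-(ρ^2/32)) * wt2 ρ x := by
  rcases le_or_gt (x.2 i0 - 1) 0 with h | h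
  · have : wt i0 ρ x = 0 := by rw [wt_eq, gg_of_nonpos _ h, zero_mul]
    rw [this]
    exact mul_nonneg (Real.exp_pos _).le (wt2_pos _ _).le
  · refine (mul_le_mul_of_nonneg_left (mm_le i0 x.2) (Real.exp_pos _).le).trans ?_
    unfold wt2
    rw [neg_one_mul, ← mul_assoc]
    apply mul_le_mul_of_nonneg_right _ (Real.exp_pos _).le
    rw [← Real.exp_add]
    apply Real.exp_le_exp.2
    have h1 : 1 ≤ ‖x.2‖ := by
      have := PiLp.norm_apply_le x.2 i0
      rw [Real.norm_eq_abs] at this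
      have := le_abs_self (x.2 i0)
      linarith
    have h2 : ρ/2 ≤ ‖x.1 - ρ • x.2‖ := by
      have := norm_sub_norm_le (ρ • x.2) x.1
      rw [norm_sub_rev, norm_smul, Real.norm_eq_abs, abs_of_nonneg hρ] at this
      nlinarith
    have h3 : (ρ/2)^2 ≤ ‖x.1 - ρ • x.2‖^2 := by gcongr
    nlinarith

lemma II_split {N : ℕ} (i0 : Fin N) {ρ : ℝ} (hρ : 0 ≤ ρ) {F G : EN N × EN N → ℝ} (hF : Integrable (fun x => F x * wt i0 ρ x))
    (hG : Integrable (fun x => G x * wt i0 ρ x)) {K : ℝ} (hFK : ∀ x, F x ≤ K) (hK : 0 ≤ K) (hG0 : ∀ x, 0 ≤ G x)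
    (hFG : ∀ x, ρ/2 ≤ ‖x.1‖ → F x ≤ G x) :
    II i0 ρ F ≤ II i0 ρ G + K * Real.exp (-(ρ^2/32)) * TT N := by
  have hi := (wt2_integrable (N := N) ρ).const_mul (K * Real.exp (-(ρ^2/32)))
  have : ∫ x, F x * wt i0 ρ x ≤ ∫ x, (G x * wt i0 ρ x + K * Real.exp (-(ρ^2/32)) * wt2 ρ x) := by
    apply integral_mono hF (hG.add hi)
    intro x
    show F x * wt i0 ρ x ≤ G x * wt i0 ρ x + K * Real.exp (-(ρ^2/32)) * wt2 ρ x
    have w0 := wt_nonneg i0 ρ x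
    have w2 := wt2_pos ρ x
    rcases le_total (ρ/2) ‖x.1‖ with h | h
    · have := mul_le_mul_of_nonneg_right (hFG x h) w0
      have : 0 ≤ K * Real.exp (-(ρ^2/32)) * wt2 ρ x := by positivity
      linarith
    · have a1 := mul_le_mul_of_nonneg_right (hFK x) w0
      have a2 := mul_le_mul_of_nonneg_left (wt_near i0 hρ h) hK
      have a3 := mul_nonneg (hG0 x) w0
      linarith
  rw [integral_add hG hi, integral_const_mul, wt2_integral] at this
  exact this

lemma IsSol.U2_fine {N : ℕ} {φ V : EN N → ℝ} {β M B : ℝ} (h : IsSol φ V β M B) (i0 : Fin N) {C : ℝ}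
    (hV : ∀ y, V y * (1 + ‖y‖^2) ≤ C) {ρ : ℝ} (hρ : 1 ≤ ρ) :
    U2 φ V i0 ρ ≤ 16 * C^2 * (ρ⁻¹)^4 * JJ φ i0 ρ + M^2 * B^2 * Real.exp (-(ρ^2/32)) * TT N := by
  unfold U2 JJ
  rw [← II_cmul]
  have hB := h.B0
  have hM := h.M0
  have hρ0 : 0 < ρ := by linarith
  have hff : ∀ x : EN N × EN N, 0 ≤ φ x.1 * φ x.1 := fun x => mul_self_nonneg _
  apply II_split i0 (by linarith) (h.int i0 ρ (by norm_num) h.grU2) (h.int i0 ρ (by norm_num) (h.gr0.cmul _))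
  · intro x
    apply mul_le_mul _ _ (hff x) (by positivity)
    · nlinarith [h.V0 x.1, h.VM x.1]
    · rw [← sq, ← sq_abs]
      have := h.bdd x.1
      gcongr
  · positivity
  · intro x; have := hff x; positivity
  · intro x hx
    apply mul_le_mul_of_nonneg_right _ (hff x)
    have v0 := h.V0 x.1
    have h1 : V x.1 * ρ^2 ≤ 4 * C := by
      have : (ρ/2)^2 ≤ ‖x.1‖^2 := by gcongr
      have h2 := hV x.1
      nlinarith
    have h2 : (V x.1 * ρ^2)^2 ≤ (4 * C)^2 := by gcongr
    have e : V x.1 * V x.1 = (V x.1 * ρ^2)^2 * (ρ⁻¹)^4 := by field_simp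
    rw [e]
    have := mul_le_mul_of_nonneg_right h2 (by positivity : 0 ≤ (ρ⁻¹)^4)
    linarith

lemma IsSol.ratio_ode {N : ℕ} {φ V : EN N → ℝ} {β M B : ℝ} (h : IsSol φ V β M B) (hne : ∃ y, φ y ≠ 0) (i0 : Fin N) {C : ℝ}
    (hV : ∀ y, V y * (1 + ‖y‖^2) ≤ C) :
    ∃ K, ∀ ρ, 1 ≤ ρ → ∃ d, HasDerivAt (fun ρ => DD φ i0 ρ / JJ φ i0 ρ) d ρ ∧ 
      d ≤ -(1/(10*ρ)) * (DD φ i0 ρ / JJ φ i0 ρ) + K * (ρ⁻¹)^2 := by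
  obtain ⟨C1, hC1, hfi⟩ := h.fisher i0
  obtain ⟨a, b, hb, hJl⟩ := h.J_crude hne i0
  obtain ⟨K, hK⟩ := log_absorb (a := a) hb
  have hT := TT_nonneg N
  have hB := h.B0
  have hM := h.M0
  refine ⟨(C1/10 + 2 * (M^2 * B^2 * Real.exp 2 * TT N)) * K + 32 * C^2, fun ρ hρ => ?_⟩
  have hρ0 : 0 < ρ := by linarith
  have hJ := h.JJ_pos hne i0 ρ
  obtain ⟨d, hd, hle⟩ := h.ratio_deriv hne i0 hρ0
  refine ⟨d, hd, hle.trans ?_⟩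
  set t := P1 φ i0 ρ / JJ φ i0 ρ
  have f1 := hfi ρ t hρ
  have u1 := h.U2_fine i0 hV hρ
  have hE : Real.exp (-(√ρ/2)) ≤ K * (ρ⁻¹)^3 * JJ φ i0 ρ := by
    have h1 := hK ρ hρ
    have h2 := Real.exp_le_exp.2 (hJl ρ hρ)
    rw [Real.exp_log hJ] at h2
    have hK0 : 0 ≤ K * (ρ⁻¹)^3 := by
      by_contra hneg
      push Not at hneg
      have := mul_neg_of_neg_of_pos hneg (Real.exp_pos (a - b * Real.log ρ - b * Real.log ρ^2))
      have := Real.exp_pos (-(√ρ/2))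
      linarith
    exact h1.trans (mul_le_mul_of_nonneg_left h2 hK0)
  have hG : Real.exp (-(ρ^2/32)) ≤ Real.exp 2 * Real.exp (-(√ρ/2)) := by
    rw [← Real.exp_add]
    apply Real.exp_le_exp.2
    have s1 : √ρ ≤ ρ := by
      rw [Real.sqrt_le_left hρ0.le]; nlinarith
    nlinarith [sq_nonneg (ρ - 8)]
  set e := Real.exp (-(√ρ/2))
  set J := JJ φ i0 ρ
  set D := DD φ i0 ρ
  set Y := YY φ i0 ρ t
  rw [div_le_iff₀ hJ]
  have r1 : -(ρ/2) * Y ≤ -(1/(10*ρ)) * D + C1/10 * ρ * e := by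
    have := mul_le_mul_of_nonneg_left f1 (by positivity : 0 ≤ 1/(10*ρ))
    have e1 : 1/(10*ρ) * (5 * ρ^2 * Y + C1 * ρ^2 * e) = ρ/2 * Y + C1/10 * ρ * e := by field_simp; ring
    linarith
  have r2 : (2/ρ) * U2 φ V i0 ρ ≤ 32 * C^2 * (ρ⁻¹)^2 * J + 2 * (M^2 * B^2 * Real.exp 2 * TT N) * ρ * e := by
    have m1 := mul_le_mul_of_nonneg_left hG (by positivity : 0 ≤ M^2 * B^2 * TT N)
    have m2 : U2 φ V i0 ρ ≤ 16 * C^2 * (ρ⁻¹)^4 * J + (M^2 * B^2 * Real.exp 2 * TT N) * e := by linarith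
    have m3 := mul_le_mul_of_nonneg_left m2 (by positivity : 0 ≤ 2/ρ)
    have i1 : ρ⁻¹ ≤ 1 := inv_le_one_of_one_le₀ hρ
    have ip : 0 < ρ⁻¹ := by positivity
    have m4 : 2/ρ * (16 * C^2 * (ρ⁻¹)^4 * J) = 32 * C^2 * J * (ρ⁻¹)^5 := by ring
    have m5 : (ρ⁻¹)^5 ≤ (ρ⁻¹)^2 := pow_le_pow_of_le_one ip.le i1 (by norm_num)
    have m6 := mul_le_mul_of_nonneg_left m5 (by positivity : 0 ≤ 32 * C^2 * J)
    have m7 : 2/ρ ≤ 2 * ρ := by rw [div_le_iff₀ hρ0]; nlinarith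
    have m8 := mul_le_mul_of_nonneg_right m7 (by positivity : 0 ≤ (M^2 * B^2 * Real.exp 2 * TT N) * e)
    linarith
  have r3 : ρ * e ≤ K * (ρ⁻¹)^2 * J := by
    have := mul_le_mul_of_nonneg_left hE hρ0.le
    have e3 : ρ * (K * (ρ⁻¹)^3 * J) = K * (ρ⁻¹)^2 * J := by field_simp
    linarith
  have r4 := mul_le_mul_of_nonneg_left r3 (by positivity : 0 ≤ C1/10 + 2 * (M^2 * B^2 * Real.exp 2 * TT N))
  have r5 : (-(1/(10*ρ)) * (D / J) + ((C1/10 + 2 * (M^2 * B^2 * Real.exp 2 * TT N)) * K + 32 * C^2) * (ρ⁻¹)^2) * J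
     = -(1/(10*ρ)) * D + ((C1/10 + 2 * (M^2 * B^2 * Real.exp 2 * TT N)) * K + 32 * C^2) * (ρ⁻¹)^2 * J := by
    have : D / J * J = D := by field_simp
    linear_combination (-(1/(10*ρ))) * this
  rw [r5]
  linarith

/-- the sharp lower bound for `J` -/
lemma IsSol.J_lower {N : ℕ} {φ V : EN N → ℝ} {β M B : ℝ} (h : IsSol φ V β M B) (hne : ∃ y, φ y ≠ 0) (i0 : Fin N) {C : ℝ}
    (hV : ∀ y, V y * (1 + ‖y‖^2) ≤ C) :
    ∃ c, 0 < c ∧ ∀ ρ, 1 ≤ ρ → c ≤ ρ^(4*β) * JJ φ i0 ρ := by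
  obtain ⟨K, hK⟩ := h.ratio_ode hne i0 hV
  have hm0 : ∀ ρ, 0 ≤ DD φ i0 ρ / JJ φ i0 ρ := fun ρ => div_nonneg (h.DD_nonneg i0 ρ) (h.JJ_pos hne i0 ρ).le
  set f : ℝ → ℝ := fun ρ => Real.log (JJ φ i0 ρ) + 4 * β * Real.log ρ - 40 * (DD φ i0 ρ / JJ φ i0 ρ) - 40 * K * ρ⁻¹ with hf
  have hfm : ∀ ρ, 1 ≤ ρ → f 1 ≤ f ρ := by
    intro ρ hρ
    refine mono_helper (fun r hr => ?_) hρ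
    have hr0 : 0 < r := by linarith
    obtain ⟨d, hd, hle⟩ := hK r hr
    obtain ⟨d2, hd2, hle2⟩ := h.logJ_deriv hne i0 hr0
    refine ⟨_, ((hd2.fun_add ((Real.hasDerivAt_log hr0.ne').const_mul (4*β))).fun_sub (hd.const_mul 40)).fun_sub ((hasDerivAt_inv hr0.ne').const_mul (40*K)), ?_⟩
    set m := DD φ i0 r / JJ φ i0 r
    have e1 : -(1/(10*r)) * m * 40 = -(4/r) * m := by field_simp; ring
    have e2 : 4 * β * r⁻¹ = (4/r) * β := by ring
    have e3 : 40 * K * -(r^2)⁻¹ = - (40 * (K * (r⁻¹)^2)) := by rw [inv_pow]; ring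
    rw [e3, e2]
    linarith
  refine ⟨Real.exp (f 1 - 40 * |K|), Real.exp_pos _, fun ρ hρ => ?_⟩
  have hρ0 : 0 < ρ := by linarith
  have hJ := h.JJ_pos hne i0 ρ
  have e : ρ^(4*β) * JJ φ i0 ρ = Real.exp (Real.log (JJ φ i0 ρ) + 4 * β * Real.log ρ) := by
    rw [Real.exp_add, Real.exp_log hJ, Real.rpow_def_of_pos hρ0, mul_comm]; ring_nf
  rw [e]
  apply Real.exp_le_exp.2
  have h1 := hfm ρ hρ
  have h2 := hm0 ρ
  have i1 : ρ⁻¹ ≤ 1 := inv_le_one_of_one_le₀ hρ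
  have ip : 0 < ρ⁻¹ := by positivity
  have h3 : -|K| ≤ K * ρ⁻¹ := by
    have := neg_abs_le (K * ρ⁻¹)
    rw [abs_mul, abs_of_pos ip] at this
    nlinarith [abs_nonneg K]
  have h4 : f ρ = Real.log (JJ φ i0 ρ) + 4 * β * Real.log ρ - 40 * (DD φ i0 ρ / JJ φ i0 ρ) - 40 * K * ρ⁻¹ := rfl
  linarith


lemma conv_scale {N : ℕ} {f k : EN N → ℝ} (hf : Integrable f) (hfm : Measurable f) (hf0 : ∀ y, 0 ≤ f y)
    (hk : Integrable k) (hkc : Continuous k) (hk0 : ∀ y, 0 ≤ k y) {ρ : ℝ} (hρ : 0 < ρ) :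
    Integrable (fun x : EN N × EN N => f x.1 * k (x.1 - ρ • x.2)) ∧
    ρ^N * ∫ x : EN N × EN N, f x.1 * k (x.1 - ρ • x.2) = (∫ y, f y) * ∫ z, k z := by
  have e : ∀ y : EN N, ∫ a, k (y - ρ • a) = (ρ^N)⁻¹ * ∫ z, k z := by
    intro y
    have h1 := Measure.integral_comp_smul (volume : Measure (EN N)) (fun z => k (y - z)) ρ
    rw [finrank_euclideanSpace_fin, smul_eq_mul, abs_of_pos (by positivity)] at h1
    rw [h1, integral_sub_left_eq_self (μ := (volume : Measure (EN N))) k y]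
  have hm : AEStronglyMeasurable (fun x : EN N × EN N => f x.1 * k (x.1 - ρ • x.2)) (Measure.prod volume volume) := by
    apply Measurable.aestronglyMeasurable
    have : Continuous (fun x : EN N × EN N => k (x.1 - ρ • x.2)) := by fun_prop
    exact (hfm.comp measurable_fst).mul this.measurable
  have hi : Integrable (fun x : EN N × EN N => f x.1 * k (x.1 - ρ • x.2)) := by
    rw [Measure.volume_eq_prod]
    rw [integrable_prod_iff hm]
    constructor
    · refine Eventually.of_forall fun y => ?_
      simp only
      apply Integrable.const_mul
      have h2 : Integrable (fun z => k (y - z)) := hk.comp_sub_left y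
      exact h2.comp_smul hρ.ne'
    · simp_rw [Real.norm_eq_abs, abs_of_nonneg (mul_nonneg (hf0 _) (hk0 _)), integral_const_mul, e]
      exact hf.mul_const _
  refine ⟨hi, ?_⟩
  rw [Measure.volume_eq_prod] at *
  rw [integral_prod _ hi]
  simp only
  simp_rw [integral_const_mul, e]
  rw [integral_mul_const]
  field_simp

/-- kernel used to bound the weight -/
def kk {N : ℕ} (z : EN N) : ℝ := (1 + ‖z‖)^N * Real.exp (-(1/4) * ‖z‖^2)

lemma kk_nonneg {N : ℕ} (z : EN N) : 0 ≤ kk z := by unfold kk; positivity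

lemma wt_kk (N : ℕ) : ∃ C, 0 < C ∧ ∀ (i0 : Fin N) (ρ : ℝ), 1 ≤ ρ → ∀ x : EN N × EN N,
    (1 + ‖x.1‖)^N * wt i0 ρ x ≤ C * ρ^N * kk (x.1 - ρ • x.2) := by
  obtain ⟨C, hC, h⟩ := poly_le_exp N (one_pos : (0:ℝ) < 1)
  refine ⟨C, hC, fun i0 ρ hρ x => ?_⟩
  have hρ0 : 0 ≤ ρ := by linarith
  have n1 : 1 + ‖x.1‖ ≤ ρ * (1 + ‖x.1 - ρ • x.2‖) * (1 + ‖x.2‖) := by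
    have : ‖x.1‖ ≤ ‖x.1 - ρ • x.2‖ + ρ * ‖x.2‖ := by
      have := norm_add_le (x.1 - ρ • x.2) (ρ • x.2)
      rwa [sub_add_cancel, norm_smul, Real.norm_eq_abs, abs_of_nonneg hρ0] at this
    have a1 := norm_nonneg (x.1 - ρ • x.2)
    have a2 := norm_nonneg x.2
    have : 0 ≤ ρ * ‖x.1 - ρ • x.2‖ * ‖x.2‖ := by positivity
    nlinarith
  have n2 : (1 + ‖x.1‖)^N ≤ ρ^N * (1 + ‖x.1 - ρ • x.2‖)^N * (1 + ‖x.2‖)^N := by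
    rw [← mul_pow, ← mul_pow]; gcongr
  have n3 : (1 + ‖x.2‖)^N * Real.exp (-‖x.2‖^2) ≤ C := by
    have := mul_le_mul_of_nonneg_right (h ‖x.2‖ (norm_nonneg _)) (Real.exp_pos (-‖x.2‖^2)).le
    have e : C * Real.exp (1 * ‖x.2‖^2) * Real.exp (-‖x.2‖^2) = C := by
      rw [mul_assoc, ← Real.exp_add, one_mul, add_neg_cancel, Real.exp_zero, mul_one]
    rwa [e] at this
  have n4 : (1 + ‖x.2‖)^N * mm i0 x.2 ≤ C :=
    (mul_le_mul_of_nonneg_left (mm_le i0 x.2) (by positivity)).trans n3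
  calc (1 + ‖x.1‖)^N * wt i0 ρ x ≤ ρ^N * (1 + ‖x.1 - ρ • x.2‖)^N * (1 + ‖x.2‖)^N * wt i0 ρ x :=
        mul_le_mul_of_nonneg_right n2 (wt_nonneg _ _ _)
    _ = ρ^N * kk (x.1 - ρ • x.2) * ((1 + ‖x.2‖)^N * mm i0 x.2) := by unfold wt kk; ring
    _ ≤ ρ^N * kk (x.1 - ρ • x.2) * C := mul_le_mul_of_nonneg_left n4 (mul_nonneg (by positivity) (kk_nonneg _))
    _ = _ := by ring

set_option maxHeartbeats 2000000 in
lemma IsSol.J_upper {N : ℕ} {φ V : EN N → ℝ} {β M B q C C1 : ℝ} (h : IsSol φ V β M B) (i0 : Fin N)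
    (hD : ∀ y, |φ y| ≤ C * (1 + ‖y‖^2)^(-β)) (hC : 0 ≤ C) (hq : 0 < q) (hβq : β * q = N / 2)
    (hi : Integrable (fun y => |φ y|^q))
    (hC1 : 0 < C1) (hkk : ∀ (i0 : Fin N) (ρ : ℝ), 1 ≤ ρ → ∀ x : EN N × EN N,
    (1 + ‖x.1‖)^N * wt i0 ρ x ≤ C1 * ρ^N * kk (x.1 - ρ • x.2)) {η ρ : ℝ} (hη : 0 < η) (hρ : 1 ≤ ρ) :
    JJ φ i0 ρ ≤ (ρ^2/4)^(-(2*β)) * η^2 * TT N + 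
      (ρ^2/4)^(-(2*β)) * C^2 * (η^q)⁻¹ * C1 * ((∫ y in {y : EN N | ρ/2 ≤ ‖y‖}, |φ y|^q) * ∫ z : EN N, kk z)
      + B^2 * Real.exp (-(ρ^2/32)) * TT N := by
  have hβ := h.hβ
  have hρ0 : 0 < ρ := by linarith
  have hφc := h.c2.continuous
  set A := (ρ^2/4)^(-(2*β)) with hA
  have hA0 : 0 < A := by positivity
  set S := {y : EN N | ρ/2 ≤ ‖y‖} with hS
  have hSm : MeasurableSet S := measurableSet_le measurable_const measurable_norm
  have hψc : Continuous (fun y => |φ y|^q) := hφc.abs.rpow_const (fun _ => Or.inr hq.le)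
  set f : EN N → ℝ := S.indicator (fun y => |φ y|^q) with hf
  have hf0 : ∀ y, 0 ≤ f y := fun y => indicator_nonneg (fun y _ => by positivity) y
  have hfi : Integrable f := hi.indicator hSm
  have hfm : Measurable f := hψc.measurable.indicator hSm
  have hki : Integrable (kk (N := N)) := by
    have := integrable_poly_gauss (N := N) N (by norm_num : (0:ℝ) < 1/4)
    exact this
  have hkc : Continuous (kk (N := N)) := by unfold kk; fun_prop
  obtain ⟨ci, ce⟩ := conv_scale hfi hfm hf0 hki hkc kk_nonneg hρ0
  have w2 := wt2_integrable (N := N) ρ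
  have hη' : 0 < (η^q)⁻¹ := by positivity
  rw [← integral_indicator hSm, ← hf, ← ce]
  have t1 : A * η^2 * TT N = ∫ x : EN N × EN N, A * η^2 * wt2 ρ x := by rw [integral_const_mul, wt2_integral]; rfl
  have t2 : B^2 * Real.exp (-(ρ^2/32)) * TT N = ∫ x : EN N × EN N, B^2 * Real.exp (-(ρ^2/32)) * wt2 ρ x := by
    rw [integral_const_mul, wt2_integral]; rfl
  have t3 : A * C^2 * (η^q)⁻¹ * C1 * (ρ^N * ∫ x : EN N × EN N, f x.1 * kk (x.1 - ρ • x.2)) =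
      ∫ x : EN N × EN N, A * C^2 * (η^q)⁻¹ * C1 * ρ^N * (f x.1 * kk (x.1 - ρ • x.2)) := by
    rw [integral_const_mul]; ring
  have i1 := w2.const_mul (A * η^2)
  have i2 := w2.const_mul (B^2 * Real.exp (-(ρ^2/32)))
  have i3 := ci.const_mul (A * C^2 * (η^q)⁻¹ * C1 * ρ^N)
  rw [t1, t2, t3, ← integral_add i1 i3, ← integral_add (i1.fun_add i3) i2]
  unfold JJ II
  apply integral_mono (h.int i0 ρ (by norm_num) h.gr0) ((i1.fun_add i3).fun_add i2)
  intro x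
  simp only
  have w0 := wt_nonneg i0 ρ x
  have w20 := wt2_pos ρ x
  have ww := wt_le_wt2 i0 ρ x
  have k0 := kk_nonneg (x.1 - ρ • x.2)
  have f0 := hf0 x.1
  have p1 : 0 ≤ A * η^2 * wt2 ρ x := by positivity
  have p2 : 0 ≤ A * C^2 * (η^q)⁻¹ * C1 * ρ^N * (f x.1 * kk (x.1 - ρ • x.2)) := by positivity
  have p3 : 0 ≤ B^2 * Real.exp (-(ρ^2/32)) * wt2 ρ x := by positivity
  have sqe : φ x.1 * φ x.1 = |φ x.1|^2 := by rw [sq_abs, sq]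
  rw [sqe]
  rcases lt_or_ge ‖x.1‖ (ρ/2) with hx | hx
  · have b := h.bdd x.1
    have b1 : |φ x.1|^2 ≤ B^2 := by gcongr
    have := mul_le_mul b1 (wt_near i0 hρ0.le hx.le) w0 (by positivity)
    linarith
  · set Q := 1 + ‖x.1‖^2 with hQ
    have hQ0 : 0 < Q := by positivity
    have hQA : (Q^(-β))^2 ≤ A := by
      rw [← Real.rpow_natCast, ← Real.rpow_mul hQ0.le, hA]
      have e : -β * ((2:ℕ):ℝ) = -(2*β) := by push_cast; ring
      rw [e]
      apply Real.rpow_le_rpow_of_nonpos (by positivity) _ (by linarith)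
      nlinarith
    have hQp : 0 < Q^(-β) := by positivity
    rcases le_or_gt (|φ x.1|) (η * Q^(-β)) with hc | hc
    · have : |φ x.1|^2 ≤ η^2 * (Q^(-β))^2 := by rw [← mul_pow]; gcongr
      have l : |φ x.1|^2 ≤ A * η^2 := by nlinarith [sq_nonneg η]
      have := mul_le_mul l ww w0 (by positivity)
      linarith
    · have l0 : |φ x.1|^2 ≤ C^2 * (Q^(-β))^2 := by
        rw [← mul_pow]; have := hD x.1; gcongr
      have l : |φ x.1|^2 ≤ A * C^2 := by nlinarith [sq_nonneg C]
      have fx : f x.1 = |φ x.1|^q := indicator_of_mem (show x.1 ∈ S from hx) _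
      have m1 : (η * Q^(-β))^q ≤ |φ x.1|^q := Real.rpow_le_rpow (by positivity) hc.le hq.le
      rw [Real.mul_rpow hη.le hQp.le, ← Real.rpow_mul hQ0.le, neg_mul, hβq, Real.rpow_neg hQ0.le, ← fx] at m1
      have m2 : Q^((N:ℝ)/2) ≤ (1 + ‖x.1‖)^N := by
        have : Q ≤ (1 + ‖x.1‖)^2 := by nlinarith [norm_nonneg x.1]
        calc Q^((N:ℝ)/2) ≤ ((1 + ‖x.1‖)^2)^((N:ℝ)/2) := Real.rpow_le_rpow hQ0.le this (by positivity)
          _ = (1 + ‖x.1‖)^N := by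
            rw [← Real.rpow_natCast, ← Real.rpow_mul (by positivity), ← Real.rpow_natCast]
            congr 1; push_cast; ring
      have hQN : 0 < Q^((N:ℝ)/2) := by positivity
      have hηq : 0 < η^q := by positivity
      have m3 : 1 ≤ (η^q)⁻¹ * f x.1 * (1 + ‖x.1‖)^N := by
        rw [← div_eq_mul_inv, div_le_iff₀ hQN] at m1
        have m4 := mul_le_mul_of_nonneg_left m2 f0
        have m5 := mul_le_mul_of_nonneg_left (m1.trans m4) hη'.le
        rw [inv_mul_cancel₀ hηq.ne'] at m5
        linarith
      have m6 := hkk i0 ρ hρ x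
      have m7 : wt i0 ρ x ≤ (η^q)⁻¹ * f x.1 * (C1 * ρ^N * kk (x.1 - ρ • x.2)) := by
        calc wt i0 ρ x ≤ ((η^q)⁻¹ * f x.1 * (1 + ‖x.1‖)^N) * wt i0 ρ x := le_mul_of_one_le_left w0 m3
          _ = (η^q)⁻¹ * f x.1 * ((1 + ‖x.1‖)^N * wt i0 ρ x) := by ring
          _ ≤ _ := mul_le_mul_of_nonneg_left m6 (by positivity)
      have := mul_le_mul l m7 w0 (by positivity)
      linarith


lemma tail_tendsto {N : ℕ} {g : EN N → ℝ} (hg : Integrable g) :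
    Tendsto (fun ρ : ℝ => ∫ y in {y : EN N | ρ/2 ≤ ‖y‖}, g y) atTop (𝓝 0) := by
  have hSm : ∀ ρ : ℝ, MeasurableSet {y : EN N | ρ/2 ≤ ‖y‖} := fun ρ => measurableSet_le measurable_const measurable_norm
  simp_rw [← integral_indicator (hSm _)]
  have := tendsto_integral_filter_of_dominated_convergence (μ := (volume : Measure (EN N))) (l := (atTop : Filter ℝ))
    (F := fun ρ => {y : EN N | ρ/2 ≤ ‖y‖}.indicator g) (f := fun _ => (0:ℝ)) (fun y => ‖g y‖)
    (Eventually.of_forall fun ρ => (hg.indicator (hSm ρ)).aestronglyMeasurable)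
    (Eventually.of_forall fun ρ => Eventually.of_forall fun y => norm_indicator_le_norm_self _ _)
    hg.norm
    (Eventually.of_forall fun y => by
      apply tendsto_const_nhds.congr'
      filter_upwards [eventually_gt_atTop (2 * ‖y‖)] with ρ hρ
      rw [indicator_of_notMem]
      simp only [mem_setOf_eq, not_le]
      linarith)
  simpa using this

lemma exp_tendsto (s : ℝ) : Tendsto (fun ρ : ℝ => ρ^s * Real.exp (-(ρ^2/32))) atTop (𝓝 0) := by
  have h := tendsto_rpow_mul_exp_neg_mul_atTop_nhds_zero s (1/32) (by norm_num)
  refine squeeze_zero' ?_ ?_ h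
  · filter_upwards [eventually_ge_atTop 1] with ρ hρ
    positivity
  · filter_upwards [eventually_ge_atTop 1] with ρ hρ
    apply mul_le_mul_of_nonneg_left _ (by positivity)
    apply Real.exp_le_exp.2
    nlinarith

lemma IsSol.contra {N : ℕ} {φ V : EN N → ℝ} {β M B q : ℝ} (h : IsSol φ V β M B) (hne : ∃ y, φ y ≠ 0) (i0 : Fin N)
    (hV : ∀ y, V y = |φ y|^(1/β)) (hq : 0 < q) (hβq : β * q = N / 2)
    (hi : Integrable (fun y => |φ y|^q)) : False := by
  have hβ := h.hβ
  obtain ⟨C, hC, hD⟩ := h.barrier2 hV (fun ε hε => h.tendsto_zero hq hi hε)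
  have hVb : ∀ y, V y * (1 + ‖y‖^2) ≤ C^(1/β) := by
    intro y
    have hQ : 0 < 1 + ‖y‖^2 := by positivity
    rw [hV]
    have := Real.rpow_le_rpow (abs_nonneg _) (hD y) (by positivity : 0 ≤ 1/β)
    rw [Real.mul_rpow hC (by positivity), ← Real.rpow_mul hQ.le] at this
    have e : -β * (1/β) = -1 := by field_simp
    rw [e, Real.rpow_neg_one, ← div_eq_mul_inv, le_div_iff₀ hQ] at this
    exact this
  obtain ⟨c, hc, hJ⟩ := h.J_lower hne i0 hVb
  obtain ⟨C1, hC1, hkk⟩ := wt_kk N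
  set D : ℝ := 4^(2*β) with hDdef
  have hD0 : 0 < D := by positivity
  have hT := TT_nonneg N
  set η := √(c / (2 * (D * TT N + 1))) with hη
  have hη0 : 0 < η := Real.sqrt_pos.2 (by positivity)
  have hη2 : η^2 = c / (2 * (D * TT N + 1)) := Real.sq_sqrt (by positivity)
  have hsm : D * η^2 * TT N ≤ c/2 := by
    rw [hη2]
    have : D * (c / (2 * (D * TT N + 1))) * TT N = (c/2) * ((D * TT N) / (D * TT N + 1)) := by field_simp
    rw [this]
    apply mul_le_of_le_one_right (by positivity)
    rw [div_le_one (by positivity)]; linarith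
  have lim : Tendsto (fun ρ : ℝ => D * C^2 * (η^q)⁻¹ * C1 * ((∫ y in {y : EN N | ρ/2 ≤ ‖y‖}, |φ y|^q) * ∫ z : EN N, kk z)
      + B^2 * TT N * (ρ^(4*β) * Real.exp (-(ρ^2/32)))) atTop (𝓝 0) := by
    have := (((tail_tendsto hi).mul_const (∫ z : EN N, kk z)).const_mul (D * C^2 * (η^q)⁻¹ * C1)).add
      ((exp_tendsto (4*β)).const_mul (B^2 * TT N))
    simpa using this
  obtain ⟨ρ, h1, hρ⟩ := ((lim.eventually_lt_const (half_pos hc)).and (eventually_ge_atTop 1)).exists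
  have hρ0 : 0 < ρ := by linarith
  have hl := hJ ρ hρ
  have hu := h.J_upper i0 hD hC hq hβq hi hC1 hkk hη0 hρ
  have hu' := mul_le_mul_of_nonneg_left hu (by positivity : 0 ≤ ρ^(4*β))
  have eA : ρ^(4*β) * (ρ^2/4)^(-(2*β)) = D := by
    have e1 : ρ^(4*β) = (ρ^2)^(2*β) := by
      rw [← Real.rpow_natCast, ← Real.rpow_mul hρ0.le]; congr 1; push_cast; ring
    rw [e1, Real.rpow_neg (by positivity), Real.div_rpow (by positivity) (by norm_num), inv_div]
    have : (0:ℝ) < (ρ^2)^(2*β) := by positivity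
    field_simp
    rfl
  set A := (ρ^2/4)^(-(2*β))
  set X := (∫ y in {y : EN N | ρ/2 ≤ ‖y‖}, |φ y|^q) * ∫ z : EN N, kk z
  have e2 : ρ^(4*β) * (A * η^2 * TT N + A * C^2 * (η^q)⁻¹ * C1 * X + B^2 * Real.exp (-(ρ^2/32)) * TT N)
     = D * η^2 * TT N + (D * C^2 * (η^q)⁻¹ * C1 * X + B^2 * TT N * (ρ^(4*β) * Real.exp (-(ρ^2/32)))) := by
    rw [← eA]; ring
  rw [e2] at hu'
  linarith

/-- no nontrivial bounded backward self-similar profile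
`Δφ − (y/2)·∇φ + |φ|^{p−1}φ − βφ = 0` belongs to the critical space `L^{q*}(ℝ^N)`,
where `β = 1/(p−1)` and `q* = N(p−1)/2`; i.e. `∫_{ℝ^N} |φ|^{q*} = ∞`. -/
theorem selfsimilar_profile_not_in_critical_Lq
    (N : ℕ) (hN : 1 ≤ N) (p : ℝ) (hp : 1 < p)
    (φ : EuclideanSpace ℝ (Fin N) → ℝ)
    (hreg : ContDiff ℝ 2 φ)
    (hbdd : ∃ C, ∀ y, |φ y| ≤ C)
    (hnontriv : ∃ y, φ y ≠ 0)
    (heq : ∀ y, lap φ y - (1 / 2) * fderiv ℝ φ y y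
        + |φ y| ^ (p - 1) * φ y - (1 / (p - 1)) * φ y = 0) :
    ∫⁻ y, ENNReal.ofReal (|φ y| ^ ((N : ℝ) * (p - 1) / 2)) = ⊤ := by
  by_contra hfin
  obtain ⟨B, hB⟩ := hbdd
  have hp1 : 0 < p - 1 := by linarith
  have hφc := hreg.continuous
  have hN' : (0:ℝ) < N := by exact_mod_cast hN
  have hq : 0 < (N : ℝ) * (p - 1) / 2 := by positivity
  have hsol : IsSol φ (fun y => |φ y|^(p-1)) (1/(p-1)) (B^(p-1)) B :=
    { c2 := hreg
      bdd := hB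
      Vc := hφc.abs.rpow_const (fun _ => Or.inr hp1.le)
      V0 := fun y => by positivity
      VM := fun y => Real.rpow_le_rpow (abs_nonneg _) (hB y) hp1.le
      eq := fun y => by have := heq y; linear_combination this
      hβ := by positivity }
  refine hsol.contra hnontriv ⟨0, hN⟩ (q := (N : ℝ) * (p - 1) / 2) (fun y => by simp) hq (by field_simp) ?_
  have hc : Continuous (fun y => |φ y|^((N : ℝ) * (p - 1) / 2)) := hφc.abs.rpow_const (fun _ => Or.inr hq.le)
  refine ⟨hc.aestronglyMeasurable, ?_⟩
  rw [hasFiniteIntegral_iff_ofReal (Eventually.of_forall fun y => by positivity)]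
  exact lt_top_iff_ne_top.2 hfin
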